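/- arXiv:1201.0713 — 7 statements merged into one kernel-verified Lean document; each statement's English description precedes it below -/
import Mathlib

section
/- Let ζ denote the Riemann zeta function and suppose ρ = β + iγ is a zero of ζ with β > 7/8. Let δ be the unique real number with −π < δ ≤ π such that γ·log 2 = 2πn + δ for some integer n, and suppose |δ| > π/100. Then for every real primitive Dirichlet character χ modulo D with D ≡ 0 (mod 4) and D > 10^9, the Dirichlet L-function satisfies L(1,χ) > 1/(5400 · U^{12(1−β)} · (log U)^3), where U = |ρ|·D^{1/4}·log D. -/
open Complex

lemma aux_hasDeriv (w : ℂ) {t : ℝ} (ht : 0 < t) :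
    HasDerivAt (fun y : ℝ => (y : ℂ) ^ w) (w * (t : ℂ) ^ (w - 1)) t := by
  have h := (hasDerivAt_id (t : ℂ)).cpow_const (c := w) (Or.inl (by simpa using ht))
  simpa using h.comp_ofReal

lemma aux_norm {t : ℝ} (ht : 0 < t) (w : ℂ) : ‖(t : ℂ) ^ w‖ = t ^ w.re :=
  Complex.norm_cpow_eq_rpow_re_of_pos ht w

lemma aux_diff (s : ℂ) (hs : 0 < s.re) {a b : ℝ} (ha : 0 < a) (hab : a ≤ b) :
    ‖(b : ℂ) ^ (-s) - (a : ℂ) ^ (-s)‖ ≤ (‖s‖ / s.re) * (a ^ (-s.re) - b ^ (-s.re)) := by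
  have key := image_norm_le_of_norm_deriv_right_le_deriv_boundary' (a := a) (b := b)
    (f := fun t : ℝ => (t : ℂ) ^ (-s) - (a : ℂ) ^ (-s))
    (f' := fun t : ℝ => (-s) * (t : ℂ) ^ (-s - 1))
    (B := fun t : ℝ => (‖s‖ / s.re) * (a ^ (-s.re) - t ^ (-s.re)))
    (B' := fun t : ℝ => ‖s‖ * t ^ (-s.re - 1))
    (by
      intro t ht
      exact (((aux_hasDeriv (-s) (ha.trans_le ht.1)).sub_const _).continuousAt).continuousWithinAt)
    (by
      intro t ht
      exact ((aux_hasDeriv (-s) (ha.trans_le ht.1)).sub_const _).hasDerivWithinAt)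
    (by simp)
    (by
      intro t ht
      have h0 : t ≠ 0 := (ha.trans_le ht.1).ne'
      exact (((Real.hasDerivAt_rpow_const (p := -s.re) (Or.inl h0)).const_sub (a ^ (-s.re))).const_mul (‖s‖ / s.re)).continuousAt.continuousWithinAt)
    (by
      intro t ht
      have h0 : t ≠ 0 := (ha.trans_le ht.1).ne'
      have := ((Real.hasDerivAt_rpow_const (p := -s.re) (Or.inl h0)).const_sub (a ^ (-s.re))).const_mul (‖s‖ / s.re)
      refine (this.congr_deriv ?_).hasDerivWithinAt
      field_simp)
    (by
      intro t ht
      rw [norm_mul, aux_norm (ha.trans_le ht.1)]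
      simp)
  exact key ⟨hab, le_rfl⟩

/-- partial approximants of `(s-1) ζ(s)` -/
noncomputable def aPsi (N : ℕ) (s : ℂ) : ℂ :=
  (s - 1) * ∑ n ∈ Finset.Ioc 0 N, (n : ℂ) ^ (-s) + (N : ℂ) ^ (1 - s)

lemma aPsi_step (s : ℂ) (hs : 0 < s.re) {N : ℕ} (hN : 0 < N) :
    ‖aPsi (N + 1) s - aPsi N s‖ ≤
      ‖s - 1‖ * (‖s‖ / s.re) * ((N : ℝ) ^ (-s.re) - ((N + 1 : ℕ) : ℝ) ^ (-s.re)) := by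
  have hN' : (0 : ℝ) < N := by exact_mod_cast hN
  have key := Convex.norm_image_sub_le_of_norm_hasDerivWithin_le
    (f := fun t : ℝ => (t : ℂ) ^ (1 - s) + (s - 1) * ((N + 1 : ℕ) : ℂ) ^ (-s) * (t : ℂ))
    (f' := fun t : ℝ => (1 - s) * ((t : ℂ) ^ (-s) - ((N + 1 : ℕ) : ℂ) ^ (-s)))
    (s := Set.Icc (N : ℝ) ((N + 1 : ℕ) : ℝ)) (x := (N : ℝ)) (y := ((N + 1 : ℕ) : ℝ))
    (C := ‖s - 1‖ * ((‖s‖ / s.re) * ((N : ℝ) ^ (-s.re) - ((N + 1 : ℕ) : ℝ) ^ (-s.re))))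
    (by
      intro t ht
      have h1 := aux_hasDeriv (1 - s) (hN'.trans_le ht.1)
      have h2 : HasDerivAt (fun t : ℝ => (s - 1) * ((N + 1 : ℕ) : ℂ) ^ (-s) * (t : ℂ))
        ((s - 1) * ((N + 1 : ℕ) : ℂ) ^ (-s) * 1) t := (Complex.ofRealCLM.hasDerivAt (x := t)).const_mul _
      refine ((h1.add h2).congr_deriv ?_).hasDerivWithinAt
      rw [show (1 - s - 1 : ℂ) = -s by ring]
      ring)
    (by
      intro t ht
      have h0 := hN'.trans_le ht.1
      rw [norm_mul, norm_sub_rev 1 s]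
      refine mul_le_mul_of_nonneg_left ?_ (norm_nonneg _)
      have h := aux_diff s hs h0 ht.2
      rw [norm_sub_rev] at h
      refine le_trans (by simpa using h) ?_
      refine mul_le_mul_of_nonneg_left ?_ (by positivity)
      have : t ^ (-s.re) ≤ (N : ℝ) ^ (-s.re) :=
        Real.rpow_le_rpow_of_nonpos hN' ht.1 (by linarith)
      push_cast; linarith)
    (convex_Icc _ _) ⟨le_rfl, by push_cast; linarith⟩ ⟨by push_cast; linarith, le_rfl⟩
  have e : aPsi (N + 1) s - aPsi N s = (((N + 1 : ℕ) : ℝ) : ℂ) ^ (1 - s) + (s - 1) * ((N + 1 : ℕ) : ℂ) ^ (-s) * (((N + 1 : ℕ) : ℝ) : ℂ) - (((N : ℝ) : ℂ) ^ (1 - s) + (s - 1) * ((N + 1 : ℕ) : ℂ) ^ (-s) * ((N : ℝ) : ℂ)) := by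
    unfold aPsi
    rw [Finset.sum_Ioc_succ_top (Nat.zero_le _)]
    push_cast; ring
  rw [e]
  refine key.trans (le_of_eq ?_)
  push_cast
  simp
  ring

lemma aPsi_cauchy (s : ℂ) (hs : 0 < s.re) {N : ℕ} (hN : 0 < N) (M : ℕ) :
    ‖aPsi (N + M) s - aPsi N s‖ ≤
      ‖s - 1‖ * (‖s‖ / s.re) * ((N : ℝ) ^ (-s.re) - ((N + M : ℕ) : ℝ) ^ (-s.re)) := by
  induction M with
  | zero => simp
  | succ M ih =>
    have h := aPsi_step s hs (N := N + M) (by omega)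
    calc ‖aPsi (N + (M + 1)) s - aPsi N s‖
        = ‖(aPsi (N + M + 1) s - aPsi (N + M) s) + (aPsi (N + M) s - aPsi N s)‖ := by
          rw [← add_assoc]; congr 1; ring
      _ ≤ _ := norm_add_le _ _
      _ ≤ _ := add_le_add h ih
      _ = _ := by rw [← add_assoc N M 1]; ring

lemma aPsi_cauchy' (s : ℂ) (hs : 0 < s.re) {N M : ℕ} (hN : 0 < N) (hM : N ≤ M) :
    ‖aPsi M s - aPsi N s‖ ≤ ‖s - 1‖ * (‖s‖ / s.re) * (N : ℝ) ^ (-s.re) := by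
  obtain ⟨k, rfl⟩ := Nat.exists_eq_add_of_le hM
  refine (aPsi_cauchy s hs hN k).trans ?_
  refine mul_le_mul_of_nonneg_left ?_ (by positivity)
  have : 0 ≤ ((N + k : ℕ) : ℝ) ^ (-s.re) := by positivity
  linarith

lemma aPsi_tendsto_gt (s : ℂ) (hs : 1 < s.re) :
    Filter.Tendsto (fun N => aPsi N s) Filter.atTop (nhds (riemannZeta₁ s)) := by
  have hs1 : s ≠ 1 := by rintro rfl; simp at hs
  have h1 := (LSeriesHasSum_one hs)
  have h2 : Filter.Tendsto (fun N : ℕ => ∑ n ∈ Finset.Ioc 0 N, (n : ℂ) ^ (-s)) Filter.atTop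
      (nhds (riemannZeta s)) := by
    have h3 := (h1.tendsto_sum_nat).comp (Filter.tendsto_add_atTop_nat 1)
    refine h3.congr ?_
    intro N
    simp only [Function.comp]
    rw [Finset.sum_range_succ']
    simp only [LSeries.term_zero, add_zero]
    rw [Finset.range_eq_Ico, Finset.sum_Ico_add' (fun n => LSeries.term 1 s n) 0 N 1]
    refine Finset.sum_congr (by ext; simp; omega) ?_
    intro n hn
    simp at hn
    rw [LSeries.term_of_ne_zero (by omega)]
    simp [Complex.cpow_neg]
  have h4 : Filter.Tendsto (fun N : ℕ => (N : ℂ) ^ (1 - s)) Filter.atTop (nhds 0) := by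
    rw [tendsto_zero_iff_norm_tendsto_zero]
    have h5 := (tendsto_rpow_neg_atTop (y := s.re - 1) (by linarith)).comp (tendsto_natCast_atTop_atTop (R := ℝ))
    refine h5.congr' ?_
    filter_upwards [Filter.eventually_gt_atTop 0] with N hN
    have hN' : (0 : ℝ) < N := by exact_mod_cast hN
    have := aux_norm hN' (1 - s)
    simp at this ⊢
    rw [this]
  have h6 := (h2.const_mul (s - 1)).add h4
  have : riemannZeta₁ s = (s - 1) * riemannZeta s + 0 := by
    rw [riemannZeta_eq_inv_sub_mul hs1]
    have : s - 1 ≠ 0 := sub_ne_zero.mpr hs1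
    field_simp
    ring
  rw [this]
  exact h6

lemma aPsi_cauchySeq (s : ℂ) (hs : 0 < s.re) : CauchySeq (fun N => aPsi N s) := by
  have h5 := (tendsto_rpow_neg_atTop (y := s.re) hs).comp (tendsto_natCast_atTop_atTop (R := ℝ))
  have h6 := (h5.const_mul (2 * (‖s - 1‖ * (‖s‖ / s.re))))
  simp only [mul_zero] at h6
  refine cauchySeq_of_le_tendsto_0' (b := fun N : ℕ => if N = 0 then ‖aPsi 1 s - aPsi 0 s‖ + ‖s - 1‖ * (‖s‖ / s.re) else (2 * (‖s - 1‖ * (‖s‖ / s.re))) * (N : ℝ) ^ (-s.re)) ?_ ?_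
  · intro n m hnm
    rw [dist_comm, dist_eq_norm]
    split_ifs with h
    · subst h
      rcases Nat.eq_zero_or_pos m with rfl | hm
      · simp; positivity
      have := aPsi_cauchy' s hs (N := 1) (M := m) one_pos hm
      simp at this
      calc _ = ‖(aPsi 1 s - aPsi 0 s) + (aPsi m s - aPsi 1 s)‖ := by congr 1; ring
        _ ≤ _ := norm_add_le _ _
        _ ≤ _ := by gcongr
    · have := aPsi_cauchy' s hs (Nat.pos_of_ne_zero h) hnm
      refine this.trans ?_
      have : 0 ≤ ‖s - 1‖ * (‖s‖ / s.re) * (n : ℝ) ^ (-s.re) := by positivity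
      linarith
  · refine h6.congr' ?_
    filter_upwards [Filter.eventually_gt_atTop 0] with N hN
    simp [hN.ne']

lemma aPsi_differentiable {N : ℕ} (hN : 0 < N) : Differentiable ℂ (aPsi N) := by
  unfold aPsi
  have h0 : (N : ℂ) ≠ 0 := by exact_mod_cast hN.ne'
  refine ((differentiable_id.sub_const _).mul ?_).add ?_
  · refine Differentiable.fun_sum ?_
    intro n hn
    simp at hn
    have h1 : (n : ℂ) ≠ 0 := by exact_mod_cast (by omega : n ≠ 0)
    exact differentiable_neg.const_cpow (Or.inl h1)
  · exact (differentiable_id.const_sub 1).const_cpow (Or.inl h0)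

lemma aPsi_tendsto (s : ℂ) (hs : 0 < s.re) :
    Filter.Tendsto (fun N => aPsi N s) Filter.atTop (nhds (riemannZeta₁ s)) := by
  classical
  choose! F hF using fun (s : ℂ) (hs : 0 < s.re) => cauchySeq_tendsto_of_complete (aPsi_cauchySeq s hs)
  set H : Set ℂ := {s | 0 < s.re} with hH
  have hHo : IsOpen H := isOpen_lt continuous_const Complex.continuous_re
  have hbound : ∀ z : ℂ, 0 < z.re → ∀ N : ℕ, 0 < N →
      ‖aPsi N z - F z‖ ≤ ‖z - 1‖ * (‖z‖ / z.re) * (N : ℝ) ^ (-z.re) := by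
    intro z hz N hN
    have h1 : Filter.Tendsto (fun M => ‖aPsi M z - aPsi N z‖) Filter.atTop (nhds ‖F z - aPsi N z‖) :=
      ((hF z hz).sub_const _).norm
    rw [norm_sub_rev]
    refine le_of_tendsto h1 ?_
    filter_upwards [Filter.eventually_ge_atTop N] with M hM
    exact aPsi_cauchy' z hz hN hM
  have hlu : TendstoLocallyUniformlyOn (fun N => aPsi (N + 1)) F Filter.atTop H := by
    rw [tendstoLocallyUniformlyOn_iff_forall_isCompact hHo]
    intro K hK hKc
    obtain ⟨R, hR0, hR⟩ := hKc.isBounded.exists_pos_norm_le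
    rcases K.eq_empty_or_nonempty with rfl | hne
    · exact tendstoUniformlyOn_empty
    obtain ⟨z0, hz0, hmin⟩ := hKc.exists_isMinOn hne Complex.continuous_re.continuousOn
    have hσ : 0 < z0.re := hK hz0
    rw [Metric.tendstoUniformlyOn_iff]
    intro ε hε
    have h5 := ((tendsto_rpow_neg_atTop (y := z0.re) hσ).comp (tendsto_natCast_atTop_atTop (R := ℝ))).const_mul ((R + 1) * (R / z0.re))
    simp only [mul_zero] at h5
    have h6 := (Filter.tendsto_add_atTop_iff_nat 1).mpr h5
    filter_upwards [h6.eventually (gt_mem_nhds hε)] with N hN z hz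
    rw [dist_comm, dist_eq_norm]
    refine lt_of_le_of_lt (hbound z (hK hz) (N + 1) (by omega)) (lt_of_le_of_lt ?_ hN)
    have hzr : z0.re ≤ z.re := hmin hz
    have hzp : 0 < z.re := hK hz
    have hz1 : ‖z - 1‖ ≤ R + 1 := (norm_sub_le _ _).trans (by simpa using hR z hz)
    have hz2 := hR z hz
    simp only [Function.comp]
    have : ((N + 1 : ℕ) : ℝ) ^ (-z.re) ≤ ((N + 1 : ℕ) : ℝ) ^ (-z0.re) := by
      refine Real.rpow_le_rpow_of_exponent_le ?_ (by linarith)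
      push_cast; have : (0 : ℝ) ≤ N := by positivity
      linarith
    gcongr
  have hFd : DifferentiableOn ℂ F H := hlu.differentiableOn
    (Filter.Eventually.of_forall fun N => (aPsi_differentiable (Nat.succ_pos N)).differentiableOn) hHo
  have hHc : IsPreconnected H := (convex_halfSpace_re_gt 0).isPreconnected
  have heq : Set.EqOn F riemannZeta₁ H := by
    refine AnalyticOnNhd.eqOn_of_preconnected_of_eventuallyEq (hFd.analyticOnNhd hHo)
      (differentiable_riemannZeta₁.differentiableOn.analyticOnNhd hHo) hHc (z₀ := 2) (by simp [hH]) ?_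
    have : {s : ℂ | 1 < s.re} ∈ nhds (2 : ℂ) :=
      (isOpen_lt continuous_const Complex.continuous_re).mem_nhds (by simp)
    filter_upwards [this] with z hz
    have hz' : 1 < z.re := hz
    exact tendsto_nhds_unique (hF z (by linarith)) (aPsi_tendsto_gt z hz')
  have := hF s hs
  rwa [heq (show s ∈ H from hs)] at this

lemma aPsi_bound (s : ℂ) (hs : 0 < s.re) (hz : riemannZeta s = 0) {N : ℕ} (hN : 0 < N) :
    ‖aPsi N s‖ ≤ ‖s - 1‖ * (‖s‖ / s.re) * (N : ℝ) ^ (-s.re) := by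
  have hs1 : s ≠ 1 := by rintro rfl; exact riemannZeta_one_ne_zero hz
  have hz1 : riemannZeta₁ s = 0 := by
    have := riemannZeta_eq_inv_sub_mul hs1
    rw [hz] at this
    have h2 : s - 1 ≠ 0 := sub_ne_zero.mpr hs1
    simpa [h2] using this.symm
  have h0 := aPsi_tendsto s hs
  rw [hz1] at h0
  have h1 : Filter.Tendsto (fun M => ‖aPsi M s - aPsi N s‖) Filter.atTop (nhds ‖0 - aPsi N s‖) :=
    (h0.sub_const _).norm
  rw [zero_sub, norm_neg] at h1
  refine le_of_tendsto h1 ?_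
  filter_upwards [Filter.eventually_ge_atTop N] with M hM
  exact aPsi_cauchy' s hs hN hM

lemma aZ_bound (s : ℂ) (hs : 0 < s.re) (hs' : s.re < 1) (hz : riemannZeta s = 0) {u : ℝ} (hu : 1 ≤ u) :
    ‖∑ n ∈ Finset.Ioc 0 ⌊u⌋₊, (n : ℂ) ^ (-s) - (u : ℂ) ^ (1 - s) / (1 - s)‖ ≤
      2 * (‖s‖ / s.re + 1) * u ^ (-s.re) := by
  have hs1 : s ≠ 1 := by rintro rfl; simp at hs'
  have h2 : s - 1 ≠ 0 := sub_ne_zero.mpr hs1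
  have h2' : 1 - s ≠ 0 := sub_ne_zero.mpr hs1.symm
  set N := ⌊u⌋₊ with hNdef
  have hN : 0 < N := Nat.floor_pos.mpr hu
  have hN1 : (1 : ℝ) ≤ N := by exact_mod_cast hN
  have hN' : (0 : ℝ) < N := by linarith
  have hNu : (N : ℝ) ≤ u := Nat.floor_le (by linarith)
  have huN : u < N + 1 := Nat.lt_floor_add_one u
  have hb := aPsi_bound s hs hz hN
  have hpow : (N : ℝ) ^ (-s.re) ≤ 2 * u ^ (-s.re) := by
    have h3 : (N : ℝ) ^ (-s.re) ≤ (u / 2) ^ (-s.re) :=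
      Real.rpow_le_rpow_of_nonpos (by linarith) (by linarith) (by linarith)
    rw [Real.div_rpow (by linarith) (by norm_num), Real.rpow_neg (by norm_num : (0:ℝ) ≤ 2), div_inv_eq_mul, mul_comm] at h3
    refine h3.trans ?_
    have h4 : (2 : ℝ) ^ s.re ≤ 2 ^ (1 : ℝ) := Real.rpow_le_rpow_of_exponent_le (by norm_num) hs'.le
    rw [Real.rpow_one] at h4
    gcongr
  have key := Convex.norm_image_sub_le_of_norm_hasDerivWithin_le
    (f := fun t : ℝ => (t : ℂ) ^ (1 - s)) (f' := fun t : ℝ => (1 - s) * ((t : ℂ) ^ (-s)))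
    (s := Set.Icc (N : ℝ) u) (x := (N : ℝ)) (y := u) (C := ‖s - 1‖ * (N : ℝ) ^ (-s.re))
    (by
      intro t ht
      have h1 := aux_hasDeriv (1 - s) (hN'.trans_le ht.1)
      refine (h1.congr_deriv ?_).hasDerivWithinAt
      rw [show (1 - s - 1 : ℂ) = -s by ring])
    (by
      intro t ht
      have h0 := hN'.trans_le ht.1
      rw [norm_mul, norm_sub_rev 1 s, aux_norm h0]
      refine mul_le_mul_of_nonneg_left ?_ (norm_nonneg _)
      exact Real.rpow_le_rpow_of_nonpos hN' ht.1 (by simp; linarith))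
    (convex_Icc _ _) ⟨le_rfl, hNu⟩ ⟨hNu, le_rfl⟩
  have hdiff : ‖u - (N : ℝ)‖ ≤ 1 := by rw [Real.norm_eq_abs, abs_le]; constructor <;> linarith
  have e : ∑ n ∈ Finset.Ioc 0 N, (n : ℂ) ^ (-s) - (u : ℂ) ^ (1 - s) / (1 - s) =
      (aPsi N s + ((u : ℂ) ^ (1 - s) - ((N : ℝ) : ℂ) ^ (1 - s))) / (s - 1) := by
    unfold aPsi
    have : (1 - s : ℂ) = -(s - 1) := by ring
    field_simp
    rw [this]
    push_cast
    field_simp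
    ring
  rw [e, norm_div, div_le_iff₀ (norm_pos_iff.mpr h2)]
  refine (norm_add_le _ _).trans ?_
  have hk2 : ‖(u : ℂ) ^ (1 - s) - ((N : ℝ) : ℂ) ^ (1 - s)‖ ≤ ‖s - 1‖ * (N : ℝ) ^ (-s.re) :=
    key.trans (mul_le_of_le_one_right (by positivity) hdiff)
  calc _ ≤ ‖s - 1‖ * (‖s‖ / s.re) * (N : ℝ) ^ (-s.re) + ‖s - 1‖ * (N : ℝ) ^ (-s.re) := add_le_add hb hk2
    _ = ‖s - 1‖ * (‖s‖ / s.re + 1) * (N : ℝ) ^ (-s.re) := by ring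
    _ ≤ ‖s - 1‖ * (‖s‖ / s.re + 1) * (2 * u ^ (-s.re)) := by gcongr
    _ = _ := by ring

lemma hyper {R : Type*} [AddCommMonoid R] (f : ℕ → ℕ → R) {y B : ℝ} (hy : 0 ≤ y) (hB : 0 < B) :
    ∑ n ∈ Finset.Ioc 0 ⌊y⌋₊, ∑ p ∈ n.divisorsAntidiagonal, f p.1 p.2 =
      ∑ b ∈ Finset.Ioc 0 ⌊B⌋₊, ∑ a ∈ Finset.Ioc 0 ⌊y / b⌋₊, f a b +
      ∑ a ∈ Finset.Ioc 0 ⌊y / B⌋₊, ∑ b ∈ Finset.Ioc ⌊B⌋₊ ⌊y / a⌋₊, f a b := by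
  classical
  have e1 : ∑ n ∈ Finset.Ioc 0 ⌊y⌋₊, ∑ p ∈ n.divisorsAntidiagonal, f p.1 p.2 =
      ∑ p ∈ ((Finset.Ioc 0 ⌊y⌋₊) ×ˢ (Finset.Ioc 0 ⌊y⌋₊)).filter (fun p => p.1 * p.2 ≤ ⌊y⌋₊), f p.1 p.2 := by
    rw [Finset.sum_sigma']
    refine Finset.sum_bij' (fun q _ => q.2) (fun p _ => ⟨p.1 * p.2, p⟩) ?_ ?_ ?_ ?_ ?_
    · rintro ⟨n, a, b⟩ h
      simp only [Finset.mem_sigma, Finset.mem_Ioc, Nat.mem_divisorsAntidiagonal] at h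
      simp only [Finset.mem_filter, Finset.mem_product, Finset.mem_Ioc]
      obtain ⟨⟨h1, h2⟩, h3, h4⟩ := h
      have ha : 0 < a := by rcases Nat.eq_zero_or_pos a with rfl | h; · simp at h3; omega
                            · exact h
      have hb : 0 < b := by rcases Nat.eq_zero_or_pos b with rfl | h; · simp at h3; omega
                            · exact h
      refine ⟨⟨⟨ha, ?_⟩, hb, ?_⟩, by omega⟩ <;> nlinarith
    · rintro ⟨a, b⟩ h
      simp only [Finset.mem_filter, Finset.mem_product, Finset.mem_Ioc] at h
      simp only [Finset.mem_sigma, Finset.mem_Ioc, Nat.mem_divisorsAntidiagonal]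
      have := Nat.mul_pos h.1.1.1 h.1.2.1
      exact ⟨⟨this, h.2⟩, trivial, this.ne'⟩
    · rintro ⟨n, a, b⟩ h
      simp only [Finset.mem_sigma, Finset.mem_Ioc, Nat.mem_divisorsAntidiagonal] at h
      obtain ⟨_, rfl, _⟩ := h
      rfl
    · rintro ⟨a, b⟩ h; rfl
    · rintro ⟨n, a, b⟩ h; rfl
  have hmem : ∀ a b : ℕ, 0 < a → 0 < b → (a * b ≤ ⌊y⌋₊ ↔ (a : ℝ) * b ≤ y) := by
    intro a b ha hb
    rw [Nat.le_floor_iff hy]; push_cast; rfl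
  have hda : ∀ a b : ℕ, 0 < b → (a ≤ ⌊y / b⌋₊ ↔ (a : ℝ) * b ≤ y) := by
    intro a b hb
    have : (0 : ℝ) < b := by exact_mod_cast hb
    rw [Nat.le_floor_iff (by positivity), le_div_iff₀ this]
  have hle : ∀ a b : ℕ, 0 < a → 0 < b → (a : ℝ) * b ≤ y → a ≤ ⌊y⌋₊ ∧ b ≤ ⌊y⌋₊ := by
    intro a b ha hb h
    have ha' : (1 : ℝ) ≤ a := by exact_mod_cast ha
    have hb' : (1 : ℝ) ≤ b := by exact_mod_cast hb
    rw [Nat.le_floor_iff hy, Nat.le_floor_iff hy]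
    constructor <;> nlinarith
  rw [e1, ← Finset.sum_filter_add_sum_filter_not _ (fun p => p.2 ≤ ⌊B⌋₊)]
  congr 1
  · rw [Finset.sum_sigma']
    refine Finset.sum_bij' (fun p _ => ⟨p.2, p.1⟩) (fun q _ => (q.2, q.1)) ?_ ?_ ?_ ?_ ?_
    · rintro ⟨a, b⟩ h
      simp only [Finset.mem_filter, Finset.mem_product, Finset.mem_Ioc] at h
      simp only [Finset.mem_sigma, Finset.mem_Ioc]
      obtain ⟨⟨⟨⟨ha, _⟩, hb, _⟩, h1⟩, h2⟩ := h
      exact ⟨⟨hb, h2⟩, ha, (hda a b hb).2 ((hmem a b ha hb).1 h1)⟩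
    · rintro ⟨b, a⟩ h
      simp only [Finset.mem_sigma, Finset.mem_Ioc] at h
      simp only [Finset.mem_filter, Finset.mem_product, Finset.mem_Ioc]
      obtain ⟨⟨hb, h2⟩, ha, h1⟩ := h
      have h3 := (hda a b hb).1 h1
      exact ⟨⟨⟨⟨ha, (hle a b ha hb h3).1⟩, hb, (hle a b ha hb h3).2⟩, (hmem a b ha hb).2 h3⟩, h2⟩
    · intros; rfl
    · intros; rfl
    · intros; rfl
  · rw [Finset.sum_sigma']
    refine Finset.sum_bij' (fun p _ => ⟨p.1, p.2⟩) (fun q _ => (q.1, q.2)) ?_ ?_ ?_ ?_ ?_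
    · rintro ⟨a, b⟩ h
      simp only [Finset.mem_filter, Finset.mem_product, Finset.mem_Ioc, not_le] at h
      simp only [Finset.mem_sigma, Finset.mem_Ioc]
      obtain ⟨⟨⟨⟨ha, _⟩, hb, _⟩, h1⟩, h2⟩ := h
      have h3 := (hmem a b ha hb).1 h1
      refine ⟨⟨ha, ?_⟩, h2, (hda b a ha).2 (by rw [mul_comm]; exact h3)⟩
      rw [Nat.le_floor_iff (by positivity), le_div_iff₀ hB]
      have h4 : B < b := (Nat.floor_lt hB.le).1 h2
      have ha' : (0 : ℝ) < a := by exact_mod_cast ha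
      nlinarith
    · rintro ⟨a, b⟩ h
      simp only [Finset.mem_sigma, Finset.mem_Ioc] at h
      simp only [Finset.mem_filter, Finset.mem_product, Finset.mem_Ioc, not_le]
      obtain ⟨⟨ha, _⟩, h2, h1⟩ := h
      have hb : 0 < b := by omega
      have h3 := (hda b a ha).1 h1
      rw [mul_comm] at h3
      exact ⟨⟨⟨⟨ha, (hle a b ha hb h3).1⟩, hb, (hle a b ha hb h3).2⟩, (hmem a b ha hb).2 h3⟩, h2⟩
    · intros; rfl
    · intros; rfl
    · intros; rfl

lemma abel_tail (c : ℕ → ℝ) (w : ℕ → ℂ) (v : ℕ → ℝ) {M K : ℝ} (hM : 0 ≤ M) (hK : 1 ≤ K)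
    (hc : ∀ N : ℕ, |∑ n ∈ Finset.Ioc 0 N, c n| ≤ M) (hv : ∀ n, 0 < n → 0 ≤ v n)
    (hw : ∀ n, 0 < n → ‖w n‖ ≤ v n)
    (hd : ∀ n, 0 < n → ‖w (n + 1) - w n‖ ≤ K * (v n - v (n + 1))) (m N : ℕ) :
    ‖∑ n ∈ Finset.Ioc m N, (c n : ℂ) * w n‖ ≤ M * (1 + K) * v (m + 1) := by
  rcases le_or_gt N m with h | h
  · rw [Finset.Ioc_eq_empty (by omega)]
    have := hv (m + 1) (by omega)
    simp; positivity
  obtain ⟨k, rfl⟩ := Nat.exists_eq_add_of_le h.le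
  set T : ℕ → ℝ := fun N => ∑ n ∈ Finset.Ioc 0 N, c n with hT
  have main : ∀ k : ℕ, ‖∑ n ∈ Finset.Ioc m (m + k), (c n : ℂ) * w n - T (m + k) * w (m + k + 1)
      + T m * w (m + 1)‖ ≤ M * K * (v (m + 1) - v (m + k + 1)) := by
    intro k
    induction k with
    | zero => simp
    | succ k ih =>
      rw [← add_assoc, Finset.sum_Ioc_succ_top (by omega)]
      have hT1 : T (m + k + 1) = T (m + k) + c (m + k + 1) := by
        simp only [hT]; rw [Finset.sum_Ioc_succ_top (by omega)]
      have e : ∑ n ∈ Finset.Ioc m (m + k), (c n : ℂ) * w n + (c (m + k + 1) : ℂ) * w (m + k + 1)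
          - T (m + k + 1) * w (m + k + 1 + 1) + T m * w (m + 1) =
          (∑ n ∈ Finset.Ioc m (m + k), (c n : ℂ) * w n - T (m + k) * w (m + k + 1)
            + T m * w (m + 1)) - T (m + k + 1) * (w (m + k + 1 + 1) - w (m + k + 1)) := by
        rw [hT1]; push_cast; ring
      rw [e]
      refine (norm_sub_le _ _).trans ?_
      rw [norm_mul]
      have h1 := hd (m + k + 1) (by omega)
      have h2 : ‖(T (m + k + 1) : ℂ)‖ ≤ M := by
        rw [Complex.norm_real]; exact hc _
      have h3 : ‖(T (m + k + 1) : ℂ)‖ * ‖w (m + k + 1 + 1) - w (m + k + 1)‖ ≤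
        M * (K * (v (m + k + 1) - v (m + k + 1 + 1))) := mul_le_mul h2 h1 (norm_nonneg _) hM
      linarith
  have h1 := main k
  have hTn : ∀ n, ‖(T n : ℂ)‖ ≤ M := by intro n; rw [Complex.norm_real]; exact hc _
  have h2 : ‖(T (m + k) : ℂ) * w (m + k + 1)‖ ≤ M * v (m + k + 1) := by
    rw [norm_mul]; exact mul_le_mul (hTn _) (hw _ (by omega)) (norm_nonneg _) hM
  have h3 : ‖(T m : ℂ) * w (m + 1)‖ ≤ M * v (m + 1) := by
    rw [norm_mul]; exact mul_le_mul (hTn _) (hw _ (by omega)) (norm_nonneg _) hM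
  have e : ∑ n ∈ Finset.Ioc m (m + k), (c n : ℂ) * w n =
     (∑ n ∈ Finset.Ioc m (m + k), (c n : ℂ) * w n - T (m + k) * w (m + k + 1)
      + T m * w (m + 1)) + T (m + k) * w (m + k + 1) - T m * w (m + 1) := by ring
  rw [e]
  refine (norm_sub_le _ _).trans ((add_le_add_left (norm_add_le _ _) _).trans ?_)
  have h4 := hv (m + k + 1) (by omega)
  nlinarith [mul_nonneg hM (mul_nonneg (sub_nonneg.2 hK) h4)]

lemma sum_inv_le {y : ℝ} (hy : 1 ≤ y) : ∑ n ∈ Finset.Ioc 0 ⌊y⌋₊, (n : ℝ)⁻¹ ≤ 1 + Real.log y := by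
  have := harmonic_floor_le_one_add_log y hy
  rw [harmonic_eq_sum_Icc] at this
  push_cast at this
  exact this

lemma pow_le_aux {σ y : ℝ} (hσ : σ ≤ 1) {n : ℕ} (hn : n ∈ Finset.Ioc 0 ⌊y⌋₊) :
    (n : ℝ) ^ (-σ) ≤ y ^ (1 - σ) * (n : ℝ)⁻¹ := by
  simp at hn
  have h0 : (0 : ℝ) < n := by exact_mod_cast hn.1
  have h1 : (n : ℝ) ≤ y := (Nat.le_floor_iff' (by omega)).1 hn.2
  have : (n : ℝ) ^ (-σ) = (n : ℝ) ^ (1 - σ) * (n : ℝ)⁻¹ := by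
    rw [← Real.rpow_neg_one, ← Real.rpow_add h0]; ring_nf
  rw [this]
  gcongr

lemma sum_pow_le {σ y : ℝ} (hσ : σ ≤ 1) (hy : 1 ≤ y) :
    ∑ n ∈ Finset.Ioc 0 ⌊y⌋₊, (n : ℝ) ^ (-σ) ≤ y ^ (1 - σ) * (1 + Real.log y) := by
  refine (Finset.sum_le_sum fun n hn => pow_le_aux hσ hn).trans ?_
  rw [← Finset.mul_sum]
  exact mul_le_mul_of_nonneg_left (sum_inv_le hy) (by positivity)

noncomputable def rr (c : ℕ → ℝ) (n : ℕ) : ℝ := ∑ p ∈ n.divisorsAntidiagonal, c p.2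

lemma main_H (c : ℕ → ℝ) {D : ℝ} (hD : 1 ≤ D) (hc1 : ∀ n, |c n| ≤ 1)
    (hc : ∀ N : ℕ, |∑ n ∈ Finset.Ioc 0 N, c n| ≤ D) (L : ℝ)
    (hL : ∀ B : ℝ, 0 < B → |∑ b ∈ Finset.Ioc 0 ⌊B⌋₊, c b / b - L| ≤ 2 * D / B)
    (s : ℂ) (hσ1 : s.re < 1) (hσ0 : 0 ≤ s.re) {C K W : ℝ} (hC : 0 ≤ C) (hK : 1 ≤ K)
    (hZ : ∀ u : ℝ, 1 ≤ u → ‖∑ n ∈ Finset.Ioc 0 ⌊u⌋₊, (n : ℂ) ^ (-s) - (u : ℂ) ^ (1 - s) / (1 - s)‖ ≤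
      C * u ^ (-s.re))
    (hd : ∀ n : ℕ, 0 < n → ‖((n + 1 : ℕ) : ℂ) ^ (-s) - (n : ℂ) ^ (-s)‖ ≤
      K * ((n : ℝ) ^ (-s.re) - ((n + 1 : ℕ) : ℝ) ^ (-s.re)))
    {y : ℝ} (hy : D ≤ y)
    (hW : ∑ n ∈ Finset.Ioc 0 ⌊Real.sqrt (y / D)⌋₊, (n : ℝ) ^ (-s.re) ≤ W * (Real.sqrt (y / D)) ^ (1 - s.re)) :
    ‖∑ n ∈ Finset.Ioc 0 ⌊y⌋₊, (rr c n : ℂ) * (n : ℂ) ^ (-s) - L * ((y : ℂ) ^ (1 - s) / (1 - s))‖ ≤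
      Real.sqrt D * y ^ (1 / 2 - s.re) * (C + 2 / ‖1 - s‖ + (1 + K) * W) := by
  have hD0 : 0 < D := by linarith
  have hy0 : 0 < y := by linarith
  set σ := s.re with hσ
  have hs1 : (1 - s : ℂ) ≠ 0 := by
    intro h
    have := congrArg Complex.re h
    simp at this; linarith
  have hn1 : 0 < ‖1 - s‖ := norm_pos_iff.mpr hs1
  set B := Real.sqrt (y * D) with hB
  set A := Real.sqrt (y / D) with hA
  have hB0 : 0 < B := Real.sqrt_pos.2 (by positivity)
  have hA0 : 0 < A := Real.sqrt_pos.2 (by positivity)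
  have hBB : B * B = y * D := Real.mul_self_sqrt (by positivity)
  have hyB : y / B = A := by
    rw [div_eq_iff hB0.ne', hA, hB, ← Real.sqrt_mul (by positivity)]
    rw [show y / D * (y * D) = y * y by field_simp, Real.sqrt_mul_self hy0.le]
  have hAB : A * B = y := by rw [← hyB]; field_simp
  have hBy : B ≤ y := by
    rw [hB, show y = Real.sqrt (y * y) from (Real.sqrt_mul_self hy0.le).symm]
    apply Real.sqrt_le_sqrt
    rw [Real.sqrt_mul_self hy0.le]; gcongr
  have hDA : D * A = B := by
    have : D * A * A = B * A := by
      rw [mul_comm B A, hAB, mul_assoc, hA, Real.mul_self_sqrt (by positivity)]; field_simp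
    exact mul_right_cancel₀ hA0.ne' this
  have hBs : B = Real.sqrt D * y ^ (1 / 2 : ℝ) := by
    rw [hB, Real.sqrt_mul hy0.le, ← Real.sqrt_eq_rpow, mul_comm]
  have hBy2 : B * y ^ (-σ) = Real.sqrt D * y ^ (1 / 2 - σ) := by
    rw [hBs, mul_assoc, ← Real.rpow_add hy0]; rfl
  -- hyperbola
  have e0 : ∑ n ∈ Finset.Ioc 0 ⌊y⌋₊, (rr c n : ℂ) * (n : ℂ) ^ (-s) =
      ∑ n ∈ Finset.Ioc 0 ⌊y⌋₊, ∑ p ∈ n.divisorsAntidiagonal,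
        ((c p.2 : ℂ) * (p.2 : ℂ) ^ (-s)) * (p.1 : ℂ) ^ (-s) := by
    refine Finset.sum_congr rfl fun n hn => ?_
    unfold rr
    push_cast
    rw [Finset.sum_mul]
    refine Finset.sum_congr rfl fun p hp => ?_
    rw [Nat.mem_divisorsAntidiagonal] at hp
    rw [← hp.1]
    push_cast
    rw [Complex.natCast_mul_natCast_cpow]; ring
  rw [e0, hyper (fun a b => ((c b : ℂ) * (b : ℂ) ^ (-s)) * (a : ℂ) ^ (-s)) hy0.le hB0, hyB]
  -- first part
  have hb_pos : ∀ b ∈ Finset.Ioc 0 ⌊B⌋₊, (0 : ℝ) < b ∧ (b : ℝ) ≤ B := by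
    intro b hb
    simp at hb
    exact ⟨by exact_mod_cast hb.1, (Nat.le_floor_iff hB0.le).1 hb.2⟩
  have p1 : ‖∑ b ∈ Finset.Ioc 0 ⌊B⌋₊, ∑ a ∈ Finset.Ioc 0 ⌊y / b⌋₊, ((c b : ℂ) * (b : ℂ) ^ (-s)) * (a : ℂ) ^ (-s)
      - ∑ b ∈ Finset.Ioc 0 ⌊B⌋₊, ((c b / b : ℝ) : ℂ) * ((y : ℂ) ^ (1 - s) / (1 - s))‖ ≤ C * (B * y ^ (-σ)) := by
    rw [← Finset.sum_sub_distrib]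
    refine (norm_sum_le _ _).trans ?_
    have : ∀ b ∈ Finset.Ioc 0 ⌊B⌋₊, ‖∑ a ∈ Finset.Ioc 0 ⌊y / b⌋₊, ((c b : ℂ) * (b : ℂ) ^ (-s)) * (a : ℂ) ^ (-s)
      - ((c b / b : ℝ) : ℂ) * ((y : ℂ) ^ (1 - s) / (1 - s))‖ ≤ C * y ^ (-σ) := by
      intro b hb
      obtain ⟨hb0, hbB⟩ := hb_pos b hb
      have hyb : 1 ≤ y / b := by rw [le_div_iff₀ hb0]; linarith
      have hbc : ((b : ℝ) : ℂ) ≠ 0 := by exact_mod_cast hb0.ne'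
      have e1 : ((c b / b : ℝ) : ℂ) * ((y : ℂ) ^ (1 - s) / (1 - s)) =
          (c b : ℂ) * (b : ℂ) ^ (-s) * (((y / b : ℝ) : ℂ) ^ (1 - s) / (1 - s)) := by
        have e2 : (y : ℂ) ^ (1 - s) = ((y / b : ℝ) : ℂ) ^ (1 - s) * ((b : ℝ) : ℂ) ^ (1 - s) := by
          rw [← Complex.mul_cpow_ofReal_nonneg (by positivity) hb0.le]
          congr 1
          push_cast at hbc ⊢; field_simp
        have e3 : ((b : ℝ) : ℂ) ^ (1 - s) = (b : ℝ) * ((b : ℝ) : ℂ) ^ (-s) := by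
          rw [sub_eq_add_neg, Complex.cpow_add _ _ hbc, Complex.cpow_one]
        rw [e2, e3]
        push_cast at hbc ⊢
        field_simp
      rw [e1, ← Finset.mul_sum, ← mul_sub, norm_mul, norm_mul]
      have h1 := hZ _ hyb
      have h2 : ‖(b : ℂ) ^ (-s)‖ = (b : ℝ) ^ (-σ) := by
        have := aux_norm hb0 (-s); simpa using this
      have h3 : ‖(c b : ℂ)‖ ≤ 1 := by rw [Complex.norm_real]; exact hc1 b
      rw [h2]
      have h4 : (b : ℝ) ^ (-σ) * (y / b) ^ (-σ) = y ^ (-σ) := by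
        rw [← Real.mul_rpow hb0.le (by positivity)]; congr 1; field_simp
      calc _ ≤ 1 * (b : ℝ) ^ (-σ) * (C * (y / b) ^ (-σ)) := by gcongr
        _ = C * y ^ (-σ) := by rw [← h4]; ring
    refine (Finset.sum_le_sum this).trans ?_
    rw [Finset.sum_const, nsmul_eq_mul]
    simp only [Nat.card_Ioc, tsub_zero]
    have := Nat.floor_le hB0.le
    calc _ ≤ B * (C * y ^ (-σ)) := by gcongr
      _ = _ := by ring
  have p2 : ‖∑ b ∈ Finset.Ioc 0 ⌊B⌋₊, ((c b / b : ℝ) : ℂ) * ((y : ℂ) ^ (1 - s) / (1 - s))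
      - L * ((y : ℂ) ^ (1 - s) / (1 - s))‖ ≤ 2 / ‖1 - s‖ * (B * y ^ (-σ)) := by
    rw [← Finset.sum_mul, ← sub_mul, norm_mul, norm_div, aux_norm hy0]
    have h1 : ‖∑ b ∈ Finset.Ioc 0 ⌊B⌋₊, ((c b / b : ℝ) : ℂ) - L‖ ≤ 2 * D / B := by
      have := hL B hB0
      rw [← Complex.ofReal_sum, ← Complex.ofReal_sub, Complex.norm_real]
      exact this
    have h2 : y ^ ((1 - s : ℂ).re) = y * y ^ (-σ) := by
      simp only [Complex.sub_re, Complex.one_re, sub_eq_add_neg (1 : ℝ)]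
      rw [Real.rpow_add hy0, Real.rpow_one]
    rw [h2]
    calc _ ≤ 2 * D / B * (y * y ^ (-σ) / ‖1 - s‖) := by gcongr
      _ = 2 / ‖1 - s‖ * ((y * D) / B * y ^ (-σ)) := by ring
      _ = _ := by rw [← hBB]; field_simp
  have p3 : ‖∑ a ∈ Finset.Ioc 0 ⌊A⌋₊, ∑ b ∈ Finset.Ioc ⌊B⌋₊ ⌊y / a⌋₊, ((c b : ℂ) * (b : ℂ) ^ (-s)) * (a : ℂ) ^ (-s)‖
      ≤ (1 + K) * W * (B * y ^ (-σ)) := by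
    have h1 : ∀ a ∈ Finset.Ioc 0 ⌊A⌋₊, ‖∑ b ∈ Finset.Ioc ⌊B⌋₊ ⌊y / a⌋₊, ((c b : ℂ) * (b : ℂ) ^ (-s)) * (a : ℂ) ^ (-s)‖
        ≤ D * (1 + K) * B ^ (-σ) * (a : ℝ) ^ (-σ) := by
      intro a ha
      simp at ha
      have ha0 : (0 : ℝ) < a := by exact_mod_cast ha.1
      rw [← Finset.sum_mul, norm_mul]
      have h2 : ‖(a : ℂ) ^ (-s)‖ = (a : ℝ) ^ (-σ) := by
        have := aux_norm ha0 (-s); simpa using this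
      rw [h2]
      refine mul_le_mul_of_nonneg_right ?_ (by positivity)
      have h3 := abel_tail c (fun n => (n : ℂ) ^ (-s)) (fun n => (n : ℝ) ^ (-σ)) hD0.le hK hc
        (fun n hn => by positivity)
        (fun n hn => by
          have := aux_norm (show (0 : ℝ) < n by exact_mod_cast hn) (-s)
          simpa using this.le) hd ⌊B⌋₊ ⌊y / a⌋₊
      refine h3.trans ?_
      have h4 : ((⌊B⌋₊ + 1 : ℕ) : ℝ) ^ (-σ) ≤ B ^ (-σ) := by
        refine Real.rpow_le_rpow_of_nonpos hB0 ?_ (by linarith)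
        push_cast; exact (Nat.lt_floor_add_one B).le
      gcongr
    refine (norm_sum_le _ _).trans ((Finset.sum_le_sum h1).trans ?_)
    rw [← Finset.mul_sum]
    calc _ ≤ D * (1 + K) * B ^ (-σ) * (W * A ^ (1 - σ)) := by gcongr
      _ = (1 + K) * W * ((D * A) * ((A * B) ^ (-σ))) := by
        rw [Real.mul_rpow hA0.le hB0.le, sub_eq_add_neg, Real.rpow_add hA0, Real.rpow_one]; ring
      _ = _ := by rw [hDA, hAB]
  rw [← hBy2]
  set X1 := ∑ b ∈ Finset.Ioc 0 ⌊B⌋₊, ∑ a ∈ Finset.Ioc 0 ⌊y / b⌋₊, ((c b : ℂ) * (b : ℂ) ^ (-s)) * (a : ℂ) ^ (-s)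
  set X2 := ∑ b ∈ Finset.Ioc 0 ⌊B⌋₊, ((c b / b : ℝ) : ℂ) * ((y : ℂ) ^ (1 - s) / (1 - s))
  set X3 := ∑ a ∈ Finset.Ioc 0 ⌊A⌋₊, ∑ b ∈ Finset.Ioc ⌊B⌋₊ ⌊y / a⌋₊, ((c b : ℂ) * (b : ℂ) ^ (-s)) * (a : ℂ) ^ (-s)
  set X4 := (L : ℂ) * ((y : ℂ) ^ (1 - s) / (1 - s))
  calc ‖X1 + X3 - X4‖ = ‖(X1 - X2) + (X2 - X4) + X3‖ := by congr 1; ring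
    _ ≤ ‖X1 - X2‖ + ‖X2 - X4‖ + ‖X3‖ := norm_add₃_le
    _ ≤ _ := add_le_add (add_le_add p1 p2) p3
    _ = _ := by ring

lemma S_bound (c : ℕ → ℝ) {D : ℝ} (hD : 1 ≤ D) (hc1 : ∀ n, |c n| ≤ 1)
    (hc : ∀ N : ℕ, |∑ n ∈ Finset.Ioc 0 N, c n| ≤ D) (L : ℝ)
    (hL : ∀ B : ℝ, 0 < B → |∑ b ∈ Finset.Ioc 0 ⌊B⌋₊, c b / b - L| ≤ 2 * D / B)
    {y : ℝ} (hy : D ≤ y) :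
    |∑ n ∈ Finset.Ioc 0 ⌊y⌋₊, rr c n - L * y| ≤ 5 * Real.sqrt D * Real.sqrt y := by
  have h := main_H c hD hc1 hc L hL 0 (by simp) (by simp) (C := 1) (K := 1) (W := 1) (by norm_num) le_rfl
    (by
      intro u hu
      simp
      have h1 := Nat.floor_le (show 0 ≤ u by linarith)
      have h2 := Nat.lt_floor_add_one u
      have : ((⌊u⌋₊ : ℂ) - u) = ((⌊u⌋₊ - u : ℝ) : ℂ) := by push_cast; ring
      rw [this, Complex.norm_real, Real.norm_eq_abs, abs_le]
      constructor <;> linarith)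
    (by intro n hn; simp) hy
    (by
      simp
      exact Nat.floor_le (Real.sqrt_nonneg _))
  simp at h
  rw [← Complex.ofReal_sum, ← Complex.ofReal_mul, ← Complex.ofReal_sub, Complex.norm_real, Real.norm_eq_abs] at h
  refine h.trans (le_of_eq ?_)
  rw [show (2 : ℝ)⁻¹ = 1 / 2 by norm_num, ← Real.sqrt_eq_rpow]
  ring

lemma L_nonneg (c : ℕ → ℝ) {D : ℝ} (hD : 1 ≤ D) (L : ℝ) (hr : ∀ n, 0 ≤ rr c n)
    (hS : ∀ y : ℝ, D ≤ y → |∑ n ∈ Finset.Ioc 0 ⌊y⌋₊, rr c n - L * y| ≤ 5 * Real.sqrt D * Real.sqrt y) :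
    0 ≤ L := by
  by_contra hneg
  push Not at hneg
  set t := 5 * Real.sqrt D / (-L) + Real.sqrt D + 1 with ht
  have hsD : 1 ≤ Real.sqrt D := Real.one_le_sqrt.2 hD
  have hq : 0 ≤ 5 * Real.sqrt D / (-L) := div_nonneg (by positivity) (by linarith)
  have ht0 : 0 < t := by linarith
  have hDt : D ≤ t * t := by
    have : D = Real.sqrt D * Real.sqrt D := (Real.mul_self_sqrt (by linarith)).symm
    rw [this]; apply mul_le_mul <;> linarith
  have h := hS (t * t) hDt
  have h0 : 0 ≤ ∑ n ∈ Finset.Ioc 0 ⌊t * t⌋₊, rr c n := Finset.sum_nonneg fun n _ => hr n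
  rw [Real.sqrt_mul_self ht0.le] at h
  have h1 := (abs_le.1 h).2
  have h2 : (-L) * t ≤ 5 * Real.sqrt D := by
    have : ((-L) * t) * t ≤ (5 * Real.sqrt D) * t := by linarith
    exact le_of_mul_le_mul_right this ht0
  have hLne : L ≠ 0 := hneg.ne
  have h3 : (-L) * (5 * Real.sqrt D / (-L)) = 5 * Real.sqrt D := by field_simp
  have : (-L) * t = 5 * Real.sqrt D + (-L) * (Real.sqrt D + 1) := by
    rw [ht, add_assoc, mul_add, h3]
  nlinarith

lemma weighted_aux (r w : ℕ → ℝ) {D L y : ℝ} (hD : 1 ≤ D) (hL0 : 0 ≤ L) (hr : ∀ n, 0 ≤ r n)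
    (hS : ∀ y : ℝ, D ≤ y → |∑ n ∈ Finset.Ioc 0 ⌊y⌋₊, r n - L * y| ≤ 5 * Real.sqrt D * Real.sqrt y)
    (hw0 : ∀ n, 0 < n → 0 ≤ w n) (hw : ∀ n, 0 < n → w (n + 1) ≤ w n) (hy : D ≤ y) (N : ℕ)
    (hN : ⌊y⌋₊ ≤ N) :
    ∑ n ∈ Finset.Ioc ⌊y⌋₊ N, r n * w n ≤ (L * y + 5 * Real.sqrt D * Real.sqrt y) * w (⌊y⌋₊ + 1) +
      ∑ n ∈ Finset.Ioc ⌊y⌋₊ N, (L + 5 * Real.sqrt D * (Real.sqrt n)⁻¹) * w n := by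
  set m := ⌊y⌋₊ with hm
  set S : ℕ → ℝ := fun N => ∑ n ∈ Finset.Ioc 0 N, r n with hSdef
  set G : ℕ → ℝ := fun n => L * n + 5 * Real.sqrt D * Real.sqrt n with hG
  have hSG : ∀ n, m < n → S n ≤ G n := by
    intro n hn
    have h1 : y < n := (Nat.floor_lt (by linarith)).1 hn
    have h2 := hS n (by linarith)
    rw [Nat.floor_natCast] at h2
    have := (abs_le.1 h2).2
    simp only [hSdef, hG]; linarith
  have hGd : ∀ n : ℕ, G (n + 1) - G n ≤ L + 5 * Real.sqrt D * (Real.sqrt ((n + 1 : ℕ) : ℝ))⁻¹ := by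
    intro n
    simp only [hG]
    have h1 : Real.sqrt ((n + 1 : ℕ) : ℝ) - Real.sqrt n ≤ (Real.sqrt ((n + 1 : ℕ) : ℝ))⁻¹ := by
      have hp : 0 < Real.sqrt ((n + 1 : ℕ) : ℝ) := Real.sqrt_pos.2 (by positivity)
      have h2 := Real.mul_self_sqrt (show (0 : ℝ) ≤ ((n + 1 : ℕ) : ℝ) by positivity)
      have h3 := Real.mul_self_sqrt (show (0 : ℝ) ≤ (n : ℝ) by positivity)
      have h4 := Real.sqrt_le_sqrt (show (n : ℝ) ≤ ((n + 1 : ℕ) : ℝ) by push_cast; linarith)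
      rw [inv_eq_one_div, le_div_iff₀ hp]
      push_cast at *
      nlinarith [Real.sqrt_nonneg (n:ℝ)]
    have h5 : 0 ≤ 5 * Real.sqrt D := by positivity
    have := mul_le_mul_of_nonneg_left h1 h5
    push_cast at this ⊢
    linarith
  have main : ∀ k : ℕ, ∑ n ∈ Finset.Ioc m (m + k), r n * w n ≤
      (S (m + k) - G (m + k)) * w (m + k + 1) + (G m - S m) * w (m + 1) +
      ∑ n ∈ Finset.Ioc m (m + k), (L + 5 * Real.sqrt D * (Real.sqrt n)⁻¹) * w n := by
    intro k
    induction k with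
    | zero =>
      simp
      exact (by ring : (S m - G m)*w (m+1) + (G m - S m)*w (m+1) = 0).ge
    | succ k ih =>
      rw [← add_assoc, Finset.sum_Ioc_succ_top (by omega), Finset.sum_Ioc_succ_top (by omega)]
      have hS1 : S (m + k + 1) = S (m + k) + r (m + k + 1) := by
        simp only [hSdef]; rw [Finset.sum_Ioc_succ_top (by omega)]
      have h1 := hSG (m + k + 1) (by omega)
      have h2 := hGd (m + k)
      have h3 := hw (m + k + 1) (by omega)
      have h4 := hw0 (m + k + 1) (by omega)
      have h5 := mul_le_mul_of_nonneg_right h2 h4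
      have h6 := mul_nonneg (sub_nonneg.2 h1) (sub_nonneg.2 h3)
      have h7 : (S (m + k + 1) - S (m + k)) * w (m + k + 1) = r (m + k + 1) * w (m + k + 1) := by
        rw [hS1]; ring
      linarith
  obtain ⟨k, rfl⟩ := Nat.exists_eq_add_of_le hN
  have hwm := hw0 (m + 1) (by omega)
  rcases Nat.eq_zero_or_pos k with rfl | hk
  · simp
    have : 0 ≤ y := by linarith
    positivity
  refine (main k).trans ?_
  have h1 := mul_nonneg (sub_nonneg.2 (hSG (m + k) (by omega))) (hw0 (m + k + 1) (by omega))
  have h2 : 0 ≤ S m := Finset.sum_nonneg fun n _ => hr n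
  have h3 : G m ≤ L * y + 5 * Real.sqrt D * Real.sqrt y := by
    have : (m : ℝ) ≤ y := Nat.floor_le (by linarith)
    simp only [hG]
    gcongr
  have h4 := mul_le_mul_of_nonneg_right (show G m - S m ≤ L * y + 5 * Real.sqrt D * Real.sqrt y by linarith) hwm
  linarith

lemma weighted (r : ℕ → ℝ) {D L y X σ : ℝ} (hD : 1 ≤ D) (hL0 : 0 ≤ L) (hr : ∀ n, 0 ≤ r n)
    (hS : ∀ y : ℝ, D ≤ y → |∑ n ∈ Finset.Ioc 0 ⌊y⌋₊, r n - L * y| ≤ 5 * Real.sqrt D * Real.sqrt y)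
    (hσ : 1 / 2 ≤ σ) (hσ1 : σ ≤ 1) (hy : D ≤ y) (hX : y ≤ X) :
    ∑ n ∈ Finset.Ioc ⌊y⌋₊ ⌊X⌋₊, r n * (n : ℝ) ^ (-σ) ≤
      (2 + Real.log X) * (L * X ^ (1 - σ) + 5 * Real.sqrt D * y ^ (1 / 2 - σ)) := by
  have hy0 : 0 < y := by linarith
  have hX0 : 0 < X := by linarith
  have h := weighted_aux r (fun n => (n : ℝ) ^ (-σ)) hD hL0 hr hS (fun n hn => by positivity)
    (fun n hn => Real.rpow_le_rpow_of_nonpos (by exact_mod_cast hn) (by push_cast; linarith) (by linarith))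
    hy ⌊X⌋₊ (Nat.floor_le_floor hX)
  refine h.trans ?_
  have hsub : Finset.Ioc ⌊y⌋₊ ⌊X⌋₊ ⊆ Finset.Ioc 0 ⌊X⌋₊ := Finset.Ioc_subset_Ioc_left (Nat.zero_le _)
  have hinv : ∑ n ∈ Finset.Ioc ⌊y⌋₊ ⌊X⌋₊, (n : ℝ)⁻¹ ≤ 1 + Real.log X :=
    (Finset.sum_le_sum_of_subset_of_nonneg hsub (fun _ _ _ => by positivity)).trans (sum_inv_le (by linarith))
  have h1 : ((⌊y⌋₊ + 1 : ℕ) : ℝ) ^ (-σ) ≤ y ^ (-σ) := by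
    refine Real.rpow_le_rpow_of_nonpos hy0 ?_ (by linarith)
    push_cast; exact (Nat.lt_floor_add_one y).le
  have h2 : (L * y + 5 * Real.sqrt D * Real.sqrt y) * ((⌊y⌋₊ + 1 : ℕ) : ℝ) ^ (-σ) ≤
      L * X ^ (1 - σ) + 5 * Real.sqrt D * y ^ (1 / 2 - σ) := by
    calc _ ≤ (L * y + 5 * Real.sqrt D * Real.sqrt y) * y ^ (-σ) := by gcongr
      _ = L * y ^ (1 - σ) + 5 * Real.sqrt D * y ^ (1 / 2 - σ) := by
        rw [sub_eq_add_neg 1 σ, sub_eq_add_neg (1 / 2) σ, Real.rpow_add hy0, Real.rpow_add hy0, Real.rpow_one, ← Real.sqrt_eq_rpow]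
        ring
      _ ≤ _ := by
        have : y ^ (1 - σ) ≤ X ^ (1 - σ) := Real.rpow_le_rpow hy0.le hX (by linarith)
        gcongr
  have h3 : ∑ n ∈ Finset.Ioc ⌊y⌋₊ ⌊X⌋₊, (L + 5 * Real.sqrt D * (Real.sqrt n)⁻¹) * (n : ℝ) ^ (-σ) ≤
      (L * X ^ (1 - σ) + 5 * Real.sqrt D * y ^ (1 / 2 - σ)) * (1 + Real.log X) := by
    have : ∀ n ∈ Finset.Ioc ⌊y⌋₊ ⌊X⌋₊, (L + 5 * Real.sqrt D * (Real.sqrt n)⁻¹) * (n : ℝ) ^ (-σ) ≤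
        (L * X ^ (1 - σ) + 5 * Real.sqrt D * y ^ (1 / 2 - σ)) * (n : ℝ)⁻¹ := by
      intro n hn
      have h4 := pow_le_aux hσ1 (hsub hn)
      simp at hn
      have hn0 : (0 : ℝ) < n := by exact_mod_cast (by omega : 0 < n)
      have hyn : y ≤ n := ((Nat.floor_lt hy0.le).1 hn.1).le
      have h5 : (Real.sqrt n)⁻¹ * (n : ℝ) ^ (-σ) = (n : ℝ) ^ (1 / 2 - σ) * (n : ℝ)⁻¹ := by
        rw [Real.sqrt_eq_rpow, ← Real.rpow_neg hn0.le, ← Real.rpow_neg_one (n : ℝ), ← Real.rpow_add hn0, ← Real.rpow_add hn0]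
        congr 1; ring
      have h6 : (n : ℝ) ^ (1 / 2 - σ) ≤ y ^ (1 / 2 - σ) :=
        Real.rpow_le_rpow_of_nonpos hy0 hyn (by linarith)
      calc _ = L * (n : ℝ) ^ (-σ) + 5 * Real.sqrt D * ((Real.sqrt n)⁻¹ * (n : ℝ) ^ (-σ)) := by ring
        _ ≤ L * (X ^ (1 - σ) * (n : ℝ)⁻¹) + 5 * Real.sqrt D * (y ^ (1 / 2 - σ) * (n : ℝ)⁻¹) := by
          rw [h5]; gcongr
        _ = _ := by ring
    refine (Finset.sum_le_sum this).trans ?_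
    rw [← Finset.mul_sum]
    gcongr
  calc _ ≤ _ := add_le_add h2 h3
    _ = _ := by ring

lemma trivial_sum (c : ℕ → ℝ) (hc1 : ∀ n, |c n| ≤ 1) {y : ℝ} (hy : 1 ≤ y) :
    ∑ n ∈ Finset.Ioc 0 ⌊y⌋₊, rr c n * (n : ℝ)⁻¹ ≤ (1 + Real.log y) ^ 2 := by
  have hy0 : 0 < y := by linarith
  have h0 := sum_inv_le hy
  have hI : 0 ≤ ∑ n ∈ Finset.Ioc 0 ⌊y⌋₊, (n : ℝ)⁻¹ := Finset.sum_nonneg fun _ _ => by positivity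
  have h1 : ∑ n ∈ Finset.Ioc 0 ⌊y⌋₊, rr c n * (n : ℝ)⁻¹ ≤
      ∑ n ∈ Finset.Ioc 0 ⌊y⌋₊, ∑ p ∈ n.divisorsAntidiagonal, (p.1 : ℝ)⁻¹ * (p.2 : ℝ)⁻¹ := by
    refine Finset.sum_le_sum fun n hn => ?_
    unfold rr
    rw [Finset.sum_mul]
    refine Finset.sum_le_sum fun p hp => ?_
    rw [Nat.mem_divisorsAntidiagonal] at hp
    rw [← hp.1]
    push_cast
    rw [mul_inv]
    exact mul_le_of_le_one_left (by positivity) ((le_abs_self _).trans (hc1 _))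
  refine h1.trans ?_
  rw [hyper (fun a b : ℕ => (a : ℝ)⁻¹ * (b : ℝ)⁻¹) hy0.le hy0]
  have h2 : ∑ a ∈ Finset.Ioc 0 ⌊y / y⌋₊, ∑ b ∈ Finset.Ioc ⌊y⌋₊ ⌊y / a⌋₊, (a : ℝ)⁻¹ * (b : ℝ)⁻¹ = 0 := by
    rw [div_self hy0.ne']
    simp
  rw [h2, add_zero]
  calc _ ≤ ∑ b ∈ Finset.Ioc 0 ⌊y⌋₊, ∑ a ∈ Finset.Ioc 0 ⌊y⌋₊, (a : ℝ)⁻¹ * (b : ℝ)⁻¹ := by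
        refine Finset.sum_le_sum fun b hb => ?_
        refine Finset.sum_le_sum_of_subset_of_nonneg ?_ (fun _ _ _ => by positivity)
        refine Finset.Ioc_subset_Ioc_right (Nat.floor_le_floor ?_)
        simp at hb
        exact div_le_self hy0.le (by exact_mod_cast hb.1)
    _ = (∑ n ∈ Finset.Ioc 0 ⌊y⌋₊, (n : ℝ)⁻¹) ^ 2 := by
        rw [sq, Finset.sum_mul_sum, Finset.sum_comm]
    _ ≤ _ := by gcongr

lemma trivial_sum' (c : ℕ → ℝ) (hc1 : ∀ n, |c n| ≤ 1) (hr : ∀ n, 0 ≤ rr c n) {y σ : ℝ} (hy : 1 ≤ y) (hσ : σ ≤ 1) :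
    ∑ n ∈ Finset.Ioc 0 ⌊y⌋₊, rr c n * (n : ℝ) ^ (-σ) ≤ y ^ (1 - σ) * (1 + Real.log y) ^ 2 := by
  refine (Finset.sum_le_sum fun n hn => mul_le_mul_of_nonneg_left (pow_le_aux hσ hn) (hr n)).trans ?_
  calc _ = y ^ (1 - σ) * ∑ n ∈ Finset.Ioc 0 ⌊y⌋₊, rr c n * (n : ℝ)⁻¹ := by
        rw [Finset.mul_sum]; exact Finset.sum_congr rfl fun _ _ => by ring
    _ ≤ _ := mul_le_mul_of_nonneg_left (trivial_sum c hc1 hy) (by positivity)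

lemma arith_exists (c : ℕ → ℝ) (h0 : c 0 = 0) (h1 : c 1 = 1) (hm : ∀ m n, c (m * n) = c m * c n)
    (hv : ∀ n, c n = 0 ∨ c n = 1 ∨ c n = -1) :
    ∃ h : ℕ → ℝ, (∀ n, |h n| ≤ rr c n) ∧
      ∀ n, ∑ p ∈ n.divisorsAntidiagonal, rr c p.1 * h p.2 = if n = 1 then 1 else 0 := by
  set cA : ArithmeticFunction ℝ := ⟨c, h0⟩ with hcA
  have hcAv : ∀ n, cA n = c n := fun n => rfl
  have cAm : cA.IsMultiplicative := ⟨h1, fun {m n} _ => hm m n⟩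
  set mu : ArithmeticFunction ℝ := ((ArithmeticFunction.moebius : ArithmeticFunction ℤ) : ArithmeticFunction ℝ) with hmu
  set ze : ArithmeticFunction ℝ := ((ArithmeticFunction.zeta : ArithmeticFunction ℕ) : ArithmeticFunction ℝ) with hze
  have mum : mu.IsMultiplicative := ArithmeticFunction.isMultiplicative_moebius.intCast
  have zem : ze.IsMultiplicative := ArithmeticFunction.isMultiplicative_zeta.natCast
  have hmz : ze * mu = 1 := ArithmeticFunction.coe_zeta_mul_coe_moebius
  set r : ArithmeticFunction ℝ := ze * cA with hr
  set g : ArithmeticFunction ℝ := mu.pmul cA with hg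
  set h : ArithmeticFunction ℝ := mu * g with hh
  have rm : r.IsMultiplicative := zem.mul cAm
  have gm : g.IsMultiplicative := mum.pmul cAm
  have hhm : h.IsMultiplicative := mum.mul gm
  have hrr : ∀ n, rr c n = r n := by
    intro n
    rw [hr, ArithmeticFunction.mul_apply, rr]
    refine Finset.sum_congr rfl fun p hp => ?_
    rw [Nat.mem_divisorsAntidiagonal] at hp
    have : p.1 ≠ 0 := by
      intro h; apply hp.2; rw [← hp.1, h, zero_mul]
    simp [hze, ArithmeticFunction.natCoe_apply, ArithmeticFunction.zeta_apply, this, hcAv]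
  have hgc : cA * g = 1 := by
    ext n
    have e : (cA * g) n = c n * (ze * mu) n := by
      rw [ArithmeticFunction.mul_apply, ArithmeticFunction.mul_apply, Finset.mul_sum]
      refine Finset.sum_congr rfl fun p hp => ?_
      rw [Nat.mem_divisorsAntidiagonal] at hp
      have : p.1 ≠ 0 := by
        intro h; apply hp.2; rw [← hp.1, h, zero_mul]
      rw [← hp.1, hm]
      simp [hg, hze, ArithmeticFunction.natCoe_apply, ArithmeticFunction.zeta_apply, this, hcAv]
      ring
    rw [e, hmz, ArithmeticFunction.one_apply]
    split_ifs with hn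
    · rw [hn, h1]; norm_num
    · simp
  have hrh : r * h = 1 := by
    calc r * h = (ze * mu) * (cA * g) := by rw [hr, hh]; ring
      _ = 1 := by rw [hmz, hgc, one_mul]
  have hcp : ∀ p k : ℕ, c (p ^ k) = c p ^ k := by
    intro p k
    induction k with
    | zero => simp [h1]
    | succ k ih => rw [pow_succ, hm, ih, pow_succ]
  have rpp : ∀ p k : ℕ, p.Prime → r (p ^ k) = ∑ j ∈ Finset.range (k + 1), c p ^ j := by
    intro p k hp
    rw [hr, ArithmeticFunction.coe_zeta_mul_apply, Nat.sum_divisors_prime_pow hp]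
    exact Finset.sum_congr rfl fun j _ => hcp p j
  have rpp0 : ∀ p k : ℕ, p.Prime → 0 ≤ r (p ^ k) := by
    intro p k hp
    rw [rpp p k hp]
    rcases hv p with h | h | h
    · rw [h]; exact Finset.sum_nonneg fun j _ => by positivity
    · rw [h]; exact Finset.sum_nonneg fun j _ => by positivity
    · rw [h, neg_one_geom_sum]; split_ifs <;> norm_num
  have mupp : ∀ p k : ℕ, p.Prime → 2 ≤ k → mu (p ^ k) = 0 := by
    intro p k hp hk
    have : (ArithmeticFunction.moebius (p ^ k)) = 0 := by
      rw [ArithmeticFunction.moebius_apply_prime_pow hp (by omega), if_neg (by omega)]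
    simp [hmu, ArithmeticFunction.intCoe_apply, this]
  have mup : ∀ p : ℕ, p.Prime → mu p = -1 := by
    intro p hp
    simp [hmu, ArithmeticFunction.intCoe_apply, ArithmeticFunction.moebius_apply_prime hp]
  have hpp : ∀ p k : ℕ, p.Prime → |h (p ^ k)| ≤ r (p ^ k) := by
    intro p k hp
    have e : h (p ^ k) = ∑ i ∈ Finset.range (k + 1), mu (p ^ i) * g (p ^ (k - i)) := by
      rw [hh, ArithmeticFunction.mul_apply, Nat.sum_divisorsAntidiagonal (fun a b => mu a * g b),
        Nat.sum_divisors_prime_pow hp]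
      refine Finset.sum_congr rfl fun i hi => ?_
      rw [Nat.pow_div (by simp at hi; omega) hp.pos]
    have gpp : ∀ k, g (p ^ k) = mu (p ^ k) * c (p ^ k) := fun k => rfl
    match k with
    | 0 => simp [hhm.1, rm.1]
    | 1 =>
      rw [e, rpp p 1 hp]
      simp [Finset.sum_range_succ, gpp, mup p hp, mum.1, h1]
      rcases hv p with h | h | h <;> rw [h] <;> norm_num
    | 2 =>
      rw [e, rpp p 2 hp]
      simp [Finset.sum_range_succ, gpp, mup p hp, mum.1, h1, mupp p 2 hp le_rfl]
      rcases hv p with h | h | h <;> rw [h] <;> norm_num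
    | k + 3 =>
      have : h (p ^ (k + 3)) = 0 := by
        rw [e]
        refine Finset.sum_eq_zero fun i hi => ?_
        rcases le_or_gt 2 i with h2 | h2
        · rw [mupp p i hp h2, zero_mul]
        · rw [gpp, mupp p (k + 3 - i) hp (by omega)]; ring
      rw [this, abs_zero]
      exact rpp0 p _ hp
  refine ⟨h, ?_, ?_⟩
  · intro n
    rw [hrr]
    rcases eq_or_ne n 0 with rfl | hn
    · simp
    rw [hhm.multiplicative_factorization _ hn, rm.multiplicative_factorization _ hn]
    unfold Finsupp.prod
    rw [Finset.abs_prod]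
    refine Finset.prod_le_prod (fun _ _ => abs_nonneg _) fun p hp => ?_
    exact hpp p _ (Nat.prime_of_mem_primeFactors (by simpa using hp))
  · intro n
    have : (r * h) n = if n = 1 then 1 else 0 := by rw [hrh, ArithmeticFunction.one_apply]
    rw [← this, ArithmeticFunction.mul_apply]
    exact Finset.sum_congr rfl fun p _ => by rw [hrr]

lemma char_sum {D : ℕ} [NeZero D] (χ : DirichletCharacter ℂ D) (hχ : χ ≠ 1) (h0 : χ 0 = 0) (N : ℕ) :
    ‖∑ n ∈ Finset.Ioc 0 N, χ (n : ZMod D)‖ ≤ D := by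
  have hD : 0 < D := Nat.pos_of_ne_zero (NeZero.ne D)
  have e0 : ∑ n ∈ Finset.Ioc 0 N, χ (n : ZMod D) = ∑ n ∈ Finset.range (N + 1), χ (n : ZMod D) := by
    rw [Finset.sum_range_succ']
    simp only [Nat.cast_zero, h0, add_zero]
    rw [Finset.range_eq_Ico, Finset.sum_Ico_add' (fun n : ℕ => χ (n : ZMod D)) 0 N 1]
    refine Finset.sum_congr ?_ fun _ _ => rfl
    ext; simp; omega
  have hfull : ∑ n ∈ Finset.range D, χ (n : ZMod D) = 0 := by
    rw [← MulChar.sum_eq_zero_of_ne_one hχ]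
    refine Finset.sum_nbij' (fun n => (n : ZMod D)) (fun a => a.val) ?_ ?_ ?_ ?_ ?_
    · simp
    · intro a _; simpa using ZMod.val_lt a
    · intro n hn; simp at hn; exact ZMod.val_cast_of_lt hn
    · intro a _; simp
    · simp
  have hper : ∀ q r : ℕ, ∑ n ∈ Finset.range (D * q + r), χ (n : ZMod D) = ∑ n ∈ Finset.range r, χ (n : ZMod D) := by
    intro q r
    induction q with
    | zero => simp
    | succ q ih =>
      rw [show D * (q + 1) + r = D + (D * q + r) by ring, Finset.sum_range_add, hfull, zero_add, ← ih]
      refine Finset.sum_congr rfl fun n _ => ?_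
      simp
  rw [e0, ← Nat.div_add_mod (N + 1) D, hper]
  calc _ ≤ ∑ n ∈ Finset.range ((N + 1) % D), ‖χ (n : ZMod D)‖ := norm_sum_le _ _
    _ ≤ ∑ n ∈ Finset.range ((N + 1) % D), (1 : ℝ) := Finset.sum_le_sum fun n _ => DirichletCharacter.norm_le_one χ _
    _ = ((N + 1) % D : ℕ) := by simp
    _ ≤ D := by exact_mod_cast (Nat.mod_lt _ hD).le

lemma char_L {D : ℕ} [NeZero D] (χ : DirichletCharacter ℂ D) (hχ : χ ≠ 1) (c : ℕ → ℝ)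
    (hcχ : ∀ n : ℕ, (c n : ℂ) = χ (n : ZMod D))
    (hc : ∀ N : ℕ, |∑ n ∈ Finset.Ioc 0 N, c n| ≤ D) (B : ℝ) (hB : 0 < B) :
    |∑ b ∈ Finset.Ioc 0 ⌊B⌋₊, c b / b - (DirichletCharacter.LFunction χ 1).re| ≤ 2 * D / B := by
  set m := ⌊B⌋₊ with hm
  have key : ∀ s : ℝ, 1 < s → ‖DirichletCharacter.LFunction χ s - ∑ n ∈ Finset.Ioc 0 m, (c n : ℂ) * (n : ℂ) ^ (-(s : ℂ))‖
      ≤ D * (1 + 1) * ((m + 1 : ℕ) : ℝ) ^ (-s) := by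
    intro s hs
    have hs' : 1 < (s : ℂ).re := by simpa using hs
    rw [DirichletCharacter.LFunction_eq_LSeries χ hs']
    have hsum : LSeriesSummable (fun n : ℕ => χ (n : ZMod D)) s := ZMod.LSeriesSummable_of_one_lt_re (fun a => χ a) hs'
    have ht := hsum.hasSum.tendsto_sum_nat
    have ht2 := (Filter.tendsto_add_atTop_iff_nat 1).2 ht
    have e : ∀ N, ∑ n ∈ Finset.range (N + 1), LSeries.term (fun n : ℕ => χ (n : ZMod D)) s n =
        ∑ n ∈ Finset.Ioc 0 N, (c n : ℂ) * (n : ℂ) ^ (-(s : ℂ)) := by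
      intro N
      rw [Finset.sum_range_succ', LSeries.term_zero, add_zero, Finset.range_eq_Ico,
        Finset.sum_Ico_add' (fun n : ℕ => LSeries.term (fun n : ℕ => χ (n : ZMod D)) s n) 0 N 1]
      refine Finset.sum_congr (by ext; simp; omega) fun n hn => ?_
      simp at hn
      rw [LSeries.term_of_ne_zero (by omega), hcχ, Complex.cpow_neg, div_eq_mul_inv]
    simp only [e] at ht2
    have ht3 := (ht2.sub_const (∑ n ∈ Finset.Ioc 0 m, (c n : ℂ) * (n : ℂ) ^ (-(s : ℂ)))).norm
    refine le_of_tendsto ht3 ?_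
    filter_upwards [Filter.eventually_ge_atTop m] with N hN
    rw [← Finset.sum_Ioc_consecutive _ (Nat.zero_le m) hN, add_sub_cancel_left]
    refine abel_tail c (fun n => (n : ℂ) ^ (-(s : ℂ))) (fun n => (n : ℝ) ^ (-s)) (by positivity) le_rfl hc
      (fun n hn => by positivity) (fun n hn => ?_) (fun n hn => ?_) m N
    · rw [← Complex.ofReal_natCast, aux_norm (by exact_mod_cast hn)]; simp
    · have hn0 : (0 : ℝ) < n := by exact_mod_cast hn
      have := aux_diff (s : ℂ) (by simp; linarith) (a := n) (b := ((n + 1 : ℕ) : ℝ)) hn0 (by push_cast; linarith)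
      have hs0 : 0 < s := by linarith
      simpa [abs_of_pos hs0, hs0.ne'] using this
  have hcont : Continuous (DirichletCharacter.LFunction χ) := (DirichletCharacter.differentiable_LFunction hχ).continuous
  have c1 : Continuous fun s : ℝ => ‖DirichletCharacter.LFunction χ s - ∑ n ∈ Finset.Ioc 0 m, (c n : ℂ) * (n : ℂ) ^ (-(s : ℂ))‖ := by
    refine ((hcont.comp Complex.continuous_ofReal).sub ?_).norm
    refine continuous_finsetSum _ fun n hn => ?_
    simp at hn
    have : (n : ℂ) ≠ 0 := by exact_mod_cast (by omega : n ≠ 0)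
    refine continuous_const.mul (Continuous.const_cpow (by fun_prop) (Or.inl this))
  have c2 : Continuous fun s : ℝ => (D : ℝ) * (1 + 1) * ((m + 1 : ℕ) : ℝ) ^ (-s) := by
    refine continuous_const.mul (Continuous.rpow continuous_const (by fun_prop) fun s => Or.inl (by positivity))
  have l1 := (c1.tendsto 1).mono_left (nhdsWithin_le_nhds (s := Set.Ioi 1))
  have l2 := (c2.tendsto 1).mono_left (nhdsWithin_le_nhds (s := Set.Ioi 1))
  have h := le_of_tendsto_of_tendsto l1 l2 (by
    filter_upwards [self_mem_nhdsWithin] with s hs using key s hs)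
  have h2 := (Complex.abs_re_le_norm _).trans h
  have e3 : (DirichletCharacter.LFunction χ ((1 : ℝ) : ℂ) - ∑ n ∈ Finset.Ioc 0 m, (c n : ℂ) * (n : ℂ) ^ (-((1 : ℝ) : ℂ))).re =
      -(∑ b ∈ Finset.Ioc 0 m, c b / b - (DirichletCharacter.LFunction χ 1).re) := by
    have : ∑ n ∈ Finset.Ioc 0 m, (c n : ℂ) * (n : ℂ) ^ (-((1 : ℝ) : ℂ)) = ((∑ b ∈ Finset.Ioc 0 m, c b / b : ℝ) : ℂ) := by
      push_cast
      refine Finset.sum_congr rfl fun n _ => ?_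
      rw [Complex.cpow_neg_one, div_eq_mul_inv]
    rw [this]
    simp
  rw [e3, abs_neg] at h2
  refine h2.trans ?_
  rw [Real.rpow_neg_one, div_eq_mul_inv]
  have hlt : B ≤ ((m + 1 : ℕ) : ℝ) := by push_cast; exact (Nat.lt_floor_add_one B).le
  have : (((m + 1 : ℕ) : ℝ))⁻¹ ≤ B⁻¹ := by gcongr
  calc _ ≤ (D : ℝ) * (1 + 1) * B⁻¹ := by gcongr
    _ = _ := by ring

lemma char_facts {D : ℕ} [NeZero D] (χ : DirichletCharacter ℂ D) (hreal : ∀ n : ℕ, (χ n).im = 0)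
    (hprim : χ.IsPrimitive) (hD : 1 < D) :
    ∃ c : ℕ → ℝ, c 0 = 0 ∧ c 1 = 1 ∧ (∀ m n, c (m * n) = c m * c n) ∧
      (∀ n, c n = 0 ∨ c n = 1 ∨ c n = -1) ∧ (∀ N : ℕ, |∑ n ∈ Finset.Ioc 0 N, c n| ≤ D) ∧
      (∀ B : ℝ, 0 < B → |∑ b ∈ Finset.Ioc 0 ⌊B⌋₊, c b / b - (DirichletCharacter.LFunction χ 1).re| ≤ 2 * D / B) := by
  have hχ : χ ≠ 1 := by
    rintro rfl
    rw [DirichletCharacter.IsPrimitive, DirichletCharacter.conductor_one] at hprim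
    omega
  have : Fact (1 < D) := ⟨hD⟩
  have h0 : χ 0 = 0 := MulChar.map_zero χ
  have hcχ : ∀ n : ℕ, (((χ (n : ZMod D)).re : ℝ) : ℂ) = χ (n : ZMod D) := by
    intro n
    apply Complex.ext <;> simp [hreal n]
  have hc : ∀ N : ℕ, |∑ n ∈ Finset.Ioc 0 N, (χ (n : ZMod D)).re| ≤ D := by
    intro N
    rw [← Complex.re_sum]
    exact (Complex.abs_re_le_norm _).trans (char_sum χ hχ h0 N)
  refine ⟨fun n => (χ (n : ZMod D)).re, by simp [h0], by simp, ?_, ?_, hc, fun B hB => char_L χ hχ _ hcχ hc B hB⟩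
  · intro m n
    simp [hreal]
  · intro n
    by_cases hu : IsUnit (n : ZMod D)
    · right
      have h1 : ‖χ (n : ZMod D)‖ = 1 := by
        obtain ⟨u, hu⟩ := hu
        rw [← hu]; exact DirichletCharacter.unit_norm_eq_one χ u
      rw [← hcχ, Complex.norm_real, Real.norm_eq_abs] at h1
      exact (abs_eq (by norm_num)).1 h1
    · left
      show (χ (n : ZMod D)).re = 0
      rw [MulChar.map_nonunit χ hu]; simp

lemma one_sub_bound (ρ : ℂ) (hz : riemannZeta ρ = 0) (hβ : 7 / 8 < ρ.re) (hβ1 : ρ.re < 1) :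
    1 / ‖1 - ρ‖ ≤ 7 := by
  have hn : ρ.re ≤ ‖ρ‖ := (le_abs_self _).trans (Complex.abs_re_le_norm ρ)
  have h := aZ_bound ρ (by linarith) hβ1 hz (u := 1) le_rfl
  simp at h
  have hs1 : (1 - ρ : ℂ) ≠ 0 := by
    intro h
    have := congrArg Complex.re h
    simp at this; linarith
  have hn1 : 0 < ‖1 - ρ‖ := norm_pos_iff.mpr hs1
  by_contra hc
  push Not at hc
  have h1 : ‖1 - ρ‖ < 1 / 7 := by
    rw [lt_div_iff₀ hn1] at hc; linarith
  have h2 : ‖ρ‖ < 8 / 7 := by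
    have : ‖ρ‖ ≤ ‖(1 : ℂ)‖ + ‖1 - ρ‖ := by
      have := norm_sub_le (1 : ℂ) (1 - ρ)
      simpa using this
    rw [norm_one] at this; linarith
  have h3 : ‖ρ‖ / ρ.re ≤ 64 / 49 := by
    rw [div_le_iff₀ (by linarith)]; linarith
  have h4 : ‖(1 - ρ)⁻¹‖ ≤ ‖(1 : ℂ)‖ + ‖1 - (1 - ρ)⁻¹‖ := by
    have := norm_sub_le (1 : ℂ) (1 - (1 - ρ)⁻¹)
    simpa using this
  rw [norm_inv, norm_one] at h4
  rw [one_div] at hc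
  linarith

lemma R_bound (c : ℕ → ℝ) {D : ℝ} (hD : 1 ≤ D) (hc1 : ∀ n, |c n| ≤ 1)
    (hc : ∀ N : ℕ, |∑ n ∈ Finset.Ioc 0 N, c n| ≤ D) (L : ℝ) (hL0 : 0 ≤ L)
    (hL : ∀ B : ℝ, 0 < B → |∑ b ∈ Finset.Ioc 0 ⌊B⌋₊, c b / b - L| ≤ 2 * D / B)
    (ρ : ℂ) (hz : riemannZeta ρ = 0) (hβ : 7 / 8 < ρ.re) (hβ1 : ρ.re < 1) {y : ℝ} (hy : D ≤ y) :
    ‖∑ n ∈ Finset.Ioc 0 ⌊y⌋₊, (rr c n : ℂ) * (n : ℂ) ^ (-ρ)‖ ≤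
      7 * L * y ^ (1 - ρ.re) + ‖ρ‖ * Real.sqrt D * (23 + 16 / 7 * Real.log y) * y ^ (1 / 2 - ρ.re) := by
  have hn : ρ.re ≤ ‖ρ‖ := (le_abs_self _).trans (Complex.abs_re_le_norm ρ)
  have hb0 : 0 < ρ.re := by linarith
  have hy0 : 0 < y := by linarith
  have hK1 : 1 ≤ ‖ρ‖ / ρ.re := (one_le_div hb0).2 hn
  have hK2 : ‖ρ‖ / ρ.re ≤ 8 / 7 * ‖ρ‖ := by
    rw [div_le_iff₀ hb0]; nlinarith
  have hlog : 0 ≤ Real.log y := Real.log_nonneg (by linarith)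
  have hA1 : 1 ≤ Real.sqrt (y / D) := Real.one_le_sqrt.2 ((one_le_div (by linarith)).2 hy)
  have hA2 : Real.sqrt (y / D) ≤ y := by
    rw [Real.sqrt_le_left hy0.le]
    have : y / D ≤ y := div_le_self hy0.le hD
    nlinarith
  have h := main_H c hD hc1 hc L hL ρ hβ1 hb0.le (C := 2 * (‖ρ‖ / ρ.re + 1)) (K := ‖ρ‖ / ρ.re)
    (W := 1 + Real.log y) (by positivity) hK1 (fun u hu => aZ_bound ρ hb0 hβ1 hz hu)
    (fun n hn => by
      have hn0 : (0 : ℝ) < n := by exact_mod_cast hn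
      have := aux_diff ρ hb0 (a := n) (b := ((n + 1 : ℕ) : ℝ)) hn0 (by push_cast; linarith)
      simpa using this) hy
    (by
      refine (sum_pow_le hβ1.le hA1).trans ?_
      rw [mul_comm]
      gcongr)
  have h7 := one_sub_bound ρ hz hβ hβ1
  have hmain : ‖(L : ℂ) * ((y : ℂ) ^ (1 - ρ) / (1 - ρ))‖ ≤ 7 * L * y ^ (1 - ρ.re) := by
    rw [norm_mul, norm_div, aux_norm hy0, Complex.norm_real, Real.norm_eq_abs, abs_of_nonneg hL0]
    simp only [Complex.sub_re, Complex.one_re]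
    have : 0 ≤ L * y ^ (1 - ρ.re) := by positivity
    calc _ = L * y ^ (1 - ρ.re) * (1 / ‖1 - ρ‖) := by ring
      _ ≤ L * y ^ (1 - ρ.re) * 7 := by gcongr
      _ = _ := by ring
  have htri := norm_le_norm_add_norm_sub' (∑ n ∈ Finset.Ioc 0 ⌊y⌋₊, (rr c n : ℂ) * (n : ℂ) ^ (-ρ)) ((L : ℂ) * ((y : ℂ) ^ (1 - ρ) / (1 - ρ)))
  have hin : 2 * (‖ρ‖ / ρ.re + 1) + 2 / ‖1 - ρ‖ + (1 + ‖ρ‖ / ρ.re) * (1 + Real.log y) ≤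
      ‖ρ‖ * (23 + 16 / 7 * Real.log y) := by
    have e : 2 / ‖1 - ρ‖ = 2 * (1 / ‖1 - ρ‖) := by ring
    have e1 : 1 + ‖ρ‖ / ρ.re ≤ 16 / 7 * ‖ρ‖ := by linarith
    have e2 : (1 + ‖ρ‖ / ρ.re) * (1 + Real.log y) ≤ 16 / 7 * ‖ρ‖ * (1 + Real.log y) := by gcongr
    rw [e]
    nlinarith
  have : Real.sqrt D * y ^ (1 / 2 - ρ.re) * (2 * (‖ρ‖ / ρ.re + 1) + 2 / ‖1 - ρ‖ + (1 + ‖ρ‖ / ρ.re) * (1 + Real.log y)) ≤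
      Real.sqrt D * y ^ (1 / 2 - ρ.re) * (‖ρ‖ * (23 + 16 / 7 * Real.log y)) := by gcongr
  calc _ ≤ _ := htri
    _ ≤ 7 * L * y ^ (1 - ρ.re) + Real.sqrt D * y ^ (1 / 2 - ρ.re) * (‖ρ‖ * (23 + 16 / 7 * Real.log y)) :=
      add_le_add hmain (h.trans this)
    _ = _ := by ring

lemma T1_bound (c h : ℕ → ℝ) {D L : ℝ} (hD : 1 ≤ D) (hL0 : 0 ≤ L) (hc1 : ∀ n, |c n| ≤ 1)
    (hh : ∀ n, |h n| ≤ rr c n)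
    (hS : ∀ y : ℝ, D ≤ y → |∑ n ∈ Finset.Ioc 0 ⌊y⌋₊, rr c n - L * y| ≤ 5 * Real.sqrt D * Real.sqrt y)
    (ρ : ℂ) {x z M : ℝ} (hM : 0 ≤ M)
    (hR : ∀ y : ℝ, D ≤ y → y ≤ x → ‖∑ n ∈ Finset.Ioc 0 ⌊y⌋₊, (rr c n : ℂ) * (n : ℂ) ^ (-ρ)‖ ≤
      7 * L * y ^ (1 - ρ.re) + M * y ^ (1 / 2 - ρ.re))
    (hz : D ≤ z) (hxz : D ≤ x / z) :
    ‖∑ b ∈ Finset.Ioc 0 ⌊z⌋₊, ∑ a ∈ Finset.Ioc 0 ⌊x / b⌋₊, (rr c a : ℂ) * h b * ((a : ℂ) * b) ^ (-ρ)‖ ≤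
      7 * L * x ^ (1 - ρ.re) * (1 + Real.log z) ^ 2 + M * x ^ (1 / 2 - ρ.re) *
        (Real.sqrt D * (1 + Real.log D) ^ 2 + (2 + Real.log z) * (L * Real.sqrt z + 5 * Real.sqrt D)) := by
  have hr : ∀ n, 0 ≤ rr c n := fun n => (abs_nonneg _).trans (hh n)
  have hz0 : 0 < z := by linarith
  have hx0 : 0 < x := by
    have : 0 < x / z := by linarith
    exact (div_pos_iff_of_pos_right hz0).1 this
  have hb : ∀ b ∈ Finset.Ioc 0 ⌊z⌋₊, ‖∑ a ∈ Finset.Ioc 0 ⌊x / b⌋₊, (rr c a : ℂ) * h b * ((a : ℂ) * b) ^ (-ρ)‖ ≤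
      7 * L * x ^ (1 - ρ.re) * (rr c b * (b : ℝ)⁻¹) + M * x ^ (1 / 2 - ρ.re) * (rr c b * (b : ℝ) ^ (-(1 / 2) : ℝ)) := by
    intro b hb
    simp at hb
    have hb0 : (0 : ℝ) < b := by exact_mod_cast hb.1
    have hb1 : (1 : ℝ) ≤ b := by exact_mod_cast hb.1
    have hbz : (b : ℝ) ≤ z := (Nat.le_floor_iff hz0.le).1 hb.2
    have e : ∑ a ∈ Finset.Ioc 0 ⌊x / b⌋₊, (rr c a : ℂ) * h b * ((a : ℂ) * b) ^ (-ρ) =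
        (h b : ℂ) * (b : ℂ) ^ (-ρ) * ∑ a ∈ Finset.Ioc 0 ⌊x / b⌋₊, (rr c a : ℂ) * (a : ℂ) ^ (-ρ) := by
      rw [Finset.mul_sum]
      refine Finset.sum_congr rfl fun a _ => ?_
      rw [Complex.natCast_mul_natCast_cpow]; ring
    have hRb := hR (x / b) (hxz.trans (by gcongr)) (div_le_self hx0.le hb1)
    rw [e, norm_mul, norm_mul, Complex.norm_real, Real.norm_eq_abs, ← Complex.ofReal_natCast, aux_norm hb0, Complex.neg_re]
    calc _ ≤ rr c b * (b : ℝ) ^ (-ρ.re) * (7 * L * (x / b) ^ (1 - ρ.re) + M * (x / b) ^ (1 / 2 - ρ.re)) := by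
          have := hh b
          have := hr b
          gcongr
      _ = _ := by
        rw [Real.div_rpow hx0.le hb0.le, Real.div_rpow hx0.le hb0.le]
        have e1 : (b : ℝ) ^ (-ρ.re) / (b : ℝ) ^ (1 - ρ.re) = (b : ℝ)⁻¹ := by
          rw [← Real.rpow_sub hb0, ← Real.rpow_neg_one]; congr 1; ring
        have e2 : (b : ℝ) ^ (-ρ.re) / (b : ℝ) ^ (1 / 2 - ρ.re) = (b : ℝ) ^ (-(1 / 2) : ℝ) := by
          rw [← Real.rpow_sub hb0]; congr 1; ring
        rw [← e1, ← e2]; ring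
  refine (norm_sum_le _ _).trans ((Finset.sum_le_sum hb).trans ?_)
  rw [Finset.sum_add_distrib, ← Finset.mul_sum, ← Finset.mul_sum]
  have h1 := trivial_sum c hc1 (y := z) (by linarith)
  have h2 : ∑ n ∈ Finset.Ioc 0 ⌊z⌋₊, rr c n * (n : ℝ) ^ (-(1 / 2) : ℝ) ≤
      Real.sqrt D * (1 + Real.log D) ^ 2 + (2 + Real.log z) * (L * Real.sqrt z + 5 * Real.sqrt D) := by
    rw [← Finset.sum_Ioc_consecutive _ (Nat.zero_le ⌊D⌋₊) (Nat.floor_le_floor hz)]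
    have a1 := trivial_sum' c hc1 hr (y := D) (σ := 1 / 2) hD (by norm_num)
    have a2 := weighted (rr c) hD hL0 hr hS (σ := 1 / 2) le_rfl (by norm_num) le_rfl hz
    rw [show (1 : ℝ) - 1 / 2 = 1 / 2 by norm_num, ← Real.sqrt_eq_rpow] at a1 a2
    rw [sub_self, Real.rpow_zero, mul_one] at a2
    exact add_le_add a1 a2
  gcongr

lemma T2_bound (c h : ℕ → ℝ) {D L : ℝ} (hD : 1 ≤ D) (hL0 : 0 ≤ L) (hc1 : ∀ n, |c n| ≤ 1)
    (hh : ∀ n, |h n| ≤ rr c n)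
    (hS : ∀ y : ℝ, D ≤ y → |∑ n ∈ Finset.Ioc 0 ⌊y⌋₊, rr c n - L * y| ≤ 5 * Real.sqrt D * Real.sqrt y)
    (ρ : ℂ) (hβ : 7 / 8 < ρ.re) (hβ1 : ρ.re < 1) {x z : ℝ}
    (hz : D ≤ z) (hxz : D ≤ x / z) :
    ‖∑ a ∈ Finset.Ioc 0 ⌊x / z⌋₊, ∑ b ∈ Finset.Ioc ⌊z⌋₊ ⌊x / a⌋₊, (rr c a : ℂ) * h b * ((a : ℂ) * b) ^ (-ρ)‖ ≤
      (2 + Real.log x) * (1 + Real.log (x / z)) ^ 2 * (L * x ^ (1 - ρ.re) +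
        5 * Real.sqrt D * z ^ (1 / 2 - ρ.re) * (x / z) ^ (1 - ρ.re)) := by
  have hr : ∀ n, 0 ≤ rr c n := fun n => (abs_nonneg _).trans (hh n)
  have hz0 : 0 < z := by linarith
  have hx0 : 0 < x := by
    have : 0 < x / z := by linarith
    exact (div_pos_iff_of_pos_right hz0).1 this
  have hzx : z ≤ x := by
    have : 1 ≤ x / z := by linarith
    exact (one_le_div hz0).1 this
  have hlx : 0 ≤ Real.log x := Real.log_nonneg (by linarith)
  have ha : ∀ a ∈ Finset.Ioc 0 ⌊x / z⌋₊, ‖∑ b ∈ Finset.Ioc ⌊z⌋₊ ⌊x / a⌋₊, (rr c a : ℂ) * h b * ((a : ℂ) * b) ^ (-ρ)‖ ≤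
      (2 + Real.log x) * (L * x ^ (1 - ρ.re)) * (rr c a * (a : ℝ)⁻¹) +
      (2 + Real.log x) * (5 * Real.sqrt D * z ^ (1 / 2 - ρ.re)) * (rr c a * (a : ℝ) ^ (-ρ.re)) := by
    intro a ha
    simp at ha
    have ha0 : (0 : ℝ) < a := by exact_mod_cast ha.1
    have ha1 : (1 : ℝ) ≤ a := by exact_mod_cast ha.1
    have haz : (a : ℝ) ≤ x / z := (Nat.le_floor_iff (by linarith)).1 ha.2
    have hzxa : z ≤ x / a := by
      rw [le_div_iff₀ ha0]; rw [le_div_iff₀ hz0] at haz; linarith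
    have hra := hr a
    have hw := weighted (rr c) hD hL0 hr hS (σ := ρ.re) (by linarith) hβ1.le hz hzxa
    have hlog : Real.log (x / a) ≤ Real.log x :=
      Real.log_le_log (by positivity) (div_le_self hx0.le ha1)
    calc _ ≤ ∑ b ∈ Finset.Ioc ⌊z⌋₊ ⌊x / a⌋₊, rr c a * (a : ℝ) ^ (-ρ.re) * (rr c b * (b : ℝ) ^ (-ρ.re)) := by
          refine (norm_sum_le _ _).trans (Finset.sum_le_sum fun b hb => ?_)
          simp at hb
          have hb0 : (0 : ℝ) < b := by exact_mod_cast (by omega : 0 < b)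
          rw [Complex.natCast_mul_natCast_cpow, norm_mul, norm_mul, norm_mul, Complex.norm_real, Complex.norm_real, Real.norm_eq_abs,
            Real.norm_eq_abs, ← Complex.ofReal_natCast a, ← Complex.ofReal_natCast b, aux_norm hb0, aux_norm ha0, Complex.neg_re, abs_of_nonneg hra]
          have := hh b
          calc _ ≤ rr c a * rr c b * ((a : ℝ) ^ (-ρ.re) * (b : ℝ) ^ (-ρ.re)) := by gcongr
            _ = _ := by ring
      _ = rr c a * (a : ℝ) ^ (-ρ.re) * ∑ b ∈ Finset.Ioc ⌊z⌋₊ ⌊x / a⌋₊, rr c b * (b : ℝ) ^ (-ρ.re) := by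
          rw [Finset.mul_sum]
      _ ≤ rr c a * (a : ℝ) ^ (-ρ.re) * ((2 + Real.log x) * (L * (x / a) ^ (1 - ρ.re) + 5 * Real.sqrt D * z ^ (1 / 2 - ρ.re))) := by
          refine mul_le_mul_of_nonneg_left (hw.trans ?_) (by positivity)
          gcongr
      _ = _ := by
        rw [Real.div_rpow hx0.le ha0.le]
        have e1 : (a : ℝ) ^ (-ρ.re) / (a : ℝ) ^ (1 - ρ.re) = (a : ℝ)⁻¹ := by
          rw [← Real.rpow_sub ha0, ← Real.rpow_neg_one]; congr 1; ring
        rw [← e1]; ring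
  refine (norm_sum_le _ _).trans ((Finset.sum_le_sum ha).trans ?_)
  rw [Finset.sum_add_distrib, ← Finset.mul_sum, ← Finset.mul_sum]
  have h1 := trivial_sum c hc1 (y := x / z) (by linarith)
  have h2 := trivial_sum' c hc1 hr (y := x / z) (σ := ρ.re) (by linarith) hβ1.le
  calc _ ≤ (2 + Real.log x) * (L * x ^ (1 - ρ.re)) * (1 + Real.log (x / z)) ^ 2 +
      (2 + Real.log x) * (5 * Real.sqrt D * z ^ (1 / 2 - ρ.re)) * ((x / z) ^ (1 - ρ.re) * (1 + Real.log (x / z)) ^ 2) := by gcongr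
    _ = _ := by ring

lemma core (c h : ℕ → ℝ) {D L : ℝ} (hD : 1 ≤ D) (hL0 : 0 ≤ L) (hc1 : ∀ n, |c n| ≤ 1)
    (hc : ∀ N : ℕ, |∑ n ∈ Finset.Ioc 0 N, c n| ≤ D)
    (hL : ∀ B : ℝ, 0 < B → |∑ b ∈ Finset.Ioc 0 ⌊B⌋₊, c b / b - L| ≤ 2 * D / B)
    (hh : ∀ n, |h n| ≤ rr c n)
    (hinv : ∀ n, ∑ p ∈ n.divisorsAntidiagonal, rr c p.1 * h p.2 = if n = 1 then 1 else 0)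
    (ρ : ℂ) (hζ : riemannZeta ρ = 0) (hβ : 7 / 8 < ρ.re) (hβ1 : ρ.re < 1) {x z : ℝ}
    (hz : D ≤ z) (hxz : D ≤ x / z) :
    1 ≤ 7 * L * x ^ (1 - ρ.re) * (1 + Real.log z) ^ 2 +
      (‖ρ‖ * Real.sqrt D * (23 + 16 / 7 * Real.log x)) * x ^ (1 / 2 - ρ.re) *
        (Real.sqrt D * (1 + Real.log D) ^ 2 + (2 + Real.log z) * (L * Real.sqrt z + 5 * Real.sqrt D)) +
      (2 + Real.log x) * (1 + Real.log (x / z)) ^ 2 * (L * x ^ (1 - ρ.re) +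
        5 * Real.sqrt D * z ^ (1 / 2 - ρ.re) * (x / z) ^ (1 - ρ.re)) := by
  have hz0 : 0 < z := by linarith
  have hzx : z ≤ x := by
    have : 1 ≤ x / z := by linarith
    exact (one_le_div hz0).1 this
  have hx1 : 1 ≤ x := by linarith
  have hlx : 0 ≤ Real.log x := Real.log_nonneg hx1
  have hS : ∀ y : ℝ, D ≤ y → |∑ n ∈ Finset.Ioc 0 ⌊y⌋₊, rr c n - L * y| ≤ 5 * Real.sqrt D * Real.sqrt y :=
    fun y hy => S_bound c hD hc1 hc L hL hy
  have t1 := T1_bound c h hD hL0 hc1 hh hS ρ (x := x) (z := z) (M := ‖ρ‖ * Real.sqrt D * (23 + 16 / 7 * Real.log x))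
    (by positivity) (fun y hy hyx => by
      refine (R_bound c hD hc1 hc L hL0 hL ρ hζ hβ hβ1 hy).trans ?_
      have hy0 : 0 < y := by linarith
      have := Real.log_le_log hy0 hyx
      gcongr) hz hxz
  have t2 := T2_bound c h hD hL0 hc1 hh hS ρ hβ hβ1 hz hxz
  have e := hyper (fun a b : ℕ => (rr c a : ℂ) * h b * ((a : ℂ) * b) ^ (-ρ)) (y := x) (B := z) (by linarith) hz0
  have e1 : ∑ n ∈ Finset.Ioc 0 ⌊x⌋₊, ∑ p ∈ n.divisorsAntidiagonal, (rr c p.1 : ℂ) * h p.2 * ((p.1 : ℂ) * p.2) ^ (-ρ) = 1 := by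
    have : ∀ n ∈ Finset.Ioc 0 ⌊x⌋₊, ∑ p ∈ n.divisorsAntidiagonal, (rr c p.1 : ℂ) * h p.2 * ((p.1 : ℂ) * p.2) ^ (-ρ) =
        if n = 1 then 1 else 0 := by
      intro n _
      have h1 : ∑ p ∈ n.divisorsAntidiagonal, (rr c p.1 : ℂ) * h p.2 * ((p.1 : ℂ) * p.2) ^ (-ρ) =
          ((∑ p ∈ n.divisorsAntidiagonal, rr c p.1 * h p.2 : ℝ) : ℂ) * (n : ℂ) ^ (-ρ) := by
        push_cast
        rw [Finset.sum_mul]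
        refine Finset.sum_congr rfl fun p hp => ?_
        rw [Nat.mem_divisorsAntidiagonal] at hp
        rw [← hp.1]; push_cast; rfl
      rw [h1, hinv]
      split_ifs with hn
      · rw [hn]; simp
      · simp
    rw [Finset.sum_congr rfl this, Finset.sum_ite_eq' , if_pos]
    simp [Nat.one_le_floor_iff, hx1]
  rw [e1] at e
  have h1 : (1 : ℝ) = ‖(1 : ℂ)‖ := by simp
  refine h1.le.trans ?_
  rw [e]
  exact (norm_add_le _ _).trans (add_le_add t1 t2)

lemma log_cube {U : ℝ} (hU : 1 ≤ U) : Real.log U ^ 3 ≤ 11 * Real.sqrt U := by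
  have hU0 : 0 < U := by linarith
  set t := U ^ ((1 : ℝ) / 6) with ht
  have ht0 : 0 < t := by positivity
  have h1 : Real.log U = 6 * Real.log t := by
    rw [ht, Real.log_rpow hU0]; ring
  have h2 : Real.log t ≤ t / 2.7 := by
    have a := Real.log_le_sub_one_of_pos (show 0 < t / 2.7 by positivity)
    rw [Real.log_div ht0.ne' (by norm_num)] at a
    have b : Real.log 2.7 ≤ 1 := by
      rw [Real.log_le_iff_le_exp (by norm_num)]
      linarith [Real.exp_one_gt_d9]
    linarith
  have h3 : 0 ≤ Real.log U := Real.log_nonneg hU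
  have h4 : Real.log U ≤ 6 / 2.7 * t := by
    rw [h1]
    calc 6 * Real.log t ≤ 6 * (t / 2.7) := by gcongr
      _ = _ := by ring
  have h5 : t ^ 3 = Real.sqrt U := by
    rw [ht, ← Real.rpow_natCast, ← Real.rpow_mul hU0.le, Real.sqrt_eq_rpow]; norm_num
  calc _ ≤ (6 / 2.7 * t) ^ 3 := by gcongr
    _ = (6 / 2.7) ^ 3 * Real.sqrt U := by rw [mul_pow, h5]
    _ ≤ _ := by
      have := Real.sqrt_nonneg U
      gcongr; norm_num

lemma basic_facts {N D U : ℝ} (hN : 7 / 8 < N) (hD : 10 ^ 9 < D)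
    (hU : U = N * D ^ ((1 : ℝ) / 4) * Real.log D) :
    20 ≤ Real.log D ∧ 3097 ≤ U ∧ 8 ≤ Real.log U ∧ U ^ 4 = N ^ 4 * D * Real.log D ^ 4 ∧
    1 + Real.log D ≤ 4 * Real.log U ∧ 1 + Real.log (4 * N ^ 2 * D) ≤ 4 * Real.log U ∧
    D ≤ 4 * N ^ 2 * D ∧ D ≤ U ^ 12 / (4 * N ^ 2 * D) ∧
    N * D / U ^ 4 * 160000 ≤ 3 / 2 := by
  have hD0 : 0 < D := by linarith
  have he : Real.exp 1 < 2.7182818286 := Real.exp_one_lt_d9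
  have he0 := Real.exp_pos 1
  have hl : 20 ≤ Real.log D := by
    rw [Real.le_log_iff_exp_le hD0, show (20 : ℝ) = ((20 : ℕ) : ℝ) * 1 by norm_num, Real.exp_nat_mul]
    calc _ ≤ (2.7182818286 : ℝ) ^ 20 := by gcongr
      _ ≤ 10 ^ 9 := by norm_num
      _ ≤ D := hD.le
  set ℓ := Real.log D with hℓ
  set q := D ^ ((1 : ℝ) / 4) with hq
  have hq0 : 0 < q := by positivity
  have hq4 : q ^ 4 = D := by
    rw [hq, ← Real.rpow_natCast, ← Real.rpow_mul hD0.le]; norm_num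
  have hq177 : 177 ≤ q := by
    refine le_of_pow_le_pow_left₀ (n := 4) (by norm_num) hq0.le ?_
    rw [hq4]; norm_num; linarith
  have hU3 : 3097 ≤ U := by
    rw [hU]
    calc (3097 : ℝ) ≤ 7 / 8 * 177 * 20 := by norm_num
      _ ≤ _ := by gcongr
  have hU0 : 0 < U := by linarith
  have hU4 : U ^ 4 = N ^ 4 * D * ℓ ^ 4 := by rw [hU, mul_pow, mul_pow, hq4]
  have hlU : 8 ≤ Real.log U := by
    rw [Real.le_log_iff_exp_le hU0, show (8 : ℝ) = ((8 : ℕ) : ℝ) * 1 by norm_num, Real.exp_nat_mul]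
    calc _ ≤ (2.7182818286 : ℝ) ^ 8 := by gcongr
      _ ≤ 3097 := by norm_num
      _ ≤ U := hU3
  have hN0 : 0 < N := by linarith
  have hN2 : (49 / 64 : ℝ) ≤ N ^ 2 := by nlinarith
  have hN3 : (343 / 512 : ℝ) ≤ N ^ 3 := by
    calc (343 / 512 : ℝ) = (7 / 8) ^ 3 := by norm_num
      _ ≤ _ := by gcongr
  have hl4 : (160000 : ℝ) ≤ ℓ ^ 4 := by
    calc (160000 : ℝ) = 20 ^ 4 := by norm_num
      _ ≤ _ := by gcongr
  have hlog : ∀ Y : ℝ, 0 < Y → 3 * Y ≤ U ^ 4 → 1 + Real.log Y ≤ 4 * Real.log U := by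
    intro Y hY h
    have e : 4 * Real.log U = Real.log (U ^ 4) := by rw [Real.log_pow]; norm_num
    have e1 : 1 + Real.log Y = Real.log (Real.exp 1 * Y) := by
      rw [Real.log_mul he0.ne' hY.ne', Real.log_exp]
    rw [e, e1]
    refine Real.log_le_log (by positivity) (le_trans ?_ h)
    gcongr; linarith
  have hy : 3 * (4 * N ^ 2 * D) ≤ U ^ 4 := by
    rw [hU4]
    calc 3 * (4 * N ^ 2 * D) = 12 * (N ^ 2 * D) := by ring
      _ ≤ (49 / 64 * 160000) * (N ^ 2 * D) := by gcongr; norm_num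
      _ ≤ (N ^ 2 * ℓ ^ 4) * (N ^ 2 * D) := by gcongr
      _ = _ := by ring
  have hDy : D ≤ 4 * N ^ 2 * D := by nlinarith
  have hy0 : 0 < 4 * N ^ 2 * D := by positivity
  have hU1 : 1 ≤ U := by linarith
  refine ⟨hl, hU3, hlU, hU4, hlog D hD0 (by linarith), hlog _ hy0 hy, hDy, ?_, ?_⟩
  · rw [le_div_iff₀ hy0]
    calc D * (4 * N ^ 2 * D) ≤ U ^ 4 * U ^ 4 := by gcongr <;> linarith
      _ = U ^ 8 := by ring
      _ ≤ U ^ 12 := pow_le_pow_right₀ hU1 (by norm_num)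
  · have e : N * D / U ^ 4 = 1 / (N ^ 3 * ℓ ^ 4) := by
      rw [hU4]; field_simp
    rw [e, div_mul_eq_mul_div, div_le_iff₀ (by positivity)]
    calc 1 * 160000 ≤ 3 / 2 * (343 / 512 * (160000 : ℝ)) := by norm_num
      _ ≤ _ := by gcongr

set_option maxHeartbeats 1000000 in
lemma numeric {N D U L β : ℝ} (hN : 7 / 8 < N) (hD : 10 ^ 9 < D)
    (hU : U = N * D ^ ((1 : ℝ) / 4) * Real.log D) (hβ : 7 / 8 < β) (hβ1 : β < 1) (hL0 : 0 ≤ L)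
    (hL : L ≤ 1 / (5400 * U ^ (12 * (1 - β)) * Real.log U ^ 3))
    {x y z : ℝ} (hx : x = U ^ 12) (hy : y = 4 * N ^ 2 * D) (hz : z = x / y) :
    7 * L * x ^ (1 - β) * (1 + Real.log z) ^ 2 +
      (N * Real.sqrt D * (23 + 16 / 7 * Real.log x)) * x ^ (1 / 2 - β) *
        (Real.sqrt D * (1 + Real.log D) ^ 2 + (2 + Real.log z) * (L * Real.sqrt z + 5 * Real.sqrt D)) +
      (2 + Real.log x) * (1 + Real.log y) ^ 2 * (L * x ^ (1 - β) +
        5 * Real.sqrt D * z ^ (1 / 2 - β) * y ^ (1 - β)) < 1 := by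
  obtain ⟨hl, hU3, hlU, hU4, hlD, hly, hDy, hDz, hE⟩ := basic_facts hN hD hU
  rw [← hy] at hly hDy hDz
  rw [← hx, ← hz] at hDz
  have hD0 : 0 < D := by linarith
  have hN0 : 0 < N := by linarith
  have hU0 : 0 < U := by linarith
  have hU1 : 1 ≤ U := by linarith
  have hx1 : 1 ≤ x := by rw [hx]; exact one_le_pow₀ hU1
  have hx0 : 0 < x := by linarith
  have hy1 : 1 ≤ y := by linarith
  have hy0 : 0 < y := by linarith
  have hz1 : 1 ≤ z := by linarith
  have hz0 : 0 < z := by linarith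
  have hzx : z ≤ x := by rw [hz]; exact div_le_self hx0.le hy1
  set l := Real.log U with hl'
  have hlx : Real.log x = 12 * l := by rw [hx, Real.log_pow, hl']; norm_num
  have hlz : Real.log z ≤ 12 * l := hlx ▸ Real.log_le_log hz0 hzx
  have hlz0 : 0 ≤ Real.log z := Real.log_nonneg hz1
  have hly0 : 0 ≤ Real.log y := Real.log_nonneg hy1
  have hl0 : 0 < l := by linarith
  set P := L * x ^ (1 - β) with hP
  have hP0 : 0 ≤ P := by positivity
  have hxb : x ^ (1 - β) = U ^ (12 * (1 - β)) := by
    rw [hx, ← Real.rpow_natCast, ← Real.rpow_mul hU0.le]; norm_num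
  have hPl : P * l ^ 3 ≤ 1 / 5400 := by
    rw [hP, hxb]
    have hpos : 0 < U ^ (12 * (1 - β)) := by positivity
    rw [le_div_iff₀ (by positivity)] at hL
    linarith
  set sD := Real.sqrt D with hsD
  have hsD0 : 0 < sD := Real.sqrt_pos.2 hD0
  have hsD2 : sD * sD = D := Real.mul_self_sqrt hD0.le
  have hsy : Real.sqrt y = 2 * N * sD := by
    rw [hy, Real.sqrt_eq_iff_mul_self_eq_of_pos (by positivity), ← hsD2]; ring
  -- the decay factor
  set V := x ^ (-(3 / 8) : ℝ) with hV
  have hV0 : 0 < V := by positivity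
  have hVx : x ^ (1 / 2 - β) ≤ V := Real.rpow_le_rpow_of_exponent_le hx1 (by linarith)
  have hVU : V * Real.sqrt U = 1 / U ^ 4 := by
    rw [hV, hx, Real.sqrt_eq_rpow, ← Real.rpow_natCast, ← Real.rpow_mul hU0.le, ← Real.rpow_add hU0]
    rw [show (1 : ℝ) / U ^ 4 = U ^ (-4 : ℝ) by
      rw [one_div, Real.rpow_neg hU0.le, ← Real.rpow_natCast]; norm_num]
    norm_num
  have hEb : N * D * V * l ^ 3 ≤ 1.04 / 10000 := by
    have h1 := log_cube hU1
    calc N * D * V * l ^ 3 ≤ N * D * V * (11 * Real.sqrt U) := by gcongr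
      _ = 11 * (N * D) * (V * Real.sqrt U) := by ring
      _ = 11 * (N * D / U ^ 4) := by rw [hVU]; ring
      _ ≤ _ := by linarith
  set E := N * D * V * l ^ 3 with hEdef
  -- term 1
  have t1 : 7 * L * x ^ (1 - β) * (1 + Real.log z) ^ 2 ≤ 129 * (P * l ^ 3) := by
    have h1 : (1 + Real.log z) ^ 2 ≤ (12.125 * l) ^ 2 := by gcongr; linarith
    calc _ = 7 * P * (1 + Real.log z) ^ 2 := by rw [hP]; ring
      _ ≤ 7 * P * (12.125 * l) ^ 2 := by gcongr
      _ = 1029.109375 * (P * l ^ 2) * 1 := by ring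
      _ ≤ 1029.109375 * (P * l ^ 2) * (l / 8) := by gcongr; linarith
      _ = 1029.109375 / 8 * (P * l ^ 3) := by ring
      _ ≤ _ := by gcongr; norm_num
  -- term 2
  have hsz : N * sD * (x ^ (1 / 2 - β) * (L * Real.sqrt z)) = P / 2 := by
    have h1 : Real.sqrt z = Real.sqrt x / (2 * N * sD) := by rw [hz, Real.sqrt_div hx0.le, hsy]
    have h2 : x ^ (1 - β) = x ^ (1 / 2 - β) * Real.sqrt x := by
      rw [Real.sqrt_eq_rpow, ← Real.rpow_add hx0]; ring_nf
    rw [hP, h1, h2]; field_simp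
  have t2 : (N * sD * (23 + 16 / 7 * Real.log x)) * x ^ (1 / 2 - β) *
        (sD * (1 + Real.log D) ^ 2 + (2 + Real.log z) * (L * Real.sqrt z + 5 * sD)) ≤ 744 * E + 24 * (P * l ^ 3) := by
    have h1 : 23 + 16 / 7 * Real.log x ≤ 31 * l := by rw [hlx]; linarith
    have h2 : (1 + Real.log D) ^ 2 ≤ 16 * l ^ 2 := by
      calc _ ≤ (4 * l) ^ 2 := by gcongr
        _ = _ := by ring
    have h3 : 2 + Real.log z ≤ 12.25 * l := by linarith
    have h4 : 61.25 * l ≤ 8 * l ^ 2 := by nlinarith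
    calc _ ≤ (N * sD * (31 * l)) * x ^ (1 / 2 - β) *
        (sD * (16 * l ^ 2) + (12.25 * l) * (L * Real.sqrt z + 5 * sD)) := by gcongr
      _ = 31 * l * (N * (sD * sD)) * x ^ (1 / 2 - β) * (16 * l ^ 2 + 61.25 * l) +
          379.75 * l ^ 2 * (N * sD * (x ^ (1 / 2 - β) * (L * Real.sqrt z))) := by ring
      _ = 31 * l * (N * D) * x ^ (1 / 2 - β) * (16 * l ^ 2 + 61.25 * l) + 379.75 * l ^ 2 * (P / 2) := by
          rw [hsz, hsD2]
      _ ≤ 31 * l * (N * D) * V * (16 * l ^ 2 + 8 * l ^ 2) + 379.75 * l ^ 2 * (P / 2) := by gcongr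
      _ = 744 * E + 189.875 * (P * l ^ 2) * 1 := by rw [hEdef]; ring
      _ ≤ 744 * E + 189.875 * (P * l ^ 2) * (l / 8) := by gcongr; linarith
      _ = 744 * E + 189.875 / 8 * (P * l ^ 3) := by ring
      _ ≤ _ := by gcongr; norm_num
  -- term 3
  have hzy : sD * z ^ (1 / 2 - β) * y ^ (1 - β) ≤ 2 * (N * D * V) := by
    have h1 : z ^ (1 / 2 - β) ≤ z ^ (-(3 / 8) : ℝ) := Real.rpow_le_rpow_of_exponent_le hz1 (by linarith)
    have h2 : y ^ (1 - β) ≤ y ^ (1 / 8 : ℝ) := Real.rpow_le_rpow_of_exponent_le hy1 (by linarith)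
    have h3 : z ^ (-(3 / 8) : ℝ) * y ^ (1 / 8 : ℝ) = V * Real.sqrt y := by
      rw [hz, Real.div_rpow hx0.le hy0.le, Real.sqrt_eq_rpow, hV, div_mul_eq_mul_div, mul_div_assoc, ← Real.rpow_sub hy0]
      norm_num
    calc _ ≤ sD * z ^ (-(3 / 8) : ℝ) * y ^ (1 / 8 : ℝ) := by gcongr
      _ = sD * (V * Real.sqrt y) := by rw [← h3]; ring
      _ = 2 * (N * (sD * sD) * V) := by rw [hsy]; ring
      _ = _ := by rw [hsD2]
  have t3 : (2 + Real.log x) * (1 + Real.log y) ^ 2 * (P + 5 * sD * z ^ (1 / 2 - β) * y ^ (1 - β)) ≤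
      196 * (P * l ^ 3) + 1960 * E := by
    have h1 : 2 + Real.log x ≤ 12.25 * l := by rw [hlx]; linarith
    have h2 : (1 + Real.log y) ^ 2 ≤ (4 * l) ^ 2 := by gcongr
    calc _ = (2 + Real.log x) * (1 + Real.log y) ^ 2 * (P + 5 * (sD * z ^ (1 / 2 - β) * y ^ (1 - β))) := by ring
      _ ≤ (12.25 * l) * (4 * l) ^ 2 * (P + 5 * (2 * (N * D * V))) := by
        refine mul_le_mul (mul_le_mul h1 h2 (by positivity) (by positivity)) ?_ (by positivity) (by positivity)
        linarith
      _ = _ := by rw [hEdef]; ring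
  have := add_le_add (add_le_add t1 t2) t3
  linarith

/-- **Elementary Deuring-Heilbronn phenomenon** (Stopple, Theorem 1).
A zero `ρ = β + iγ` of the Riemann zeta function with `β > 7/8` (and `γ log 2` not too
close to a multiple of `2π`) forces a lower bound on `L(1,χ)` for every real primitive
Dirichlet character `χ` of modulus `D ≡ 0 (mod 4)`, `D > 10^9`, where
`U = |ρ| D^(1/4) log D`. -/
theorem stmt0 (β γ : ℝ) (ρ : ℂ) (hρ : ρ = β + γ * I)
    (hzero : riemannZeta ρ = 0) (hβ : 7 / 8 < β)
    (δ : ℝ) (hδ1 : -Real.pi < δ) (hδ2 : δ ≤ Real.pi)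
    (hδ3 : ∃ n : ℤ, γ * Real.log 2 = 2 * Real.pi * n + δ)
    (hδ4 : Real.pi / 100 < |δ|)
    (D : ℕ) [NeZero D] (χ : DirichletCharacter ℂ D)
    (hreal : ∀ n : ℕ, (χ n).im = 0) (hprim : χ.IsPrimitive)
    (hD4 : D % 4 = 0) (hD : 10 ^ 9 < D)
    (U : ℝ) (hU : U = ‖ρ‖ * (D : ℝ) ^ ((1 : ℝ) / 4) * Real.log D) :
    1 / (5400 * U ^ (12 * (1 - β)) * Real.log U ^ 3) <
      (DirichletCharacter.LFunction χ 1).re := by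
  have hre : ρ.re = β := by rw [hρ]; simp
  have hβ1 : β < 1 := by
    by_contra hc
    push Not at hc
    exact riemannZeta_ne_zero_of_one_le_re (s := ρ) (by rw [hre]; exact hc) hzero
  have hn : ρ.re ≤ ‖ρ‖ := (le_abs_self _).trans (Complex.abs_re_le_norm ρ)
  have hN : 7 / 8 < ‖ρ‖ := by rw [hre] at hn; linarith
  have hD9 : (10 : ℝ) ^ 9 < D := by exact_mod_cast hD
  have hDr : (1 : ℝ) ≤ D := by linarith
  obtain ⟨c, c0, c1, cm, cv, hc, hL⟩ := char_facts χ hreal hprim (by omega)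
  obtain ⟨h, hh, hinv⟩ := arith_exists c c0 c1 cm cv
  have hc1 : ∀ n, |c n| ≤ 1 := by
    intro n
    rcases cv n with h | h | h <;> rw [h] <;> norm_num
  have hr : ∀ n, 0 ≤ rr c n := fun n => (abs_nonneg _).trans (hh n)
  have hL0 : 0 ≤ (DirichletCharacter.LFunction χ 1).re :=
    L_nonneg c hDr _ hr (fun y hy => S_bound c hDr hc1 hc _ hL hy)
  by_contra hcon
  push Not at hcon
  obtain ⟨-, hU3, -, -, -, -, hDy, hDz, -⟩ := basic_facts hN hD9 hU
  have hy0 : 0 < 4 * ‖ρ‖ ^ 2 * (D : ℝ) := by linarith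
  have hx0 : 0 < U ^ 12 := by
    have : 0 < U := by linarith
    positivity
  have hxz : U ^ 12 / (U ^ 12 / (4 * ‖ρ‖ ^ 2 * (D : ℝ))) = 4 * ‖ρ‖ ^ 2 * (D : ℝ) :=
    div_div_cancel₀ hx0.ne'
  have h1 := core c h hDr hL0 hc1 hc hL hh hinv ρ hzero (by rw [hre]; exact hβ) (by rw [hre]; exact hβ1)
    (x := U ^ 12) (z := U ^ 12 / (4 * ‖ρ‖ ^ 2 * (D : ℝ))) hDz (by rw [hxz]; exact hDy)
  rw [hxz, hre] at h1
  have h2 := numeric hN hD9 hU hβ hβ1 hL0 hcon rfl rfl rfl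
  linarith
end

section
/- For every positive integer n, the divisor sum (1*λ_odd)(n) equals 1 if n = m^2 or n = 2m^2 for some positive integer m, and equals 0 otherwise. -/
/-- The Liouville function `λ(n) = (-1)^Ω(n)`. -/
def liouville (n : ℕ) : ℤ := (-1) ^ (ArithmeticFunction.cardFactors n)

/-- `λ_odd(n) = λ(n)` for odd `n`, and `0` for even `n`. -/
def lambdaOdd (n : ℕ) : ℤ := if Odd n then liouville n else 0

theorem aux_sq_of_coprime {a b c : ℕ} (h : a.Coprime b) (he : a * b = c ^ 2) : IsSquare b := by
  have h1 : IsUnit (gcd b a) := by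
    rw [Nat.isUnit_iff]; exact h.symm
  obtain ⟨d, hd⟩ := exists_eq_pow_of_mul_eq_pow h1 (by rw [mul_comm]; exact he)
  exact ⟨d, by rw [hd, sq]⟩

open Classical in
theorem aux_sum_liouville (n : ℕ) (hn : n ≠ 0) :
    ∑ d ∈ n.divisors, ArithmeticFunction.liouville d = if IsSquare n then 1 else 0 := by
  induction n using Nat.recOnPosPrimePosCoprime with
  | zero => exact absurd rfl hn
  | one => simp [ArithmeticFunction.liouville_apply]
  | prime_pow p k hp hk =>
    rw [Nat.sum_divisors_prime_pow hp]
    have h1 : ∀ i ∈ Finset.range (k + 1), ArithmeticFunction.liouville (p ^ i) = (-1) ^ i := by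
      intro i _
      rw [ArithmeticFunction.liouville_apply (pow_ne_zero _ hp.ne_zero),
        ArithmeticFunction.cardFactors_apply_prime_pow hp]
    rw [Finset.sum_congr rfl h1, neg_one_geom_sum]
    have h2 : IsSquare (p ^ k) ↔ Even k := by
      constructor
      · rintro ⟨r, hr⟩
        have := congrArg (fun x => x.factorization p) hr
        have hr0 : r ≠ 0 := by
          rintro rfl
          exact hn (by simpa using hr)
        simp only [hp.factorization_pow, Nat.factorization_mul hr0 hr0] at this
        exact ⟨r.factorization p, by simpa using this⟩
      · intro h; exact h.isSquare_pow _
    simp only [h2, Nat.even_add_one]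
    split_ifs <;> simp_all
  | coprime a b ha hb hab iha ihb =>
    have hm := (ArithmeticFunction.isMultiplicative_zeta.natCast (R := ℤ)).mul
      ArithmeticFunction.isMultiplicative_liouville
    have h3 := hm.map_mul_of_coprime hab
    simp only [ArithmeticFunction.coe_zeta_mul_apply] at h3
    rw [h3, iha (by lia), ihb (by lia)]
    have h4 : IsSquare (a * b) ↔ IsSquare a ∧ IsSquare b := by
      constructor
      · rintro ⟨r, hr⟩
        rw [← sq] at hr
        exact ⟨aux_sq_of_coprime hab.symm (by rw [mul_comm]; exact hr), aux_sq_of_coprime hab hr⟩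
      · rintro ⟨h, h'⟩; exact h.mul h'
    simp only [h4]
    split_ifs <;> simp_all

theorem aux_sum_odd (k m : ℕ) (hm : Odd m) :
    ∑ d ∈ (2 ^ k * m).divisors, lambdaOdd d
      = ∑ d ∈ m.divisors, ArithmeticFunction.liouville d := by
  unfold lambdaOdd
  rw [← Finset.sum_filter]
  have hm0 : m ≠ 0 := hm.pos.ne'
  have : (2 ^ k * m).divisors.filter Odd = m.divisors := by
    ext d
    simp only [Finset.mem_filter, Nat.mem_divisors]
    constructor
    · rintro ⟨⟨h, -⟩, ho⟩
      exact ⟨(Nat.Coprime.dvd_of_dvd_mul_left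
        (Nat.Coprime.pow_right k (Nat.coprime_two_right.mpr ho)) h), hm0⟩
    · rintro ⟨h, -⟩
      exact ⟨⟨h.mul_left _, by positivity⟩, Odd.of_dvd_nat hm h⟩
  rw [this]
  refine Finset.sum_congr rfl fun d hd => ?_
  rw [ArithmeticFunction.liouville_apply (Nat.pos_of_mem_divisors hd).ne', liouville]

open Classical in
/-- `(1 * λ_odd)(n)` is the characteristic function of numbers of the form
`m^2` or `2 m^2`. -/
theorem stmt2 (n : ℕ) (hn : 0 < n) :
    (∑ d ∈ n.divisors, lambdaOdd d) =
      if ∃ m : ℕ, 0 < m ∧ (n = m ^ 2 ∨ n = 2 * m ^ 2) then 1 else 0 := by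
  obtain ⟨k, m, hm, rfl⟩ := Nat.exists_eq_two_pow_mul_odd hn.ne'
  rw [aux_sum_odd k m hm, aux_sum_liouville m hm.pos.ne']
  have hc : ∀ j, (2 ^ j).Coprime m := fun j =>
    Nat.Coprime.pow_left j (Nat.coprime_two_left.mpr hm)
  have key : (∃ r : ℕ, 0 < r ∧ (2 ^ k * m = r ^ 2 ∨ 2 ^ k * m = 2 * r ^ 2)) ↔ IsSquare m := by
    constructor
    · rintro ⟨r, -, h | h⟩
      · exact aux_sq_of_coprime (hc k) h
      · cases k with
        | zero =>
          exfalso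
          rw [pow_zero, one_mul] at h
          rw [h] at hm
          exact (Nat.not_odd_iff_even.mpr (even_two_mul _)) hm
        | succ j =>
          refine aux_sq_of_coprime (hc j) (c := r) ?_
          rw [pow_succ] at h
          linarith
    · rintro ⟨a, rfl⟩
      have ha : 0 < a := Nat.pos_of_mul_pos_left hm.pos
      rcases Nat.even_or_odd' k with ⟨j, rfl | rfl⟩
      · exact ⟨2 ^ j * a, by positivity, Or.inl (by ring)⟩
      · exact ⟨2 ^ j * a, by positivity, Or.inr (by ring)⟩
  simp only [key]
end

section
/- For every positive integer n, (1*λ_odd)(n) = Σ_{d|n} 2^{ν(d)} λ_odd(d) τ_odd(n/d), where the sum is over all positive divisors d of n. -/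
/-- `τ_odd(n)`, the number of odd divisors of `n`. -/
def tauOdd (n : ℕ) : ℕ := (n.divisors.filter fun d => Odd d).card

namespace S4

def lam : ArithmeticFunction ℤ := ⟨lambdaOdd, by simp [lambdaOdd]⟩
def gg : ArithmeticFunction ℤ :=
  ⟨fun n => 2 ^ (ArithmeticFunction.cardDistinctFactors n) * lambdaOdd n, by simp [lambdaOdd]⟩
def oo : ArithmeticFunction ℤ := ⟨fun n => if Odd n then 1 else 0, by simp⟩

theorem lambdaOdd_mul (m n : ℕ) : lambdaOdd (m * n) = lambdaOdd m * lambdaOdd n := by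
  unfold lambdaOdd liouville
  by_cases hm : Odd m
  · by_cases hn : Odd n
    · have h1 : m ≠ 0 := by rintro rfl; simp at hm
      have h2 : n ≠ 0 := by rintro rfl; simp at hn
      simp [hm, hn, Nat.odd_mul, ArithmeticFunction.cardFactors_mul h1 h2, pow_add]
    · simp [hn, Nat.odd_mul]
  · simp [hm, Nat.odd_mul]

theorem lam_mult : lam.IsMultiplicative :=
  ⟨by simp [lam, lambdaOdd, liouville], fun {m n} _ => lambdaOdd_mul m n⟩

theorem oo_mult : oo.IsMultiplicative :=
  ⟨by simp [oo], fun {m n} _ => by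
    by_cases hm : Odd m <;> by_cases hn : Odd n <;> simp [oo, hm, hn, Nat.odd_mul]⟩

theorem gg_mult : gg.IsMultiplicative :=
  ⟨by simp [gg, lambdaOdd, liouville], fun {m n} h => by
    simp only [gg, ArithmeticFunction.coe_mk, lambdaOdd_mul,
      ArithmeticFunction.cardDistinctFactors_mul h, pow_add]
    ring⟩

theorem lambdaOdd_pow {p : ℕ} (hp : p.Prime) (ho : Odd p) (k : ℕ) :
    lambdaOdd (p ^ k) = (-1) ^ k := by
  simp [lambdaOdd, liouville, ho.pow, ArithmeticFunction.cardFactors_apply_prime_pow hp]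

theorem odd_case {p : ℕ} (hp : p.Prime) (ho : Odd p) (k : ℕ) :
    ∑ i ∈ Finset.range (k + 1), gg (p ^ i) = (-1) ^ k := by
  induction k with
  | zero => simp [gg, lambdaOdd, liouville]
  | succ k ih =>
    rw [Finset.sum_range_succ, ih]
    simp only [gg, ArithmeticFunction.coe_mk, lambdaOdd_pow hp ho,
      ArithmeticFunction.cardDistinctFactors_apply_prime_pow hp (Nat.succ_ne_zero k)]
    ring

theorem key : lam = gg * oo := by
  rw [ArithmeticFunction.IsMultiplicative.eq_iff_eq_on_prime_powers _ lam_mult _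
    (gg_mult.mul oo_mult)]
  intro p k hp
  rw [ArithmeticFunction.mul_apply, Nat.sum_divisorsAntidiagonal (fun a b => gg a * oo b),
    Nat.sum_divisors_prime_pow hp]
  rcases hp.eq_two_or_odd' with rfl | ho
  · rw [Finset.sum_range_succ']
    have : ∀ i ∈ Finset.range k, gg (2 ^ (i+1)) * oo (2 ^ k / 2 ^ (i+1)) = 0 := by
      intro i _
      simp [gg, lambdaOdd, Nat.odd_pow_iff]
    rw [Finset.sum_eq_zero this]
    have h2 : ¬ Odd 2 := by decide
    rcases k with _ | k <;> simp [gg, oo, lam, lambdaOdd, liouville, Nat.odd_pow_iff, h2]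
  · rw [show lam (p ^ k) = (-1) ^ k from lambdaOdd_pow hp ho k, ← odd_case hp ho]
    refine Finset.sum_congr rfl fun i hi => ?_
    rw [Nat.pow_div (by simp at hi; omega) hp.pos]
    simp [oo, ho.pow]

theorem tau_eq (n : ℕ) : (tauOdd n : ℤ) = (oo * (ArithmeticFunction.zeta : ArithmeticFunction ℤ)) n := by
  rw [ArithmeticFunction.coe_mul_zeta_apply]
  simp [tauOdd, oo]

end S4

/-- `(1 * λ_odd)(n) = Σ_{d ∣ n} 2^{ν(d)} λ_odd(d) τ_odd(n/d)`. -/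
theorem stmt4 (n : ℕ) (hn : 0 < n) :
    (∑ d ∈ n.divisors, lambdaOdd d) =
      ∑ d ∈ n.divisors,
        2 ^ (ArithmeticFunction.cardDistinctFactors d) * lambdaOdd d *
          (tauOdd (n / d) : ℤ) := by
  have h1 : (∑ d ∈ n.divisors, lambdaOdd d) =
      (S4.lam * (ArithmeticFunction.zeta : ArithmeticFunction ℤ)) n := by
    rw [ArithmeticFunction.coe_mul_zeta_apply]; rfl
  rw [h1, S4.key, mul_assoc, ArithmeticFunction.mul_apply,
    Nat.sum_divisorsAntidiagonal
      (fun a b => S4.gg a * (S4.oo * (ArithmeticFunction.zeta : ArithmeticFunction ℤ)) b)]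
  refine Finset.sum_congr rfl fun d _ => ?_
  rw [S4.tau_eq]; rfl
end

section
/- Let χ be a real primitive Dirichlet character modulo D with D even. Let n = abm where a ∈ A_1, b ∈ A_0, m ∈ A_{−1}, and set c = ab. Then (1*λ_odd)(n) = Σ_{c'|c} 2^{ν(a')} λ_odd(c') · (1*χ)(n/c'), where each divisor c' of c is written uniquely as c' = a'b' with a'|a and b'|b. -/
/-- Membership in the set `A_j = {u : p ∣ u prime → χ(p) = j}`. -/
def memA {D : ℕ} (χ : DirichletCharacter ℂ D) (j : ℂ) (u : ℕ) : Prop :=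
  ∀ p : ℕ, p.Prime → p ∣ u → χ p = j

theorem sum_cop {x y : ℕ} (h : x.Coprime y) (f : ℕ → ℂ) :
    ∑ d ∈ (x * y).divisors, f d = ∑ d ∈ x.divisors, ∑ e ∈ y.divisors, f (d * e) := by
  rw [Nat.divisors_mul, Finset.mul_def, Finset.sum_image, Finset.sum_product]
  exact h.mul_injOn_divisors

theorem sum_cop_mul {x y : ℕ} (h : x.Coprime y) (f : ℕ → ℂ)
    (hf : ∀ d e, f (d * e) = f d * f e) :
    ∑ d ∈ (x * y).divisors, f d = (∑ d ∈ x.divisors, f d) * ∑ e ∈ y.divisors, f e := by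
  rw [sum_cop h, Finset.sum_mul_sum]
  simp only [hf]

theorem lambdaOdd_mul (d e : ℕ) : lambdaOdd (d * e) = lambdaOdd d * lambdaOdd e := by
  unfold lambdaOdd liouville
  by_cases hd : Odd d
  · by_cases he : Odd e
    · rw [if_pos (hd.mul he), if_pos hd, if_pos he,
        ArithmeticFunction.cardFactors_mul (by rintro rfl; simp at hd) (by rintro rfl; simp at he),
        pow_add]
    · rw [if_neg (by rw [Nat.odd_mul]; tauto), if_neg he, mul_zero]
  · rw [if_neg (by rw [Nat.odd_mul]; tauto), if_neg hd, zero_mul]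

theorem lambdaOdd_one : lambdaOdd 1 = 1 := by simp [lambdaOdd, liouville]

theorem lambdaOdd_prime {p : ℕ} (hp : p.Prime) (h : Odd p) : lambdaOdd p = -1 := by
  simp [lambdaOdd, liouville, h, hp]

/-- Summed identity. -/
theorem two_pow_sum {a : ℕ} (ha : Odd a) :
    ∑ d ∈ a.divisors, (2 : ℂ) ^ (ArithmeticFunction.cardDistinctFactors d) * (lambdaOdd d : ℂ)
      = (lambdaOdd a : ℂ) := by
  induction a using Nat.recOnPosPrimePosCoprime with
  | zero => simp at ha
  | one => simp [lambdaOdd_one]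
  | prime_pow p n hp hn =>
    have hpo : Odd p := Nat.Odd.of_mul_left (n := p ^ (n - 1)) (by
      rw [← pow_succ', Nat.sub_add_cancel hn]; exact ha)
    have hpw : ∀ k, lambdaOdd (p ^ k) = (-1) ^ k := by
      intro k
      induction k with
      | zero => simp [lambdaOdd_one]
      | succ k ih => rw [pow_succ, lambdaOdd_mul, ih, lambdaOdd_prime hp hpo, pow_succ]
    rw [Nat.sum_divisors_prime_pow hp]
    clear hn ha
    induction n with
    | zero => simp [lambdaOdd_one]
    | succ k ih =>
      rw [Finset.sum_range_succ, ih, hpw, hpw,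
        ArithmeticFunction.cardDistinctFactors_apply_prime_pow hp (by omega)]
      push_cast
      ring
  | coprime x y hx hy hxy ihx ihy =>
    rw [Nat.odd_mul] at ha
    rw [sum_cop hxy, lambdaOdd_mul]
    push_cast
    rw [← ihx ha.1, ← ihy ha.2, Finset.sum_mul_sum]
    refine Finset.sum_congr rfl fun d hd => Finset.sum_congr rfl fun e he => ?_
    have hde : d.Coprime e :=
      Nat.Coprime.of_dvd (Nat.dvd_of_mem_divisors hd) (Nat.dvd_of_mem_divisors he) hxy
    rw [ArithmeticFunction.cardDistinctFactors_mul hde, lambdaOdd_mul]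
    push_cast
    ring

theorem a_part {a : ℕ} (ha : Odd a) :
    ∑ d ∈ a.divisors, (2 : ℂ) ^ (ArithmeticFunction.cardDistinctFactors d) * (lambdaOdd d : ℂ)
      * ∑ _e ∈ (a / d).divisors, 1 = ∑ d ∈ a.divisors, (lambdaOdd d : ℂ) := by
  have ha0 : a ≠ 0 := by rintro rfl; simp at ha
  have h1 : ∀ d ∈ a.divisors, (lambdaOdd d : ℂ) = ∑ e ∈ d.divisors,
      (2 : ℂ) ^ (ArithmeticFunction.cardDistinctFactors e) * (lambdaOdd e : ℂ) := by
    intro d hd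
    exact (two_pow_sum (ha.of_dvd_nat (Nat.dvd_of_mem_divisors hd))).symm
  rw [Finset.sum_congr rfl h1]
  simp only [Finset.mul_sum, mul_one]
  rw [Finset.sum_sigma', Finset.sum_sigma']
  refine Finset.sum_bij' (fun x _ => ⟨x.1 * x.2, x.1⟩) (fun x _ => ⟨x.2, x.1 / x.2⟩) ?_ ?_ ?_ ?_ ?_
  · rintro ⟨d, e⟩ h
    simp only [Finset.mem_sigma, Nat.mem_divisors] at h ⊢
    obtain ⟨⟨⟨k, rfl⟩, -⟩, h2, h3⟩ := h
    have hd : 0 < d := Nat.pos_of_ne_zero (by rintro rfl; simp at ha0)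
    rw [Nat.mul_div_cancel_left _ hd] at h2 h3
    refine ⟨⟨mul_dvd_mul_left _ h2, ha0⟩, Dvd.intro _ rfl, ?_⟩
    have : e ≠ 0 := by rintro rfl; simp at h2; omega
    positivity
  · rintro ⟨d, e⟩ h
    simp only [Finset.mem_sigma, Nat.mem_divisors] at h ⊢
    obtain ⟨⟨⟨k, rfl⟩, -⟩, ⟨l, rfl⟩, h3⟩ := h
    have he : 0 < e := Nat.pos_of_ne_zero (by rintro rfl; simp at h3)
    refine ⟨⟨⟨l * k, by ring⟩, ha0⟩, ?_, ?_⟩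
    · rw [Nat.mul_div_cancel_left _ he, mul_assoc, Nat.mul_div_cancel_left _ he]
      exact Dvd.intro _ rfl
    · rw [mul_assoc, Nat.mul_div_cancel_left _ he]
      intro h0
      apply ha0
      rw [mul_assoc, h0, mul_zero]
  · rintro ⟨d, e⟩ h
    simp only [Finset.mem_sigma, Nat.mem_divisors] at h
    have hd : 0 < d := Nat.pos_of_ne_zero (by rintro rfl; simp at h)
    simp [Nat.mul_div_cancel_left _ hd]
  · rintro ⟨d, e⟩ h
    simp only [Finset.mem_sigma, Nat.mem_divisors] at h
    simp [Nat.mul_div_cancel' h.2.1]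
  · rintro ⟨d, e⟩ h
    rfl

theorem chi_one {D : ℕ} (χ : DirichletCharacter ℂ D) {u : ℕ} (hu0 : u ≠ 0) (hu : memA χ 1 u) :
    χ u = 1 := by
  induction u using Nat.recOnMul with
  | zero => simp at hu0
  | one => simp
  | prime p hp => exact hu p hp dvd_rfl
  | mul x y hx hy =>
    rw [Nat.cast_mul, map_mul, hx (by rintro rfl; simp at hu0) fun p hp h => hu p hp (h.mul_right _),
      hy (by rintro rfl; simp at hu0) fun p hp h => hu p hp (h.mul_left _), mul_one]

theorem chi_neg {D : ℕ} (χ : DirichletCharacter ℂ D) {u : ℕ} (hu0 : u ≠ 0)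
    (h2 : Odd u) (hu : memA χ (-1) u) : χ u = (lambdaOdd u : ℂ) := by
  induction u using Nat.recOnMul with
  | zero => simp at hu0
  | one => simp [lambdaOdd_one]
  | prime p hp => rw [hu p hp dvd_rfl, lambdaOdd_prime hp h2]; simp
  | mul x y hx hy =>
    rw [Nat.odd_mul] at h2
    rw [Nat.cast_mul, map_mul, hx (by rintro rfl; simp at hu0) h2.1 fun p hp h => hu p hp (h.mul_right _),
      hy (by rintro rfl; simp at hu0) h2.2 fun p hp h => hu p hp (h.mul_left _), lambdaOdd_mul]
    push_cast
    rfl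

theorem chi_zero_sum {D : ℕ} (χ : DirichletCharacter ℂ D) {u : ℕ} (hu0 : u ≠ 0)
    (hu : memA χ 0 u) : ∑ d ∈ u.divisors, χ d = 1 := by
  rw [Finset.sum_eq_single 1]
  · simp
  · intro d hd h1
    obtain ⟨p, hp, k, rfl⟩ := Nat.exists_prime_and_dvd h1
    rw [Nat.cast_mul, map_mul, hu p hp ((Dvd.intro _ rfl).trans (Nat.dvd_of_mem_divisors hd)),
      zero_mul]
  · intro h; simp [hu0] at h

theorem memA_dvd {D : ℕ} {χ : DirichletCharacter ℂ D} {j : ℂ} {u v : ℕ} (hu : memA χ j u)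
    (h : v ∣ u) : memA χ j v := fun p hp hv => hu p hp (hv.trans h)

theorem memA_coprime {D : ℕ} {χ : DirichletCharacter ℂ D} {i j : ℂ} (hij : i ≠ j) {u v : ℕ}
    (hu : memA χ i u) (hv : memA χ j v) : u.Coprime v :=
  Nat.coprime_of_dvd fun p hp h1 h2 => hij ((hu p hp h1).symm.trans (hv p hp h2))

/-- For a real primitive `χ` mod an even `D`, and `n = a b m` with `a ∈ A₁`, `b ∈ A₀`,
`m ∈ A₋₁`, `c = a b`:
`(1*λ_odd)(n) = Σ_{c' ∣ c} 2^{ν(a')} λ_odd(c') (1*χ)(n/c')`, where `c' = a' b'` is the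
unique factorization with `a' ∣ a`, `b' ∣ b` (so that `a' = gcd(c', a)`). -/
theorem stmt6 (D : ℕ) (χ : DirichletCharacter ℂ D)
    (hreal : ∀ n : ℕ, (χ n).im = 0) (hprim : χ.IsPrimitive) (hDeven : 2 ∣ D)
    (a b m : ℕ) (ha0 : 0 < a) (hb0 : 0 < b) (hm0 : 0 < m)
    (ha : memA χ 1 a) (hb : memA χ 0 b) (hm : memA χ (-1) m)
    (n c : ℕ) (hn : n = a * b * m) (hc : c = a * b) :
    ((∑ d ∈ n.divisors, lambdaOdd d : ℤ) : ℂ) =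
      ∑ c' ∈ c.divisors,
        (2 : ℂ) ^ (ArithmeticFunction.cardDistinctFactors (Nat.gcd c' a)) *
          (lambdaOdd c' : ℂ) * ∑ d ∈ (n / c').divisors, χ d := by
  subst hn hc
  have hχ2 : χ (2 : ℕ) = 0 := by
    apply MulChar.map_nonunit
    rw [ZMod.isUnit_iff_coprime]
    intro h
    have := Nat.eq_one_of_dvd_coprimes h dvd_rfl hDeven
    omega
  have hodd : ∀ (j : ℂ) (u : ℕ), j ≠ 0 → memA χ j u → Odd u := by
    intro j u hj hu
    by_contra h
    rw [Nat.not_odd_iff_even, even_iff_two_dvd] at h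
    exact hj ((hu 2 Nat.prime_two h).symm.trans hχ2)
  have hao := hodd 1 a one_ne_zero ha
  have hmo := hodd (-1) m (by norm_num) hm
  have hab : a.Coprime b := memA_coprime one_ne_zero ha hb
  have ham : a.Coprime m := memA_coprime (by norm_num) ha hm
  have hbm : b.Coprime m := memA_coprime (by norm_num) hb hm
  have hχm : ∀ d e : ℕ, χ ((d * e : ℕ) : ZMod D) = χ d * χ e := by intro d e; simp
  have hLm : ∀ d e : ℕ, ((lambdaOdd (d * e) : ℤ) : ℂ) = lambdaOdd d * lambdaOdd e := by
    intro d e; rw [lambdaOdd_mul]; push_cast; rfl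
  have hXm : ∑ d ∈ m.divisors, χ d = ∑ d ∈ m.divisors, (lambdaOdd d : ℂ) := by
    refine Finset.sum_congr rfl fun d hd => ?_
    have hd' := Nat.dvd_of_mem_divisors hd
    exact chi_neg χ (Nat.pos_of_mem_divisors hd).ne' (hmo.of_dvd_nat hd') (memA_dvd hm hd')
  rw [Int.cast_sum, sum_cop_mul (Nat.Coprime.mul_left ham hbm) _ hLm,
    sum_cop_mul hab _ hLm, sum_cop hab, ← a_part hao, ← hXm, Finset.sum_mul_sum, Finset.sum_mul]
  refine Finset.sum_congr rfl fun d hd => ?_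
  rw [Finset.sum_mul]
  refine Finset.sum_congr rfl fun e he => ?_
  have hd' := Nat.dvd_of_mem_divisors hd
  have he' := Nat.dvd_of_mem_divisors he
  have hg : (d * e).gcd a = d := by
    rw [Nat.Coprime.gcd_mul_right_cancel _ (hab.symm.coprime_dvd_left he')]
    exact Nat.gcd_eq_left hd'
  have hdiv : a * b * m / (d * e) = (a / d) * (b / e) * m := by
    rw [Nat.div_mul_div_comm hd' he', Nat.div_mul_right_comm (mul_dvd_mul hd' he')]
  have hda := Nat.div_dvd_of_dvd hd'
  have heb := Nat.div_dvd_of_dvd he'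
  have hbe0 : b / e ≠ 0 := (Nat.pos_of_dvd_of_pos heb hb0).ne'
  have h1 : ∑ x ∈ (a / d).divisors, χ x = ∑ _x ∈ (a / d).divisors, 1 := by
    refine Finset.sum_congr rfl fun x hx => ?_
    exact chi_one χ (Nat.pos_of_mem_divisors hx).ne'
      (memA_dvd ha ((Nat.dvd_of_mem_divisors hx).trans hda))
  rw [hg, hdiv, sum_cop_mul (Nat.Coprime.mul_left (ham.coprime_dvd_left hda)
      (hbm.coprime_dvd_left heb)) (fun x => χ x) hχm,
    sum_cop_mul (Nat.Coprime.of_dvd hda heb hab) (fun x => χ x) hχm,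
    chi_zero_sum χ hbe0 (memA_dvd hb heb), h1, hLm]
  ring
end

section
/- Let ρ = β + iγ be a complex number with 7/8 < β ≤ 1, and let δ be the unique real number with −π < δ ≤ π such that γ·log 2 = 2πn + δ for some integer n; assume |δ| > π/100. Then for every real U ≥ 10, (1/25)·ζ(4β)/ζ(2β) − U^{6−12β} ≤ | Σ_{n ≤ U^{12}} (−1)^n (1*λ_odd)(n)/n^ρ |. -/
open Complex

def lamA : ArithmeticFunction ℤ := ⟨lambdaOdd, by simp [lambdaOdd]⟩

lemma lamA_mult : lamA.IsMultiplicative := by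
  refine ⟨by simp [lamA, lambdaOdd, liouville], ?_⟩
  intro m n _
  change lambdaOdd (m * n) = lambdaOdd m * lambdaOdd n
  unfold lambdaOdd
  by_cases hm : Odd m <;> by_cases hn : Odd n <;> simp [Nat.odd_mul, hm, hn]
  unfold liouville
  rw [ArithmeticFunction.cardFactors_mul hm.pos.ne' hn.pos.ne', pow_add]

def gA : ArithmeticFunction ℤ := (ArithmeticFunction.zeta : ArithmeticFunction ℤ) * lamA

lemma gA_mult : gA.IsMultiplicative :=
  ArithmeticFunction.isMultiplicative_zeta.natCast.mul lamA_mult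

lemma gA_apply (n : ℕ) : gA n = ∑ d ∈ n.divisors, lambdaOdd d := by
  unfold gA
  rw [ArithmeticFunction.coe_zeta_mul_apply]
  rfl

lemma gA_two_pow (k : ℕ) : gA (2 ^ k) = 1 := by
  rw [gA_apply, Nat.sum_divisors_prime_pow Nat.prime_two, Finset.sum_range_succ']
  simp [lambdaOdd, liouville]
  apply Finset.sum_eq_zero
  intro i _
  rw [if_neg]
  rw [pow_succ]
  simp

lemma gA_odd_pow (p k : ℕ) (hp : p.Prime) (h2 : p ≠ 2) :
    gA (p ^ k) = if Even k then 1 else 0 := by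
  have ho : Odd p := hp.odd_of_ne_two h2
  rw [gA_apply, Nat.sum_divisors_prime_pow hp]
  have : ∀ i ∈ Finset.range (k+1), lambdaOdd (p ^ i) = (-1) ^ i := by
    intro i _
    simp [lambdaOdd, liouville, ho.pow, ArithmeticFunction.cardFactors_apply_prime_pow hp]
  rw [Finset.sum_congr rfl this, neg_one_geom_sum]
  by_cases h : Even k <;> simp [h, Nat.even_add_one]

lemma gA_one_of (a j : ℕ) : gA (2 ^ a * (2 * j + 1) ^ 2) = 1 := by
  have hc : Nat.Coprime (2 ^ a) ((2 * j + 1) ^ 2) := by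
    apply Nat.Coprime.pow
    simp
  rw [gA_mult.2 hc, gA_two_pow, one_mul, gA_mult.multiplicative_factorization _ (by positivity)]
  apply Finset.prod_eq_one
  intro p hp
  rw [Nat.support_factorization] at hp
  have hpp := Nat.prime_of_mem_primeFactors hp
  have hd := hpp.dvd_of_dvd_pow (Nat.dvd_of_mem_primeFactors hp)
  have h2 : p ≠ 2 := by
    rintro rfl
    omega
  change gA (p ^ _) = 1
  rw [gA_odd_pow _ _ hpp h2]
  simp

lemma gA_zero_of (n : ℕ) (hn : n ≠ 0) (h : ∀ a j, n ≠ 2 ^ a * (2 * j + 1) ^ 2) : gA n = 0 := by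
  obtain ⟨a, m, hm, rfl⟩ := Nat.exists_eq_two_pow_mul_odd hn
  have hc : Nat.Coprime (2 ^ a) m := by
    apply Nat.Coprime.pow_left
    simpa using hm
  have hm0 : m ≠ 0 := hm.pos.ne'
  rw [gA_mult.2 hc, gA_two_pow, one_mul]
  by_contra hne
  rw [gA_mult.multiplicative_factorization _ hm0] at hne
  have hev : ∀ p, Even (m.factorization p) := by
    intro p
    by_cases hp : p ∈ m.primeFactors
    · have hpp := Nat.prime_of_mem_primeFactors hp
      have h2 : p ≠ 2 := by
        rintro rfl
        have := Nat.dvd_of_mem_primeFactors hp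
        obtain ⟨t, rfl⟩ := hm
        omega
      by_contra hodd
      apply hne
      apply Finset.prod_eq_zero (i := p) (by rwa [Nat.support_factorization])
      change gA (p ^ _) = 0
      rw [gA_odd_pow _ _ hpp h2, if_neg hodd]
    · rw [← Nat.support_factorization, Finsupp.notMem_support_iff] at hp
      simp [hp]
  have hsq : m = (∏ p ∈ m.primeFactors, p ^ (m.factorization p / 2)) ^ 2 := by
    conv_lhs => rw [← Nat.prod_factorization_pow_eq_self hm0]
    rw [Finsupp.prod, Nat.support_factorization, ← Finset.prod_pow]
    apply Finset.prod_congr rfl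
    intro p _
    rw [← pow_mul, Nat.div_mul_cancel (hev p).two_dvd]
  set k := ∏ p ∈ m.primeFactors, p ^ (m.factorization p / 2)
  have hk : Odd k := by
    rw [hsq] at hm
    exact (Nat.odd_pow_iff (by norm_num)).1 hm
  obtain ⟨j, hj⟩ := hk
  exact h a j (by rw [← hj, ← hsq])

lemma rep_inj {a j b i : ℕ} (h : 2 ^ a * (2 * j + 1) ^ 2 = 2 ^ b * (2 * i + 1) ^ 2) :
    a = b ∧ j = i := by
  have key : ∀ a j : ℕ, (2 ^ a * (2 * j + 1) ^ 2).factorization 2 = a := by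
    intro a j
    have : ((2 * j + 1) ^ 2).factorization 2 = 0 := by
      apply Nat.factorization_eq_zero_of_not_dvd
      intro hd
      have := Nat.prime_two.dvd_of_dvd_pow hd
      omega
    rw [Nat.factorization_mul (by positivity) (by positivity)]
    rw [Finsupp.add_apply, this, Nat.Prime.factorization_pow Nat.prime_two]
    simp
  have hab : a = b := by rw [← key a j, h, key]
  subst hab
  refine ⟨rfl, ?_⟩
  have := Nat.eq_of_mul_eq_mul_left (by positivity) h
  have := Nat.pow_left_injective (by norm_num : 2 ≠ 0) this
  simp at this
  omega

noncomputable def epsA (a : ℕ) : ℂ := if a = 0 then -1 else 1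

lemma cpow_aux (ρ : ℂ) (a k : ℕ) : ((2 ^ a * k ^ 2 : ℕ) : ℂ) ^ (-ρ) =
    ((2 : ℂ) ^ (-ρ)) ^ a * (k : ℂ) ^ (-(2 * ρ)) := by
  rw [Nat.cast_mul, Complex.natCast_mul_natCast_cpow, Nat.cast_pow, Nat.cast_pow,
    ← Complex.natCast_cpow_natCast_mul, mul_comm, ← Complex.natCast_cpow_natCast_mul]
  rw [← Complex.cpow_nat_mul]
  push_cast
  rw [mul_comm, show -(2 * ρ) = 2 * (-ρ) by ring]

lemma sum_rewrite (ρ : ℂ) (N M : ℕ) (hM : N < M) :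
    ∑ n ∈ Finset.Icc 1 N, ((-1 : ℂ) ^ n * ((∑ d ∈ n.divisors, lambdaOdd d : ℤ) : ℂ)) / (n : ℂ) ^ ρ
    = ∑ x ∈ (Finset.range M ×ˢ Finset.range M).filter
        (fun x => 2 ^ x.1 * (2 * x.2 + 1) ^ 2 ≤ N),
        (epsA x.1 * ((2 : ℂ) ^ (-ρ)) ^ x.1) * ((2 * x.2 + 1 : ℕ) : ℂ) ^ (-(2 * ρ)) := by
  symm
  apply Finset.sum_of_injOn (fun x : ℕ × ℕ => 2 ^ x.1 * (2 * x.2 + 1) ^ 2)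
  · rintro ⟨a, j⟩ _ ⟨b, i⟩ _ h
    obtain ⟨rfl, rfl⟩ := rep_inj h
    rfl
  · rintro ⟨a, j⟩ h
    simp only [Finset.coe_filter, Set.mem_ofPred_eq] at h
    simp only [Finset.coe_Icc, Set.mem_Icc]
    exact ⟨Nat.one_le_iff_ne_zero.2 (by positivity), h.2⟩
  · intro n hn hni
    rw [Finset.mem_Icc] at hn
    rw [← gA_apply, gA_zero_of n (by omega)]
    · simp
    · rintro a j rfl
      apply hni
      refine ⟨(a, j), ?_, rfl⟩
      simp only [Finset.coe_filter, Set.mem_ofPred_eq, Finset.mem_product, Finset.mem_range]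
      have h1 : a < 2 ^ a := Nat.lt_two_pow_self
      have h2 : 1 ≤ 2 ^ a := Nat.one_le_two_pow
      have h3 : 2 ^ a ≤ 2 ^ a * (2 * j + 1) ^ 2 := Nat.le_mul_of_pos_right _ (by positivity)
      have h4 : (2 * j + 1) ^ 2 ≤ 2 ^ a * (2 * j + 1) ^ 2 := Nat.le_mul_of_pos_left _ (by positivity)
      refine ⟨⟨by omega, by nlinarith⟩, hn.2⟩
  · rintro ⟨a, j⟩ h
    rw [← gA_apply, gA_one_of, div_eq_mul_inv, ← Complex.cpow_neg, cpow_aux]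
    have : (-1 : ℂ) ^ (2 ^ a * (2 * j + 1) ^ 2) = epsA a := by
      unfold epsA
      split_ifs with h0
      · subst h0
        apply Odd.neg_one_pow
        rw [pow_zero, one_mul]
        exact Odd.pow ⟨j, rfl⟩
      · apply Even.neg_one_pow
        apply Even.mul_right
        exact (Nat.even_pow.2 ⟨even_two, h0⟩)
    simp only [this]
    push_cast
    ring

lemma tele (w : ℝ) (hw : 1 ≤ w) :
    w ^ (-(7/4) : ℝ) ≤ 8 / 3 * (w ^ (-(3/4) : ℝ) - (w + 1) ^ (-(3/4) : ℝ)) := by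
  have hw0 : 0 < w := by linarith
  set t := w⁻¹ with ht
  have ht0 : 0 < t := by positivity
  have ht1 : t ≤ 1 := inv_le_one_of_one_le₀ hw
  have h1 : w ^ (-(7/4) : ℝ) = w ^ (-(3/4) : ℝ) * t := by
    rw [ht, ← Real.rpow_neg_one w, ← Real.rpow_add hw0]
    norm_num
  have h2 : (w + 1) ^ (-(3/4) : ℝ) = w ^ (-(3/4) : ℝ) * (1 + t) ^ (-(3/4) : ℝ) := by
    rw [← Real.mul_rpow hw0.le (by positivity), mul_add, ht, mul_inv_cancel₀ hw0.ne', mul_one]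
  have h3 : (1 + t) ^ (-(3/4) : ℝ) ≤ 1 - 3 / 8 * t := by
    have e : (1 + t) ^ (-(3/4) : ℝ) = (1 + t) ^ (1/4 : ℝ) * (1 + t)⁻¹ := by
      rw [← Real.rpow_neg_one (1 + t), ← Real.rpow_add (by positivity)]
      norm_num
    have b : (1 + t) ^ (1/4 : ℝ) ≤ 1 + 1/4 * t :=
      rpow_one_add_le_one_add_mul_self (by linarith) (by norm_num) (by norm_num)
    rw [e, ← div_eq_mul_inv, div_le_iff₀ (by positivity)]
    nlinarith
  rw [h1, h2]
  have h4 : 0 < w ^ (-(3/4) : ℝ) := by positivity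
  nlinarith

lemma tailT (Y : ℝ) (hY : 0 < Y) (N : ℕ) :
    ∑ j ∈ (Finset.range N).filter (fun j : ℕ => Y < ((2 * j + 1 : ℕ) : ℝ) ^ 2),
      ((2 * j + 1 : ℕ) : ℝ) ^ (-(7/4) : ℝ) ≤ 8 / 3 * Y ^ (-(3/8) : ℝ) := by
  set h : ℕ → ℝ := fun j => min (8 / 3 * Y ^ (-(3/8) : ℝ))
    (8 / 3 * ((2 * j + 1 : ℕ) : ℝ) ^ (-(3/4) : ℝ)) with hh
  have hanti : ∀ j : ℕ, ((2 * (j+1) + 1 : ℕ) : ℝ) ^ (-(3/4) : ℝ)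
      ≤ (((2 * j + 1 : ℕ) : ℝ) + 1) ^ (-(3/4) : ℝ) := by
    intro j
    apply Real.rpow_le_rpow_of_nonpos (by positivity) _ (by norm_num)
    push_cast; linarith
  have hanti2 : ∀ j : ℕ, (((2 * j + 1 : ℕ) : ℝ) + 1) ^ (-(3/4) : ℝ) ≤
      ((2 * j + 1 : ℕ) : ℝ) ^ (-(3/4) : ℝ) := by
    intro j
    apply Real.rpow_le_rpow_of_nonpos (by positivity) _ (by norm_num)
    linarith
  have hstep : ∀ j : ℕ, (if Y < ((2 * j + 1 : ℕ) : ℝ) ^ 2 then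
      ((2 * j + 1 : ℕ) : ℝ) ^ (-(7/4) : ℝ) else 0) ≤ h j - h (j + 1) := by
    intro j
    split_ifs with hc
    · have hw : (1 : ℝ) ≤ ((2 * j + 1 : ℕ) : ℝ) := by exact_mod_cast Nat.le_add_left _ _
      have t := tele _ hw
      have e : h j = 8 / 3 * ((2 * j + 1 : ℕ) : ℝ) ^ (-(3/4) : ℝ) := by
        apply min_eq_right
        apply mul_le_mul_of_nonneg_left _ (by norm_num)
        have : ((2 * j + 1 : ℕ) : ℝ) ^ (-(3/4) : ℝ)
            = (((2 * j + 1 : ℕ) : ℝ) ^ 2) ^ (-(3/8) : ℝ) := by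
          rw [← Real.rpow_natCast, ← Real.rpow_mul (by positivity)]
          norm_num
        rw [this]
        exact Real.rpow_le_rpow_of_nonpos hY hc.le (by norm_num)
      have e2 : h (j + 1) ≤ 8 / 3 * ((2 * (j+1) + 1 : ℕ) : ℝ) ^ (-(3/4) : ℝ) := min_le_right _ _
      have := hanti j
      rw [e]
      linarith
    · rw [sub_nonneg]
      apply min_le_min le_rfl
      have := hanti j
      have := hanti2 j
      linarith
  rw [Finset.sum_filter]
  calc _ ≤ ∑ j ∈ Finset.range N, (h j - h (j + 1)) := Finset.sum_le_sum fun j _ => hstep j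
    _ = h 0 - h N := Finset.sum_range_sub' h N
    _ ≤ h 0 := by
      have : 0 ≤ h N := by simp only [hh]; positivity
      linarith
    _ ≤ _ := min_le_left _ _

noncomputable def ZR (x : ℝ) : ℝ := ∑' n : ℕ, 1 / ((n : ℝ) + 1) ^ x

lemma ZR_summable (x : ℝ) (hx : 1 < x) : Summable (fun n : ℕ => 1 / ((n : ℝ) + 1) ^ x) := by
  have := (summable_nat_add_iff 1).2 (Real.summable_one_div_nat_rpow.2 hx)
  simpa using this

lemma zeta_ofReal (x : ℝ) (hx : 1 < x) : riemannZeta (x : ℂ) = (ZR x : ℂ) := by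
  rw [zeta_eq_tsum_one_div_nat_add_one_cpow (by simpa using hx), ZR, Complex.ofReal_tsum]
  congr 1
  ext n
  rw [Complex.ofReal_div, Complex.ofReal_cpow (by positivity)]
  push_cast
  rfl

lemma ZR_ge (x : ℝ) (hx : 1 < x) : 1 ≤ ZR x := by
  have := (ZR_summable x hx).le_tsum 0 (fun j _ => by positivity)
  simpa [ZR] using this

lemma ZR_le (x : ℝ) (hx : 7/4 ≤ x) : ZR x ≤ 8 / 3 := by
  apply Real.tsum_le_of_sum_range_le (fun n => by positivity)
  intro N
  set h : ℕ → ℝ := fun j => 8 / 3 * ((j : ℝ) + 1) ^ (-(3/4) : ℝ) with hh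
  calc _ ≤ ∑ j ∈ Finset.range N, (h j - h (j + 1)) := by
        apply Finset.sum_le_sum
        intro j _
        have h1 : (1 : ℝ) ≤ (j : ℝ) + 1 := by linarith [Nat.cast_nonneg (α := ℝ) j]
        have := tele _ h1
        have h2 : 1 / ((j : ℝ) + 1) ^ x ≤ ((j : ℝ) + 1) ^ (-(7/4) : ℝ) := by
          rw [one_div, ← Real.rpow_neg (by positivity)]
          exact Real.rpow_le_rpow_of_exponent_le h1 (by linarith)
        simp only [hh]
        push_cast
        linarith
    _ = h 0 - h N := Finset.sum_range_sub' h N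
    _ ≤ h 0 := by
      have : 0 ≤ h N := by simp only [hh]; positivity
      linarith
    _ = _ := by simp [hh]

lemma euler_ineq (s : ℂ) (σ : ℝ) (hs : s.re = σ) (hσ : 1 < σ) :
    ZR (2 * σ) ≤ ‖riemannZeta s‖ * ZR σ := by
  have t1 := (riemannZeta_eulerProduct (s := s) (by rw [hs]; exact hσ)).norm
  have t2 := (riemannZeta_eulerProduct (s := (σ : ℂ)) (by simpa using hσ)).norm
  have t3 := (riemannZeta_eulerProduct (s := ((2 * σ : ℝ) : ℂ))
    (by rw [Complex.ofReal_re]; linarith)).norm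
  rw [zeta_ofReal _ hσ, Complex.norm_real, Real.norm_of_nonneg (by linarith [ZR_ge _ hσ])] at t2
  rw [zeta_ofReal _ (by linarith), Complex.norm_real,
    Real.norm_of_nonneg (by linarith [ZR_ge (2 * σ) (by linarith)])] at t3
  refine le_of_tendsto_of_tendsto' t3 (t1.mul t2) ?_
  intro n
  rw [← norm_mul, ← Finset.prod_mul_distrib, norm_prod, norm_prod]
  apply Finset.prod_le_prod (fun _ _ => norm_nonneg _)
  intro p hp
  have hpp := Nat.prime_of_mem_primesBelow hp
  have hp1 : (1 : ℝ) < p := by exact_mod_cast hpp.one_lt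
  have hp0 : (0 : ℝ) < p := by linarith
  set q : ℝ := (p : ℝ) ^ (-σ) with hq
  have hq0 : 0 < q := by positivity
  have hq1 : q < 1 := Real.rpow_lt_one_of_one_lt_of_neg hp1 (by linarith)
  have e2 : (p : ℂ) ^ (-(σ : ℂ)) = (q : ℂ) := by
    rw [hq, Complex.ofReal_cpow hp0.le]; simp
  have e3 : (p : ℂ) ^ (-((2 * σ : ℝ) : ℂ)) = ((q ^ 2 : ℝ) : ℂ) := by
    rw [hq, ← Real.rpow_natCast, ← Real.rpow_mul hp0.le, Complex.ofReal_cpow hp0.le]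
    congr 1
    push_cast; ring
  have n1 : ‖1 - (p : ℂ) ^ (-s)‖ ≤ 1 + q := by
    refine (norm_sub_le _ _).trans ?_
    rw [norm_one, Complex.norm_natCast_cpow_of_pos hpp.pos]
    simp [hq, hs]
  have n0 : 0 < ‖1 - (p : ℂ) ^ (-s)‖ := by
    have : ‖(p : ℂ) ^ (-s)‖ < 1 := by
      rw [Complex.norm_natCast_cpow_of_pos hpp.pos]
      simpa [hq, hs] using hq1
    have h := norm_sub_norm_le (1 : ℂ) ((p : ℂ) ^ (-s))
    rw [norm_one] at h
    linarith
  rw [e2, e3, norm_mul, norm_inv, norm_inv, norm_inv]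
  have r1 : ‖(1 : ℂ) - ((q ^ 2 : ℝ) : ℂ)‖ = (1 - q) * (1 + q) := by
    rw [← Complex.ofReal_one, ← Complex.ofReal_sub, Complex.norm_real,
      Real.norm_of_nonneg (by nlinarith)]; ring
  have r2 : ‖(1 : ℂ) - (q : ℂ)‖ = (1 - q) := by
    rw [← Complex.ofReal_one, ← Complex.ofReal_sub, Complex.norm_real,
      Real.norm_of_nonneg (by linarith)]
  rw [r1, r2, ← mul_inv, mul_comm (1 - q)]
  apply inv_anti₀ (mul_pos n0 (by linarith))
  exact mul_le_mul_of_nonneg_right n1 (by linarith)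

lemma odd_tendsto (s : ℂ) (hs : 1 < s.re) :
    Filter.Tendsto (fun N : ℕ => ∑ j ∈ Finset.range N, ((2 * j + 1 : ℕ) : ℂ) ^ (-s))
      Filter.atTop (nhds ((1 - (2 : ℂ) ^ (-s)) * riemannZeta s)) := by
  have hs0 : s ≠ 0 := Complex.ne_zero_of_one_lt_re hs
  have hsum : Summable (fun n : ℕ => 1 / (n : ℂ) ^ s) := Complex.summable_one_div_nat_cpow.2 hs
  have hz := zeta_eq_tsum_one_div_nat_cpow hs
  have ho : Summable (fun j : ℕ => 1 / ((2 * j + 1 : ℕ) : ℂ) ^ s) := by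
    exact hsum.comp_injective (i := fun j => 2 * j + 1) (fun a b h => by simpa using h)
  have he : ∀ j : ℕ, 1 / ((2 * j : ℕ) : ℂ) ^ s = (2 : ℂ) ^ (-s) * (1 / (j : ℂ) ^ s) := by
    intro j
    rw [Nat.cast_mul, Complex.natCast_mul_natCast_cpow, Complex.cpow_neg]
    push_cast
    rw [one_div, mul_inv, one_div]
  have hes : Summable (fun j : ℕ => 1 / ((2 * j : ℕ) : ℂ) ^ s) := by
    simp_rw [he]; exact hsum.mul_left _
  have hsplit := tsum_even_add_odd (f := fun n : ℕ => 1 / (n : ℂ) ^ s) hes ho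
  simp_rw [he] at hsplit
  rw [tsum_mul_left, ← hz] at hsplit
  have : ∑' j : ℕ, 1 / ((2 * j + 1 : ℕ) : ℂ) ^ s = (1 - (2 : ℂ) ^ (-s)) * riemannZeta s := by
    linear_combination hsplit
  rw [← this]
  have t := ho.hasSum.tendsto_sum_nat
  simpa [Complex.cpow_neg] using t

lemma eps_tendsto (z : ℂ) (hz : ‖z‖ < 1) :
    Filter.Tendsto (fun N : ℕ => ∑ a ∈ Finset.range N, epsA a * z ^ a)
      Filter.atTop (nhds (-2 + (1 - z)⁻¹)) := by
  have t : Filter.Tendsto (fun N : ℕ => -2 + ∑ a ∈ Finset.range N, z ^ a) Filter.atTop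
      (nhds (-2 + (1 - z)⁻¹)) :=
    (hasSum_geometric_of_norm_lt_one hz).tendsto_sum_nat.const_add (-2)
  refine t.congr' ?_
  filter_upwards [Filter.eventually_ge_atTop 1] with N hN
  obtain ⟨M, rfl⟩ := Nat.exists_eq_add_of_le' hN
  rw [Finset.sum_range_succ', Finset.sum_range_succ']
  simp [epsA]
  ring

lemma trig_bound (δ : ℝ) (hδ1 : -Real.pi < δ) (hδ2 : δ ≤ Real.pi)
    (hδ4 : Real.pi / 100 < |δ|) : Real.cos δ ≤ 0.99951 := by
  have hp := Real.pi_gt_d2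
  have hc : Real.cos δ ≤ Real.cos 0.0314 := by
    rw [← Real.cos_abs δ]
    apply Real.cos_le_cos_of_nonneg_of_le_pi (by norm_num)
    · exact abs_le.2 ⟨hδ1.le, hδ2⟩
    · norm_num at hp ⊢; linarith
  have hb := Real.cos_bound (x := 0.0314) (by norm_num [abs_of_pos])
  have := (abs_le.1 hb).2
  rw [abs_of_pos (by norm_num)] at this
  norm_num at this hc ⊢
  linarith

lemma D_alg (r c : ℝ) (h1 : 1/2 ≤ r) (h2 : r ≤ 0.6) (hc1 : -1 ≤ c) (hc2 : c ≤ 0.99951) :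
    0.045 ^ 2 ≤ (4 * r ^ 2 - 4 * r * c + 1) * (1 + 2 * r * c + r ^ 2) := by
  rcases le_total 0 c with hc | hc
  · have a1 : 2 - 2 * c ≤ 4 * r ^ 2 - 4 * r * c + 1 := by
      nlinarith [mul_nonneg (by linarith : 0 ≤ 2 * r - 1) (by linarith : 0 ≤ 2 * r + 1 - 2 * c)]
    have a2 : 5 / 4 + c ≤ 1 + 2 * r * c + r ^ 2 := by
      nlinarith [mul_nonneg (by linarith : 0 ≤ 2 * r - 1) hc]
    calc (0.045 : ℝ) ^ 2 ≤ (2 - 2 * c) * (5 / 4 + c) := by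
          norm_num at hc2 ⊢
          nlinarith [mul_nonneg hc (by linarith : 0 ≤ 99951/100000 - c)]
      _ ≤ _ := mul_le_mul a1 a2 (by linarith) (by norm_num at hc2; linarith)
  · have a1 : 2 ≤ 4 * r ^ 2 - 4 * r * c + 1 := by nlinarith
    have a2 : 0.1 ≤ 1 + 2 * r * c + r ^ 2 := by
      norm_num at h2 ⊢
      nlinarith [mul_nonneg (by linarith : 0 ≤ r) (by linarith : 0 ≤ 1 + c)]
    calc (0.045 : ℝ) ^ 2 ≤ 2 * 0.1 := by norm_num
      _ ≤ _ := mul_le_mul a1 a2 (by norm_num) (by linarith)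

lemma r_le : (2 : ℝ) ^ (-(7/8) : ℝ) ≤ 0.6 := by
  have h : ((2 : ℝ) ^ (-(7/8) : ℝ)) ^ 8 ≤ 0.6 ^ 8 := by
    rw [← Real.rpow_natCast, ← Real.rpow_mul (by norm_num)]
    norm_num
  exact le_of_pow_le_pow_left₀ (by norm_num) (by norm_num) h

lemma D_bound (β γ : ℝ) (ρ : ℂ) (hρ : ρ = β + γ * I)
    (hβ : 7 / 8 < β) (hβ1 : β ≤ 1)
    (δ : ℝ) (hδ1 : -Real.pi < δ) (hδ2 : δ ≤ Real.pi)
    (hδ3 : ∃ n : ℤ, γ * Real.log 2 = 2 * Real.pi * n + δ)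
    (hδ4 : Real.pi / 100 < |δ|) :
    0.045 ≤ ‖2 * (2 : ℂ) ^ (-ρ) - 1‖ * ‖1 + (2 : ℂ) ^ (-ρ)‖ := by
  obtain ⟨n, hn⟩ := hδ3
  set r : ℝ := (2 : ℝ) ^ (-β) with hr
  have hz : (2 : ℂ) ^ (-ρ) = (r : ℂ) * (Real.cos δ - Real.sin δ * I) := by
    have e1 : (2 : ℂ) ^ (-(β : ℂ)) = (r : ℂ) := by
      rw [hr, Complex.ofReal_cpow (by norm_num)]; simp
    have e2 : (2 : ℂ) ^ (-((γ : ℂ) * I)) = Real.cos δ - Real.sin δ * I := by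
      rw [Complex.cpow_def_of_ne_zero (by norm_num)]
      have hl : Complex.log 2 = (Real.log 2 : ℂ) := by
        rw [Complex.ofReal_log (by norm_num)]; simp
      have : Complex.log 2 * (-((γ : ℂ) * I)) = ((-(γ * Real.log 2) : ℝ) : ℂ) * I := by
        rw [hl]; push_cast; ring
      rw [this, Complex.exp_mul_I, ← Complex.ofReal_cos, ← Complex.ofReal_sin, Real.cos_neg,
        Real.sin_neg, hn]
      have h3 : 2 * Real.pi * n + δ = δ + n * (2 * Real.pi) := by ring
      rw [h3, Real.cos_add_int_mul_two_pi, Real.sin_add_int_mul_two_pi]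
      push_cast; ring
    rw [hρ, neg_add, Complex.cpow_add _ _ (by norm_num), e1, e2]
  have hr1 : 1/2 ≤ r := by
    have : (2 : ℝ) ^ (-1 : ℝ) ≤ r := Real.rpow_le_rpow_of_exponent_le (by norm_num) (by linarith)
    rw [Real.rpow_neg_one] at this
    linarith
  have hr2 : r ≤ 0.6 :=
    (Real.rpow_le_rpow_of_exponent_le (by norm_num) (by linarith)).trans r_le
  have hsc := Real.sin_sq_add_cos_sq δ
  have n1 : ‖2 * (2 : ℂ) ^ (-ρ) - 1‖ ^ 2 = 4 * r ^ 2 - 4 * r * Real.cos δ + 1 := by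
    rw [hz, Complex.sq_norm, Complex.normSq_apply]
    simp [-Complex.ofReal_cos, -Complex.ofReal_sin]
    linear_combination 4 * r ^ 2 * hsc
  have n2 : ‖1 + (2 : ℂ) ^ (-ρ)‖ ^ 2 = 1 + 2 * r * Real.cos δ + r ^ 2 := by
    rw [hz, Complex.sq_norm, Complex.normSq_apply]
    simp [-Complex.ofReal_cos, -Complex.ofReal_sin]
    linear_combination r ^ 2 * hsc
  apply le_of_pow_le_pow_left₀ (n := 2) (by norm_num) (by positivity)
  rw [mul_pow, n1, n2]
  exact D_alg r _ hr1 hr2 (Real.neg_one_le_cos δ) (trig_bound δ hδ1 hδ2 hδ4)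

lemma N_bound (N : ℕ) (hN : 10 ^ 12 ≤ N) : (N : ℝ) ^ (-(3/8) : ℝ) ≤ 1 / 10000 := by
  have hN' : ((10 : ℝ) ^ (12 : ℝ)) ≤ N := by
    have : ((10 ^ 12 : ℕ) : ℝ) ≤ N := by exact_mod_cast hN
    norm_num at this ⊢
    exact this
  calc (N : ℝ) ^ (-(3/8) : ℝ) ≤ ((10 : ℝ) ^ (12 : ℝ)) ^ (-(3/8) : ℝ) :=
        Real.rpow_le_rpow_of_nonpos (by positivity) hN' (by norm_num)
    _ = (10 : ℝ) ^ (-(9/2) : ℝ) := by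
        rw [← Real.rpow_mul (by norm_num)]; norm_num
    _ ≤ (10 : ℝ) ^ (-(4 : ℝ)) := Real.rpow_le_rpow_of_exponent_le (by norm_num) (by norm_num)
    _ = _ := by
        rw [show (-4 : ℝ) = ((-4 : ℤ) : ℝ) by norm_num, Real.rpow_intCast]; norm_num

lemma tail_bound (z : ℂ) (b : ℕ → ℂ) (N M : ℕ) (hN : 10 ^ 12 ≤ N)
    (hz : ‖z‖ ≤ (2 : ℝ) ^ (-(7/8) : ℝ))
    (hb : ∀ j, ‖b j‖ ≤ ((2 * j + 1 : ℕ) : ℝ) ^ (-(7/4) : ℝ)) :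
    ‖(∑ a ∈ Finset.range M, epsA a * z ^ a) * (∑ j ∈ Finset.range M, b j) -
      ∑ x ∈ (Finset.range M ×ˢ Finset.range M).filter
        (fun x => 2 ^ x.1 * (2 * x.2 + 1) ^ 2 ≤ N), (epsA x.1 * z ^ x.1) * b x.2‖ ≤ 0.001 := by
  have hN0 : (0 : ℝ) < N := by
    have : 0 < N := by omega
    exact_mod_cast this
  set q : ℝ := (2 : ℝ) ^ (-(1/2) : ℝ) with hq
  have hq0 : 0 < q := by positivity
  have hq1 : q ≤ 0.71 := by
    have h : q ^ 2 ≤ 0.71 ^ 2 := by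
      rw [hq, ← Real.rpow_natCast, ← Real.rpow_mul (by norm_num)]
      norm_num
    exact le_of_pow_le_pow_left₀ (by norm_num) (by norm_num) h
  rw [Finset.sum_mul_sum, ← Finset.sum_product', ← Finset.sum_filter_add_sum_filter_not
    (Finset.range M ×ˢ Finset.range M) (fun x => 2 ^ x.1 * (2 * x.2 + 1) ^ 2 ≤ N),
    add_sub_cancel_left]
  have heps : ∀ a, ‖epsA a‖ = 1 := by
    intro a; unfold epsA; split_ifs <;> simp
  refine (norm_sum_le _ _).trans ?_
  rw [Finset.sum_filter, Finset.sum_product]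
  have inner : ∀ a ∈ Finset.range M, (∑ j ∈ Finset.range M,
      if ¬ (2 ^ a * (2 * j + 1) ^ 2 ≤ N) then ‖epsA a * z ^ a * b j‖ else 0)
      ≤ 8 / 3 * (1 / 10000) * q ^ a := by
    intro a _
    have h2a : (0 : ℝ) < 2 ^ a := by positivity
    calc _ ≤ ∑ j ∈ Finset.range M, (if (N : ℝ) / 2 ^ a < ((2 * j + 1 : ℕ) : ℝ) ^ 2 then
          ((2 : ℝ) ^ (-(7/8) : ℝ)) ^ a * ((2 * j + 1 : ℕ) : ℝ) ^ (-(7/4) : ℝ) else 0) := by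
          apply Finset.sum_le_sum
          intro j _
          have hiff : (¬ (2 ^ a * (2 * j + 1) ^ 2 ≤ N)) ↔
              (N : ℝ) / 2 ^ a < ((2 * j + 1 : ℕ) : ℝ) ^ 2 := by
            rw [div_lt_iff₀ h2a, not_le, mul_comm]
            exact_mod_cast Iff.rfl
          simp only [hiff]
          split_ifs
          · rw [norm_mul, norm_mul, heps, one_mul, norm_pow]
            exact mul_le_mul (pow_le_pow_left₀ (norm_nonneg _) hz a) (hb j) (norm_nonneg _)
              (by positivity)
          · exact le_rfl
      _ = ((2 : ℝ) ^ (-(7/8) : ℝ)) ^ a * ∑ j ∈ (Finset.range M).filter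
          (fun j : ℕ => (N : ℝ) / 2 ^ a < ((2 * j + 1 : ℕ) : ℝ) ^ 2),
          ((2 * j + 1 : ℕ) : ℝ) ^ (-(7/4) : ℝ) := by
          rw [Finset.mul_sum, Finset.sum_filter]
      _ ≤ ((2 : ℝ) ^ (-(7/8) : ℝ)) ^ a * (8 / 3 * ((N : ℝ) / 2 ^ a) ^ (-(3/8) : ℝ)) :=
          mul_le_mul_of_nonneg_left (tailT _ (by positivity) M) (by positivity)
      _ = 8 / 3 * (N : ℝ) ^ (-(3/8) : ℝ) * q ^ a := by
          have : ((N : ℝ) / 2 ^ a) ^ (-(3/8) : ℝ)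
              = (N : ℝ) ^ (-(3/8) : ℝ) * ((2 : ℝ) ^ (3/8 : ℝ)) ^ a := by
            rw [Real.div_rpow hN0.le h2a.le, div_eq_mul_inv, ← Real.rpow_neg h2a.le, neg_neg,
              ← Real.rpow_natCast, ← Real.rpow_natCast, ← Real.rpow_mul (by norm_num),
              ← Real.rpow_mul (by norm_num), mul_comm (a : ℝ)]
          have hq' : q = (2 : ℝ) ^ (-(7/8) : ℝ) * (2 : ℝ) ^ (3/8 : ℝ) := by
            rw [hq, ← Real.rpow_add (by norm_num)]; norm_num
          rw [this, hq', mul_pow]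
          ring
      _ ≤ _ := by
          have := N_bound N hN
          gcongr
  refine (Finset.sum_le_sum inner).trans ?_
  rw [← Finset.mul_sum]
  have hg : ∑ a ∈ Finset.range M, q ^ a ≤ (1 - q)⁻¹ := by
    rw [← tsum_geometric_of_lt_one hq0.le (by norm_num at hq1; linarith)]
    exact (summable_geometric_of_lt_one hq0.le (by norm_num at hq1; linarith)).sum_le_tsum _
      (fun _ _ => by positivity)
  have hg2 : (1 - q)⁻¹ ≤ 3.5 := by
    rw [inv_le_comm₀ (by norm_num at hq1; linarith) (by norm_num)]
    norm_num at hq1 ⊢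
    linarith
  norm_num at hg2 ⊢
  linarith

/-- Lemma 1: for `ρ = β + iγ` with `7/8 < β ≤ 1` and `γ log 2` staying away from
multiples of `2π`, and any `U ≥ 10`,
`(1/25) ζ(4β)/ζ(2β) - U^{6-12β} ≤ |Σ_{n ≤ U^{12}} (-1)^n (1*λ_odd)(n) / n^ρ|`. -/
theorem stmt7 (β γ : ℝ) (ρ : ℂ) (hρ : ρ = β + γ * I)
    (hβ : 7 / 8 < β) (hβ1 : β ≤ 1)
    (δ : ℝ) (hδ1 : -Real.pi < δ) (hδ2 : δ ≤ Real.pi)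
    (hδ3 : ∃ n : ℤ, γ * Real.log 2 = 2 * Real.pi * n + δ)
    (hδ4 : Real.pi / 100 < |δ|)
    (U : ℝ) (hU : 10 ≤ U) :
    1 / 25 * (riemannZeta ((4 * β : ℝ) : ℂ)).re / (riemannZeta ((2 * β : ℝ) : ℂ)).re -
        U ^ (6 - 12 * β) ≤
      ‖∑ n ∈ Finset.Icc 1 ⌊U ^ (12 : ℕ)⌋₊,
          ((-1 : ℂ) ^ n * ((∑ d ∈ n.divisors, lambdaOdd d : ℤ) : ℂ)) / (n : ℂ) ^ ρ‖ := by
  set N := ⌊U ^ (12 : ℕ)⌋₊ with hNdef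
  have hN : 10 ^ 12 ≤ N := by
    apply Nat.le_floor
    have h := pow_le_pow_left₀ (by norm_num) hU 12
    norm_num at h ⊢
    exact h
  set z : ℂ := (2 : ℂ) ^ (-ρ) with hzdef
  have hre : ρ.re = β := by rw [hρ]; simp
  have hre2 : (2 * ρ).re = 2 * β := by simp [hre]
  have hz : ‖z‖ ≤ (2 : ℝ) ^ (-(7/8) : ℝ) := by
    have : ‖z‖ = (2 : ℝ) ^ (-β) := by
      have h := Complex.norm_natCast_cpow_of_pos (n := 2) (by norm_num) (-ρ)
      rw [Complex.neg_re, hre] at h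
      exact_mod_cast h
    rw [this]
    exact Real.rpow_le_rpow_of_exponent_le (by norm_num) (by linarith)
  have hz1 : ‖z‖ < 1 := lt_of_le_of_lt (hz.trans r_le) (by norm_num)
  have hb : ∀ j : ℕ, ‖((2 * j + 1 : ℕ) : ℂ) ^ (-(2 * ρ))‖ ≤
      ((2 * j + 1 : ℕ) : ℝ) ^ (-(7/4) : ℝ) := by
    intro j
    rw [Complex.norm_natCast_cpow_of_pos (by omega), Complex.neg_re, hre2]
    apply Real.rpow_le_rpow_of_exponent_le
    · exact_mod_cast Nat.le_add_left _ _
    · linarith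
  set S := ∑ n ∈ Finset.Icc 1 N,
          ((-1 : ℂ) ^ n * ((∑ d ∈ n.divisors, lambdaOdd d : ℤ) : ℂ)) / (n : ℂ) ^ ρ with hS
  have hlim := ((eps_tendsto z hz1).mul
    (odd_tendsto (2 * ρ) (by rw [hre2]; linarith))).sub_const S |>.norm
  have hmain : ‖(-2 + (1 - z)⁻¹) * ((1 - (2 : ℂ) ^ (-(2 * ρ))) * riemannZeta (2 * ρ)) - S‖
      ≤ 0.001 := by
    refine le_of_tendsto hlim ?_
    filter_upwards [Filter.eventually_gt_atTop N] with M hM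
    rw [hS, sum_rewrite ρ N M hM]
    exact tail_bound z _ N M hN hz hb
  have hzz : (2 : ℂ) ^ (-(2 * ρ)) = z ^ 2 := by
    rw [hzdef, ← Complex.cpow_nat_mul]
    congr 1
    push_cast; ring
  have h1z : 1 - z ≠ 0 := by
    intro h
    have : z = 1 := by linear_combination -h
    rw [this, norm_one] at hz1
    exact lt_irrefl _ hz1
  have htot : (-2 + (1 - z)⁻¹) * ((1 - (2 : ℂ) ^ (-(2 * ρ))) * riemannZeta (2 * ρ))
      = (2 * z - 1) * (1 + z) * riemannZeta (2 * ρ) := by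
    rw [hzz]
    field_simp
    ring
  rw [htot] at hmain
  have hD := D_bound β γ ρ hρ hβ hβ1 δ hδ1 hδ2 hδ3 hδ4
  rw [← hzdef] at hD
  have hE := euler_ineq (2 * ρ) (2 * β) hre2 (by linarith)
  rw [show 2 * (2 * β) = 4 * β by ring] at hE
  have hZ4 := ZR_ge (4 * β) (by linarith)
  have hZ2 := ZR_ge (2 * β) (by linarith)
  have hZ2' := ZR_le (2 * β) (by linarith)
  rw [zeta_ofReal _ (by linarith : 1 < 4 * β), zeta_ofReal _ (by linarith : 1 < 2 * β),
    Complex.ofReal_re, Complex.ofReal_re, mul_div_assoc]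
  set Q := ZR (4 * β) / ZR (2 * β) with hQ
  have hQ1 : Q ≤ ‖riemannZeta (2 * ρ)‖ := by
    rw [hQ, div_le_iff₀ (by linarith)]; exact hE
  have hQ2 : 3 / 8 ≤ Q := by
    rw [hQ, le_div_iff₀ (by linarith)]; linarith
  have hU' : 0 < U ^ (6 - 12 * β) := Real.rpow_pos_of_pos (by linarith) _
  have hn : 0.045 * Q ≤ ‖(2 * z - 1) * (1 + z) * riemannZeta (2 * ρ)‖ := by
    rw [norm_mul, norm_mul]
    exact mul_le_mul hD hQ1 (by linarith) (by positivity)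
  have htri := norm_sub_norm_le ((2 * z - 1) * (1 + z) * riemannZeta (2 * ρ)) S
  rw [norm_mul, norm_mul] at hn htri
  norm_num [-norm_mul] at hmain hn
  linarith
end

section
/- For every complex number s with Re(s) > 1/2, the series Σ_{n=1}^∞ (−1)^n (1*λ_odd)(n)/n^s converges and equals (1 + 2^{−s})(2^{1−s} − 1) ζ(2s). -/
open Complex

namespace Aux8

/-- `lambdaOdd` as an arithmetic function. -/
def lo : ArithmeticFunction ℤ := ⟨lambdaOdd, by simp [lambdaOdd]⟩

lemma lo_apply (n : ℕ) : lo n = lambdaOdd n := rfl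

lemma lo_mult : lo.IsMultiplicative := by
  rw [ArithmeticFunction.IsMultiplicative.iff_ne_zero]
  refine ⟨by simp [lo_apply, lambdaOdd, liouville], ?_⟩
  intro m n hm hn _
  simp only [lo_apply, lambdaOdd, liouville, Nat.odd_mul,
    ArithmeticFunction.cardFactors_mul hm hn, pow_add]
  by_cases h1 : Odd m <;> by_cases h2 : Odd n <;> simp [h1, h2]

/-- the divisor sum -/
def S (n : ℕ) : ℤ := ∑ d ∈ n.divisors, lambdaOdd d

lemma S_eq (n : ℕ) : S n = ((ArithmeticFunction.zeta : ArithmeticFunction ℤ) * lo) n := by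
  rw [ArithmeticFunction.coe_zeta_mul_apply]; rfl

lemma S_prod {n : ℕ} (hn : n ≠ 0) : S n = n.factorization.prod fun p k => S (p ^ k) := by
  simp only [S_eq]
  exact ArithmeticFunction.IsMultiplicative.multiplicative_factorization _
    (ArithmeticFunction.isMultiplicative_zeta.natCast.mul lo_mult) hn

lemma S_two (k : ℕ) : S (2 ^ k) = 1 := by
  rw [S, Nat.sum_divisors_prime_pow Nat.prime_two, Finset.sum_eq_single 0]
  · simp [lambdaOdd, liouville]
  · intro b _ hb
    have : ¬ Odd (2 ^ b) := by
      rw [Nat.odd_pow_iff hb]; decide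
    simp [lambdaOdd, this]
  · simp

lemma S_odd {p : ℕ} (hp : p.Prime) (h2 : p ≠ 2) (k : ℕ) :
    S (p ^ k) = if Even k then 1 else 0 := by
  rw [S, Nat.sum_divisors_prime_pow hp]
  have : ∀ i, lambdaOdd (p ^ i) = (-1) ^ i := by
    intro i
    have ho : Odd (p ^ i) := (hp.odd_of_ne_two h2).pow
    simp [lambdaOdd, ho, liouville, ArithmeticFunction.cardFactors_apply_prime_pow hp]
  simp only [this]
  rw [Finset.sum_range, ← Finset.sum_range (fun i => (-1 : ℤ) ^ i), neg_one_geom_sum]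
  by_cases h : Even k <;> simp [h, Nat.even_add_one]

lemma S_one_of {n : ℕ} (hn : n ≠ 0) (h : ∀ p, p.Prime → p ≠ 2 → Even (n.factorization p)) :
    S n = 1 := by
  rw [S_prod hn]
  apply Finset.prod_eq_one
  intro p hp
  have hpp : p.Prime := Nat.prime_of_mem_primeFactors hp
  by_cases h2 : p = 2
  · subst h2; exact S_two _
  · simp only [S_odd hpp h2]
    rw [if_pos (h p hpp h2)]

lemma S_zero_of {n : ℕ} (hn : n ≠ 0) {p : ℕ} (hp : p.Prime) (h2 : p ≠ 2)
    (h : ¬ Even (n.factorization p)) : S n = 0 := by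
  rw [S_prod hn]
  apply Finset.prod_eq_zero (i := p)
  · rw [Finsupp.mem_support_iff]
    intro h0
    rw [h0] at h
    exact h (by simp)
  · simp only [S_odd hp h2]
    rw [if_neg h]

lemma S_sq {m : ℕ} (hm : m ≠ 0) : S (m ^ 2) = 1 := by
  apply S_one_of (by positivity)
  intro p _ _
  simp [Nat.factorization_pow]

lemma S_two_sq {m : ℕ} (hm : m ≠ 0) : S (2 * m ^ 2) = 1 := by
  apply S_one_of (by positivity)
  intro p _ h2
  rw [Nat.factorization_mul (by norm_num) (by positivity)]
  simp [Nat.factorization_pow, Nat.prime_two.factorization, Ne.symm h2]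

lemma S_other {n : ℕ} (hn : n ≠ 0) (h1 : ∀ m, m ^ 2 ≠ n) (h2 : ∀ m, 2 * m ^ 2 ≠ n) :
    S n = 0 := by
  obtain ⟨a, b, hab, hsq⟩ := Nat.sq_mul_squarefree n
  have ha0 : a ≠ 0 := hsq.ne_zero
  have hb0 : b ≠ 0 := by rintro rfl; simp at hab; exact hn hab.symm
  by_cases hp : ∃ p, p.Prime ∧ p ≠ 2 ∧ p ∣ a
  · obtain ⟨p, hp, hp2, hpa⟩ := hp
    apply S_zero_of hn hp hp2
    have h1 : a.factorization p = 1 := by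
      have := hsq.natFactorization_le_one p
      have := hp.factorization_pos_of_dvd ha0 hpa
      omega
    rw [← hab, Nat.factorization_mul (by positivity) ha0]
    simp [Nat.factorization_pow, h1, Nat.even_add_one]
  · exfalso
    push Not at hp
    have h := Nat.eq_prime_pow_of_unique_prime_dvd (p := 2) ha0
      (fun {d} hd hda => by by_contra h; exact hp d hd h hda)
    set k := a.primeFactorsList.length
    have hk : k ≤ 1 := by
      by_contra hk
      have : 2 * 2 ∣ a := by
        rw [h]; exact pow_dvd_pow 2 (show 2 ≤ k by omega)
      have := hsq 2 this
      simp at this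
    interval_cases k
    · apply h1 b; rw [← hab, h]; simp
    · apply h2 b; rw [← hab, h]; ring

lemma ne_two_sq {a b : ℕ} (ha : a ≠ 0) : a ^ 2 ≠ 2 * b ^ 2 := by
  intro h
  have hb : b ≠ 0 := by rintro rfl; simp at h; exact ha h
  have := congrArg (fun n => n.factorization 2) h
  simp only [Nat.factorization_mul (two_ne_zero) (pow_ne_zero 2 hb), Nat.factorization_pow] at this
  simp [Nat.prime_two.factorization] at this
  omega

lemma inj2 : Function.Injective (fun m : ℕ => 2 * m) := fun a b h => by simpa using h
lemma injsq : Function.Injective (fun m : ℕ => m ^ 2) := fun a b h => by simpa using h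
lemma inj2sq : Function.Injective (fun m : ℕ => 2 * m ^ 2) := fun a b h => by simpa using h

lemma two_mul_cpow (m : ℕ) (w : ℂ) :
    1 / ((2 * m : ℕ) : ℂ) ^ w = (2 : ℂ) ^ (-w) * (1 / (m : ℂ) ^ w) := by
  rw [Nat.cast_mul, natCast_mul_natCast_cpow, cpow_neg]
  push_cast
  field_simp

lemma hz {w : ℂ} (hw : 1 < w.re) : HasSum (fun n : ℕ => 1 / (n : ℂ) ^ w) (riemannZeta w) := by
  rw [zeta_eq_tsum_one_div_nat_cpow hw]
  exact (summable_one_div_nat_cpow.2 hw).hasSum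

lemma halt {w : ℂ} (hw : 1 < w.re) : HasSum (fun n : ℕ => (-1 : ℂ) ^ n * (1 / (n : ℂ) ^ w))
    ((2 * (2 : ℂ) ^ (-w) - 1) * riemannZeta w) := by
  have h1 := hz hw
  have h2 := (hasSum_extend_zero inj2).2 (h1.mul_left ((2 : ℂ) ^ (-w)))
  have h3 := (h2.mul_left 2).sub h1
  convert h3 using 1
  · rfl
  · funext n
    rcases Nat.even_or_odd' n with ⟨m, rfl | rfl⟩
    · rw [inj2.extend_apply (fun i : ℕ => (2 : ℂ) ^ (-w) * (1 / (i : ℂ) ^ w)) 0 m, two_mul_cpow,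
        pow_mul]
      simp; ring
    · rw [Function.extend_apply' _ _ _ (by rintro ⟨a, ha⟩; omega)]
      simp [pow_succ, pow_mul]
  · ring

lemma sq_cpow (m : ℕ) (s : ℂ) : ((m ^ 2 : ℕ) : ℂ) ^ s = (m : ℂ) ^ (2 * s) := by
  have := natCast_cpow_natCast_mul m 2 s
  push_cast at this ⊢
  exact this.symm

end Aux8

open Aux8 in
/-- For `Re(s) > 1/2`, the series `Σ_{n≥1} (-1)^n (1*λ_odd)(n)/n^s` converges, with sum
`(1 + 2^{-s})(2^{1-s} - 1) ζ(2s)`. -/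
theorem stmt8 (s : ℂ) (hs : 1 / 2 < s.re) :
    HasSum (fun n : ℕ => ((-1 : ℂ) ^ n * ((∑ d ∈ n.divisors, lambdaOdd d : ℤ) : ℂ)) / (n : ℂ) ^ s)
      ((1 + (2 : ℂ) ^ (-s)) * ((2 : ℂ) ^ (1 - s) - 1) * riemannZeta (2 * s)) := by
  have hw : 1 < (2 * s).re := by simp; linarith
  have hs0 : 2 * s ≠ 0 := by
    intro h; rw [h] at hw; simp at hw; linarith
  have h1 := (hasSum_extend_zero injsq).2 (halt hw)
  have h2 := (hasSum_extend_zero inj2sq).2 ((hz hw).mul_left ((2 : ℂ) ^ (-s)))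
  convert h1.add h2 using 1
  · funext n
    change ((-1 : ℂ) ^ n * (S n : ℂ)) / (n : ℂ) ^ s = _
    by_cases hn : n = 0
    · subst hn
      have e1 := injsq.extend_apply (fun n : ℕ => (-1 : ℂ) ^ n * (1 / (n : ℂ) ^ (2 * s))) 0 0
      have e2 := inj2sq.extend_apply (fun i : ℕ => (2 : ℂ) ^ (-s) * (1 / (i : ℂ) ^ (2 * s))) 0 0
      simp only [ne_eq, OfNat.ofNat_ne_zero, not_false_eq_true, zero_pow, mul_zero] at e1 e2
      rw [e1, e2]
      simp only [Nat.cast_zero, zero_cpow hs0]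
      simp [S]
    by_cases hq : ∃ m, m ^ 2 = n
    · obtain ⟨m, rfl⟩ := hq
      have hm : m ≠ 0 := by rintro rfl; simp at hn
      rw [injsq.extend_apply (fun n : ℕ => (-1 : ℂ) ^ n * (1 / (n : ℂ) ^ (2 * s))) 0 m,
        Function.extend_apply' _ _ _ (by rintro ⟨a, ha⟩; exact ne_two_sq hm ha.symm),
        S_sq hm, sq_cpow]
      have : (-1 : ℂ) ^ (m ^ 2) = (-1) ^ m := by
        rcases Nat.even_or_odd m with h | h
        · rw [h.neg_one_pow, (h.pow_of_ne_zero two_ne_zero).neg_one_pow]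
        · rw [h.neg_one_pow, h.pow.neg_one_pow]
      rw [this]
      simp [div_eq_mul_inv]
    · rw [Function.extend_apply' (f := fun m : ℕ => m ^ 2) _ _ _ hq]
      by_cases hq2 : ∃ m, 2 * m ^ 2 = n
      · obtain ⟨m, rfl⟩ := hq2
        have hm : m ≠ 0 := by rintro rfl; simp at hn
        rw [inj2sq.extend_apply (fun i : ℕ => (2 : ℂ) ^ (-s) * (1 / (i : ℂ) ^ (2 * s))) 0 m,
          S_two_sq hm, ← sq_cpow, ← two_mul_cpow]
        simp [pow_mul]
      · rw [Function.extend_apply' _ _ _ hq2]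
        push Not at hq hq2
        rw [S_other hn hq hq2]
        simp
  · have e1 : (2 : ℂ) ^ (1 - s) = 2 * (2 : ℂ) ^ (-s) := by
      rw [sub_eq_add_neg, cpow_add _ _ two_ne_zero, cpow_one]
    have e2 : (2 : ℂ) ^ (-(2 * s)) = (2 : ℂ) ^ (-s) * (2 : ℂ) ^ (-s) := by
      rw [← cpow_add _ _ two_ne_zero]; congr 1; ring
    rw [e1, e2]; ring
end

section
/- Let ρ = β + iγ be a complex number with 7/8 < β ≤ 1, and let δ be the unique real number with −π < δ ≤ π such that γ·log 2 = 2πn + δ for some integer n. If |δ| > π/100, then |(1 + 2^{−ρ})(2^{1−ρ} − 1)| > 1/25. -/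
open Complex

/-- For `ρ = β + iγ` with `7/8 < β ≤ 1`, if the distance `δ` of `γ log 2` from the nearest
multiple of `2π` satisfies `|δ| > π/100`, then `|(1 + 2^{-ρ})(2^{1-ρ} - 1)| > 1/25`. -/
theorem stmt10 (β γ : ℝ) (ρ : ℂ) (hρ : ρ = β + γ * I)
    (hβ : 7 / 8 < β) (hβ1 : β ≤ 1)
    (δ : ℝ) (hδ1 : -Real.pi < δ) (hδ2 : δ ≤ Real.pi)
    (hδ3 : ∃ n : ℤ, γ * Real.log 2 = 2 * Real.pi * n + δ)
    (hδ4 : Real.pi / 100 < |δ|) :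
    1 / 25 < ‖(1 + (2 : ℂ) ^ (-ρ)) * ((2 : ℂ) ^ (1 - ρ) - 1)‖ := by
  obtain ⟨n, hn⟩ := hδ3
  obtain ⟨u, hu⟩ : ∃ u : ℝ, u = Real.exp ((1 - β) * Real.log 2) := ⟨_, rfl⟩
  have hlog : 0 < Real.log 2 := Real.log_pos (by norm_num)
  have hu1 : 1 ≤ u := by
    rw [hu]
    exact Real.one_le_exp (mul_nonneg (by linarith) hlog.le)
  have hu2 : u ≤ 1.1 := by
    have h8 : u ^ 8 ≤ 2 := by
      rw [hu, ← Real.exp_nat_mul]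
      calc _ ≤ Real.exp (Real.log 2) := by
            apply Real.exp_le_exp.mpr
            push_cast
            nlinarith
        _ = 2 := Real.exp_log (by norm_num)
    by_contra hcon
    have : (1.1 : ℝ) ^ 8 ≤ u ^ 8 := pow_le_pow_left₀ (by norm_num) (not_le.mp hcon).le 8
    norm_num at this
    linarith
  have hc : Real.cos δ ≤ 1 - 0.00049 := by
    rw [← Real.cos_abs]
    have h1 : (0.0314 : ℝ) ≤ |δ| := by linarith [Real.pi_gt_d2]
    have h2 : |δ| ≤ Real.pi := abs_le.mpr ⟨hδ1.le, hδ2⟩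
    have h3 := Real.cos_le_cos_of_nonneg_of_le_pi (by norm_num) h2 h1
    have h4 := (abs_le.mp (Real.cos_bound (x := 0.0314) (by norm_num [abs_of_pos]))).2
    rw [abs_of_pos (by norm_num)] at h4
    norm_num at h4 h3 ⊢
    linarith
  have hc1 := Real.neg_one_le_cos δ
  have hz : (2 : ℂ) ^ (1 - ρ) = ⟨u * Real.cos δ, -(u * Real.sin δ)⟩ := by
    have e : Complex.log 2 * (1 - ρ) =
        (((1 - β) * Real.log 2 : ℝ) : ℂ) + ((-(δ + n * (2 * Real.pi)) : ℝ) : ℂ) * I := by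
      have : δ + n * (2 * Real.pi) = γ * Real.log 2 := by rw [hn]; ring
      rw [this, hρ]
      have h2 : Complex.log 2 = (Real.log 2 : ℝ) := by
        rw [Complex.ofReal_log (by norm_num)]; norm_num
      rw [h2]
      push_cast
      ring
    rw [Complex.cpow_def_of_ne_zero (by norm_num), e]
    apply Complex.ext
    · rw [Complex.exp_re]
      simp only [add_re, add_im, ofReal_re, ofReal_im, re_ofReal_mul, im_ofReal_mul, I_re, I_im,
        mul_zero, mul_one, add_zero, zero_add, Real.cos_neg, Real.cos_add_int_mul_two_pi, hu]
    · rw [Complex.exp_im]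
      simp only [add_re, add_im, ofReal_re, ofReal_im, re_ofReal_mul, im_ofReal_mul, I_re, I_im,
        mul_zero, mul_one, add_zero, zero_add, Real.sin_neg, Real.sin_add_int_mul_two_pi, hu,
        mul_neg]
  have hz2 : (2 : ℂ) ^ (-ρ) = (2 : ℂ) ^ (1 - ρ) / 2 := by
    rw [show -ρ = (1 - ρ) - 1 by ring, Complex.cpow_sub _ _ (by norm_num), Complex.cpow_one]
  have hsc := Real.sin_sq_add_cos_sq δ
  have hsq : ‖(1 + (2 : ℂ) ^ (-ρ)) * ((2 : ℂ) ^ (1 - ρ) - 1)‖ ^ 2 =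
      (1 + u * Real.cos δ + u ^ 2 / 4) * (1 - 2 * (u * Real.cos δ) + u ^ 2) := by
    rw [Complex.sq_norm, map_mul, hz2, hz, Complex.normSq_apply, Complex.normSq_apply]
    simp only [add_re, add_im, sub_re, sub_im, one_re, one_im, Complex.div_ofNat_re,
      Complex.div_ofNat_im]
    congr 1
    · linear_combination u ^ 2 / 4 * hsc
    · linear_combination u ^ 2 * hsc
  generalize Real.cos δ = c at *
  have key : (1 / 25 : ℝ) ^ 2 < (1 + u * c + u ^ 2 / 4) * (1 - 2 * (u * c) + u ^ 2) := by
    rcases le_total 0.4 c with h | h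
    · have a1 : 1.65 ≤ 1 + u * c + u ^ 2 / 4 := by nlinarith
      have a2 : 0.00098 ≤ 1 - 2 * (u * c) + u ^ 2 := by
        nlinarith [sq_nonneg (u - 1), mul_nonneg (sub_nonneg.2 hu1) (sub_nonneg.2 hc)]
      have := mul_le_mul a1 a2 (by norm_num) (by linarith)
      norm_num at this ⊢
      linarith
    · have a1 : 0.2 ≤ 1 + u * c + u ^ 2 / 4 := by nlinarith
      have a2 : 1 ≤ 1 - 2 * (u * c) + u ^ 2 := by nlinarith
      have := mul_le_mul a1 a2 (by norm_num) (by linarith)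
      norm_num at this ⊢
      linarith
  rw [← hsq] at key
  exact lt_of_pow_lt_pow_left₀ 2 (norm_nonneg _) key
end
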